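/- Let β ∈ {0, 1}, d ≥ 1, and λ ∈ 2^ℤ. Then there is a constant C (independent of λ, t and f) such that for every Schwartz function f on ℝ^d, every t ≠ 0, and either choice of sign, ‖S_{m_β}(±t) P_λ f‖_{L^∞(ℝ^d)} ≤ C · c_{β,d}(λ) · |t|^{-d/2} · ‖f‖_{L^1(ℝ^d)}, where c_{β,d}(λ) = λ^{d/2-1} ⟨√β λ⟩^{-d/2} ⟨λ⟩^{d/4+1}. -/

import Mathlib

noncomputable section

open MeasureTheory Complex Real
open scoped FourierTransform ENNReal

/-- Euclidean space `ℝ^d`. -/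
abbrev Euc (d : ℕ) := EuclideanSpace ℝ (Fin d)

/-- Japanese bracket `⟨x⟩ = (1+|x|²)^{1/2}`. -/
def jap (x : ℝ) : ℝ := Real.sqrt (1 + x ^ 2)

/-- The symbol `m_β(r) = √(r(1+βr²)tanh r)`. -/
def mSymb (β r : ℝ) : ℝ := Real.sqrt (r * (1 + β * r ^ 2) * Real.tanh r)

/-- The constant `c_{β,d}(λ) = λ^{d/2-1}⟨√β λ⟩^{-d/2}⟨λ⟩^{d/4+1}`. -/
def cFactor (β : ℝ) (d : ℕ) (lam : ℝ) : ℝ :=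
  lam ^ ((d : ℝ) / 2 - 1) * jap (Real.sqrt β * lam) ^ (-(d : ℝ) / 2) *
    jap lam ^ ((d : ℝ) / 4 + 1)

/-- `χ ∈ C_0^∞(ℝ)`, `0 ≤ χ ≤ 1`, `χ ≡ 1` on `[-1,1]`, `supp χ ⊆ [-2,2]`. -/
def IsCutoff (χ : ℝ → ℝ) : Prop :=
  ContDiff ℝ (⊤ : ℕ∞) χ ∧ HasCompactSupport χ ∧ (∀ s, 0 ≤ χ s ∧ χ s ≤ 1) ∧
    (∀ s ∈ Set.Icc (-1 : ℝ) 1, χ s = 1) ∧ Function.support χ ⊆ Set.Icc (-2 : ℝ) 2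

/-- `ρ(s) = χ(s) - χ(2s)`. -/
def rho (χ : ℝ → ℝ) (s : ℝ) : ℝ := χ s - χ (2 * s)

/-- Fourier multiplier operator with symbol `m`. -/
def mulOp {d : ℕ} (m : Euc d → ℂ) (f : Euc d → ℂ) : Euc d → ℂ :=
  𝓕⁻ fun ξ => m ξ * 𝓕 f ξ

/-- The Littlewood–Paley type projection `P_λ` with multiplier `ρ(|ξ|/λ)`. -/
def proj {d : ℕ} (χ : ℝ → ℝ) (lam : ℝ) (f : Euc d → ℂ) : Euc d → ℂ :=
  mulOp (fun ξ => (rho χ (‖ξ‖ / lam) : ℂ)) f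

/-- The propagator `S_{m_β}(t) = exp(-it m_β(D))`, so that `S_{m_β}(±t) = prop β (±t)`. -/
def propg (β : ℝ) {d : ℕ} (t : ℝ) (f : Euc d → ℂ) : Euc d → ℂ :=
  mulOp (fun ξ => Complex.exp (-Complex.I * (t * mSymb β ‖ξ‖))) f

/-!
The kernel of `S(t) P_λ` is a radial oscillatory integral. After rescaling, its amplitude
`e^{-iτφ(|η|)} ϱ(|η|)` is written as `e^{-|η|²} F(|η|²)`; Fourier inversion of `F` in the variable
`u = |η|²` makes it a superposition, with coefficients `𝓕⁻ F(s)`, of the complex Gaussians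
`e^{-(1 + 2πis)|η|²}`. Their kernels are `s^{-d/2}` times Gaussian averages of the modulations
`e^{iπ|x - z|²/(2s)}`.

Away from `s ≈ τ` the integral defining `𝓕⁻ F(s)` has nonstationary phase and is negligible. For
`s = τσ` with `σ ≈ 1` the phase is `-τφ(r) + 2πτ(σr² + y²/σ)` with `y = |x - z| / (2τ)`, and the
`σ`-integral is done first: since `σr² + y²/σ = (√σ r - y/√σ)² + 2yr`, it gives a factor `τ^{-1/2}`
and leaves an `r`-integral whose phase `-τφ(r) + 4πτyr` has second derivative `-τφ''(r)`, so that
van der Corput's lemma gives another `(τ |φ''|)^{-1/2}`. No Bessel functions are needed, the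
dimension enters only through `s^{-d/2}`, and only `φ' > 0` and a lower bound on `|φ''|` are used.

At frequencies `p = λ ≤ 1` the phase `m_β(pr)/p` is smooth up to `p = 0`, with `|φ''| ≳ p²`; this is
the source of the loss `λ⁻¹`. At frequencies `λ = 1/p ≥ 1` the phase `p^{1/2+β} m_β(r/p)` is smooth
up to `p = 0` for `r > 0`, and `|φ''| ≳ 1` by compactness.
-/

section DispersiveKernel

open scoped ContDiff RealInnerProductSpace

/-! ### Van der Corput estimates -/

/-- `φ` is twice differentiable at the points of `s`, with derivatives `φ'` and `φ''`, and `φ''` is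
continuous on `s`: the regularity which phases are assumed to have in one-dimensional oscillatory
integrals. The derivatives are arguments rather than `deriv φ` so that they can be given in closed
form. -/
structure HasDeriv₂On (φ φ' φ'' : ℝ → ℝ) (s : Set ℝ) : Prop where
  hasDerivAt : ∀ x ∈ s, HasDerivAt φ (φ' x) x
  hasDerivAt_deriv : ∀ x ∈ s, HasDerivAt φ' (φ'' x) x
  continuousOn_deriv₂ : ContinuousOn φ'' s

namespace HasDeriv₂On

variable {φ φ' φ'' : ℝ → ℝ} {s t : Set ℝ}

theorem mono (h : HasDeriv₂On φ φ' φ'' s) (hts : t ⊆ s) : HasDeriv₂On φ φ' φ'' t :=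
  ⟨fun x hx => h.1 x (hts hx), fun x hx => h.2 x (hts hx), h.3.mono hts⟩

theorem continuousOn (h : HasDeriv₂On φ φ' φ'' s) : ContinuousOn φ s :=
  HasDerivAt.continuousOn h.1

theorem continuousOn_deriv (h : HasDeriv₂On φ φ' φ'' s) : ContinuousOn φ' s :=
  HasDerivAt.continuousOn h.2

theorem comp_neg (h : HasDeriv₂On φ φ' φ'' s) :
    HasDeriv₂On (fun x => φ (-x)) (fun x => -φ' (-x)) (fun x => φ'' (-x)) (-s) where
  hasDerivAt x hx := ((h.1 (-x) hx).comp x (hasDerivAt_neg' x)).congr_deriv (by ring)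
  hasDerivAt_deriv x hx :=
    ((h.2 (-x) hx).comp x (hasDerivAt_neg' x)).fun_neg.congr_deriv (by ring)
  continuousOn_deriv₂ := h.3.comp continuousOn_neg fun _ hx => hx

theorem const_mul (h : HasDeriv₂On φ φ' φ'' s) (c : ℝ) :
    HasDeriv₂On (fun x => c * φ x) (fun x => c * φ' x) (fun x => c * φ'' x) s :=
  ⟨fun x hx => (h.1 x hx).const_mul c, fun x hx => (h.2 x hx).const_mul c,
    continuousOn_const.mul h.3⟩

theorem add_const_mul_id (h : HasDeriv₂On φ φ' φ'' s) (c : ℝ) :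
    HasDeriv₂On (fun x => φ x + c * x) (fun x => φ' x + c) φ'' s :=
  ⟨fun x hx => (h.1 x hx).fun_add (by simpa using (hasDerivAt_id' x).const_mul c),
    fun x hx => (h.2 x hx).add_const c, h.3⟩

theorem continuousOn_cexp (h : HasDeriv₂On φ φ' φ'' s) :
    ContinuousOn (fun x => cexp (φ x * I)) s := by
  have := h.continuousOn
  fun_prop

theorem hasDerivAt_inv_deriv (h : HasDeriv₂On φ φ' φ'' s) {x : ℝ} (hx : x ∈ s)
    (h0 : φ' x ≠ 0) : HasDerivAt (fun x => (φ' x)⁻¹) (-(φ'' x / φ' x ^ 2)) x :=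
  ((h.2 x hx).inv h0).congr_deriv (neg_div _ _)

theorem continuousOn_deriv₂_div_deriv_sq (h : HasDeriv₂On φ φ' φ'' s) (h0 : ∀ x ∈ s, φ' x ≠ 0) :
    ContinuousOn (fun x => φ'' x / φ' x ^ 2) s :=
  h.3.div (h.continuousOn_deriv.pow 2) fun x hx => pow_ne_zero 2 (h0 x hx)

end HasDeriv₂On

section VanDerCorput

variable {φ φ' φ'' : ℝ → ℝ} {a b κ : ℝ}

theorem norm_integral_exp_le_length (hab : a ≤ b) (φ : ℝ → ℝ) :
    ‖∫ x in a..b, cexp (φ x * I)‖ ≤ b - a := by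
  have := intervalIntegral.norm_integral_le_of_norm_le_const (a := a) (b := b) (C := 1)
    (f := fun x => cexp (φ x * I)) (fun x _ => (norm_exp_ofReal_mul_I _).le)
  rwa [one_mul, abs_of_nonneg (sub_nonneg.2 hab)] at this

theorem integral_exp_mul_deriv_mul {g g' : ℝ → ℂ} (hab : a ≤ b)
    (hφ : ∀ x ∈ Set.Icc a b, HasDerivAt φ (φ' x) x) (hφ' : ContinuousOn φ' (Set.Icc a b))
    (hg : ∀ x ∈ Set.Icc a b, HasDerivAt g (g' x) x) (hg' : ContinuousOn g' (Set.Icc a b)) :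
    ∫ x in a..b, cexp (φ x * I) * (φ' x * I * g x) =
      cexp (φ b * I) * g b - cexp (φ a * I) * g a - ∫ x in a..b, cexp (φ x * I) * g' x := by
  have hφc := HasDerivAt.continuousOn hφ
  have hgc := HasDerivAt.continuousOn hg
  rw [← Set.uIcc_of_le hab] at *
  have hexp : ∀ x ∈ Set.uIcc a b,
      HasDerivAt (fun x => cexp (φ x * I)) (cexp (φ x * I) * (φ' x * I)) x := fun x hx =>
    ((hφ x hx).ofReal_comp.mul_const I).cexp
  rw [eq_sub_iff_add_eq, ← intervalIntegral.integral_deriv_mul_eq_sub hexp hg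
    (ContinuousOn.intervalIntegrable (by fun_prop)) hg'.intervalIntegrable,
    ← intervalIntegral.integral_add (ContinuousOn.intervalIntegrable (by fun_prop))
      (ContinuousOn.intervalIntegrable (by fun_prop))]
  simp only [mul_assoc]

theorem integral_deriv₂_div_deriv_sq (hab : a ≤ b) (h : HasDeriv₂On φ φ' φ'' (Set.Icc a b))
    (h0 : ∀ x ∈ Set.Icc a b, φ' x ≠ 0) :
    ∫ x in a..b, φ'' x / φ' x ^ 2 = (φ' a)⁻¹ - (φ' b)⁻¹ := by
  rw [intervalIntegral.integral_eq_sub_of_hasDerivAt (f := fun x => -(φ' x)⁻¹) (fun x hx => ?_)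
    ((h.continuousOn_deriv₂_div_deriv_sq h0).intervalIntegrable_of_Icc hab)]
  · ring
  · rw [Set.uIcc_of_le hab] at hx
    simpa using (h.hasDerivAt_inv_deriv hx (h0 x hx)).fun_neg

theorem integral_exp_eq_of_deriv_ne_zero (hab : a ≤ b) (h : HasDeriv₂On φ φ' φ'' (Set.Icc a b))
    (h0 : ∀ x ∈ Set.Icc a b, φ' x ≠ 0) :
    ∫ x in a..b, cexp (φ x * I) =
      cexp (φ b * I) * ((φ' b : ℂ)⁻¹ * -I) - cexp (φ a * I) * ((φ' a : ℂ)⁻¹ * -I) -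
        ∫ x in a..b, cexp (φ x * I) * (((φ'' x / φ' x ^ 2 : ℝ) : ℂ) * I) := by
  rw [← integral_exp_mul_deriv_mul hab h.1 h.continuousOn_deriv
    (g := fun x => (φ' x : ℂ)⁻¹ * -I)]
  · refine intervalIntegral.integral_congr fun x hx => ?_
    have : (φ' x : ℂ) ≠ 0 := by exact_mod_cast h0 x (Set.uIcc_of_le hab ▸ hx)
    field_simp
    simp
  · intro x hx
    simpa using ((h.hasDerivAt_inv_deriv hx (h0 x hx)).ofReal_comp).mul_const (-I)
  · exact (continuous_ofReal.comp_continuousOn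
      (h.continuousOn_deriv₂_div_deriv_sq h0)).mul continuousOn_const

theorem norm_integral_exp_le_of_le_deriv (hab : a ≤ b) (hκ : 0 < κ)
    (h : HasDeriv₂On φ φ' φ'' (Set.Icc a b)) (h₂ : ∀ x ∈ Set.Icc a b, 0 ≤ φ'' x)
    (h₁ : ∀ x ∈ Set.Icc a b, κ ≤ φ' x) :
    ‖∫ x in a..b, cexp (φ x * I)‖ ≤ 3 / κ := by
  have hpos : ∀ x ∈ Set.Icc a b, 0 < φ' x := fun x hx => hκ.trans_le (h₁ x hx)
  have hne : ∀ x ∈ Set.Icc a b, φ' x ≠ 0 := fun x hx => (hpos x hx).ne'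
  have ha := Set.left_mem_Icc.2 hab
  have hb := Set.right_mem_Icc.2 hab
  have hboundary : ∀ x ∈ Set.Icc a b,
      ‖cexp (φ x * I) * ((φ' x : ℂ)⁻¹ * -I)‖ = (φ' x)⁻¹ := fun x hx => by
    simp [norm_exp_ofReal_mul_I, abs_of_pos (hpos x hx)]
  have hremainder : ‖∫ x in a..b, cexp (φ x * I) * (((φ'' x / φ' x ^ 2 : ℝ) : ℂ) * I)‖
      ≤ (φ' a)⁻¹ - (φ' b)⁻¹ := by
    rw [← integral_deriv₂_div_deriv_sq hab h hne]
    refine intervalIntegral.norm_integral_le_of_norm_le hab (.of_forall fun x hx => ?_)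
      ((h.continuousOn_deriv₂_div_deriv_sq hne).intervalIntegrable_of_Icc hab)
    have := h₂ x (Set.Ioc_subset_Icc_self hx)
    rw [norm_mul, norm_mul, norm_exp_ofReal_mul_I, norm_I, Complex.norm_real, mul_one, one_mul,
      Real.norm_of_nonneg (by positivity)]
  have ha' : (φ' a)⁻¹ ≤ κ⁻¹ := inv_anti₀ hκ (h₁ a ha)
  have : (φ' b)⁻¹ ≤ κ⁻¹ := inv_anti₀ hκ (h₁ b hb)
  rw [integral_exp_eq_of_deriv_ne_zero hab h hne]
  calc _ ≤ _ := norm_sub_le _ _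
    _ ≤ (‖_‖ + ‖_‖) + _ := by gcongr; exact norm_sub_le _ _
    _ ≤ ((φ' b)⁻¹ + (φ' a)⁻¹) + ((φ' a)⁻¹ - (φ' b)⁻¹) := by
        rw [hboundary a ha, hboundary b hb]
        gcongr
    _ ≤ 3 / κ := by
        rw [div_eq_mul_inv]
        linarith [inv_pos.2 hκ, inv_pos.2 (hpos b hb)]

theorem HasDeriv₂On.mul_sub_le_deriv_sub (h : HasDeriv₂On φ φ' φ'' (Set.Icc a b))
    (h₂ : ∀ x ∈ Set.Icc a b, κ ≤ φ'' x) {x y : ℝ} (hx : x ∈ Set.Icc a b) (hy : y ∈ Set.Icc a b)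
    (hxy : x ≤ y) : κ * (y - x) ≤ φ' y - φ' x :=
  (convex_Icc a b).mul_sub_le_image_sub_of_le_deriv h.continuousOn_deriv
    (fun z hz => (h.2 z (interior_subset hz)).differentiableAt.differentiableWithinAt)
    (fun z hz => by
      rw [(h.2 z (interior_subset hz)).deriv]
      exact h₂ z (interior_subset hz)) x hx y hy hxy

theorem HasDeriv₂On.integral_add_integral (h : HasDeriv₂On φ φ' φ'' (Set.Icc a b)) {c : ℝ}
    (hac : a ≤ c) (hcb : c ≤ b) :
    ∫ x in a..b, cexp (φ x * I) =
      (∫ x in a..c, cexp (φ x * I)) + ∫ x in c..b, cexp (φ x * I) :=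
  (intervalIntegral.integral_add_adjacent_intervals
    ((h.mono (Set.Icc_subset_Icc_right hcb)).continuousOn_cexp.intervalIntegrable_of_Icc hac)
    ((h.mono (Set.Icc_subset_Icc_left hac)).continuousOn_cexp.intervalIntegrable_of_Icc hcb)).symm

theorem norm_integral_exp_le_of_le_deriv₂_of_deriv_nonneg (hab : a ≤ b) (hκ : 0 < κ)
    (h : HasDeriv₂On φ φ' φ'' (Set.Icc a b)) (h₂ : ∀ x ∈ Set.Icc a b, κ ≤ φ'' x)
    (ha : 0 ≤ φ' a) : ‖∫ x in a..b, cexp (φ x * I)‖ ≤ 4 / √κ := by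
  obtain ⟨δ, hδ0, hδ⟩ : ∃ δ > 0, 1 / √κ = δ := ⟨_, by positivity, rfl⟩
  have h4δ : 4 / √κ = δ + 3 * δ := by
    rw [← hδ]
    ring
  rw [h4δ]
  rcases le_total b (a + δ) with hb | hb
  · exact (norm_integral_exp_le_length hab φ).trans (by linarith)
  have haδ : a ≤ a + δ := by linarith
  have hsub : Set.Icc (a + δ) b ⊆ Set.Icc a b := Set.Icc_subset_Icc_left haδ
  have hfar : ‖∫ x in (a + δ)..b, cexp (φ x * I)‖ ≤ 3 / (κ * δ) := by
    refine norm_integral_exp_le_of_le_deriv hb (by positivity) (h.mono hsub)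
      (fun x hx => hκ.le.trans (h₂ x (hsub hx))) fun x hx => ?_
    have h₁ := h.mul_sub_le_deriv_sub h₂ (Set.left_mem_Icc.2 hab) (hsub hx) (hsub hx).1
    have : κ * δ ≤ κ * (x - a) := by
      gcongr
      linarith [hx.1]
    linarith
  have h3δ : 3 / (κ * δ) = 3 * δ := by
    rw [← hδ]
    field_simp
    rw [Real.sq_sqrt hκ.le]
  rw [h.integral_add_integral haδ hb]
  refine (norm_add_le _ _).trans (add_le_add ?_ (hfar.trans_eq h3δ))
  exact (norm_integral_exp_le_length haδ φ).trans_eq (add_sub_cancel_left a δ)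

theorem norm_integral_exp_le_of_le_deriv₂_of_deriv_nonpos (hab : a ≤ b) (hκ : 0 < κ)
    (h : HasDeriv₂On φ φ' φ'' (Set.Icc a b)) (h₂ : ∀ x ∈ Set.Icc a b, κ ≤ φ'' x)
    (hb : φ' b ≤ 0) : ‖∫ x in a..b, cexp (φ x * I)‖ ≤ 4 / √κ := by
  have hneg := h.comp_neg
  rw [Set.neg_Icc] at hneg
  have := norm_integral_exp_le_of_le_deriv₂_of_deriv_nonneg (neg_le_neg hab) hκ hneg
    (fun x hx => h₂ _ ⟨by linarith [hx.2], by linarith [hx.1]⟩) (by simpa using hb)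
  rwa [intervalIntegral.integral_comp_neg (fun x => cexp (φ x * I)), neg_neg, neg_neg] at this

theorem norm_integral_exp_le_of_le_deriv₂ (hab : a ≤ b) (hκ : 0 < κ)
    (h : HasDeriv₂On φ φ' φ'' (Set.Icc a b)) (h₂ : ∀ x ∈ Set.Icc a b, κ ≤ φ'' x) :
    ‖∫ x in a..b, cexp (φ x * I)‖ ≤ 8 / √κ := by
  have h48 : 4 / √κ ≤ 8 / √κ := by gcongr; norm_num
  rcases le_total 0 (φ' a) with ha | ha
  · exact (norm_integral_exp_le_of_le_deriv₂_of_deriv_nonneg hab hκ h h₂ ha).trans h48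
  rcases le_total (φ' b) 0 with hb | hb
  · exact (norm_integral_exp_le_of_le_deriv₂_of_deriv_nonpos hab hκ h h₂ hb).trans h48
  obtain ⟨c, hc, hc0⟩ := intermediate_value_Icc hab h.continuousOn_deriv ⟨ha, hb⟩
  have hleft := norm_integral_exp_le_of_le_deriv₂_of_deriv_nonpos hc.1 hκ
    (h.mono (Set.Icc_subset_Icc_right hc.2)) (fun x hx => h₂ x ⟨hx.1, hx.2.trans hc.2⟩) hc0.le
  have hright := norm_integral_exp_le_of_le_deriv₂_of_deriv_nonneg hc.2 hκ
    (h.mono (Set.Icc_subset_Icc_left hc.1)) (fun x hx => h₂ x ⟨hc.1.trans hx.1, hx.2⟩) hc0.ge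
  rw [h.integral_add_integral hc.1 hc.2]
  calc _ ≤ 4 / √κ + 4 / √κ := (norm_add_le _ _).trans (add_le_add hleft hright)
    _ = 8 / √κ := by ring

end VanDerCorput

section Amplitude

variable {φ : ℝ → ℝ} {A A' : ℝ → ℂ} {a b D : ℝ}

theorem intervalIntegrable_deriv_of_norm_le (hab : a ≤ b)
    (hA : ∀ x ∈ Set.Icc a b, HasDerivAt A (A' x) x) (hA' : ∀ x ∈ Set.Icc a b, ‖A' x‖ ≤ D) :
    IntervalIntegrable (deriv A) volume a b := by
  rw [intervalIntegrable_iff_integrableOn_Ioc_of_le hab]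
  refine Measure.integrableOn_of_bounded (M := D) (by simp)
    (stronglyMeasurable_deriv A).aestronglyMeasurable ?_
  filter_upwards [ae_restrict_mem measurableSet_Ioc] with x hx
  have hx' := Set.Ioc_subset_Icc_self hx
  rw [(hA x hx').deriv]
  exact hA' x hx'

theorem integral_mul_eq_neg_integral_primitive_mul_deriv {g : ℝ → ℂ} (hab : a ≤ b)
    (hg : ContinuousOn g (Set.Icc a b)) (hA : ∀ x ∈ Set.Icc a b, HasDerivAt A (A' x) x)
    (hA' : ∀ x ∈ Set.Icc a b, ‖A' x‖ ≤ D) (hb : A b = 0) :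
    ∫ x in a..b, g x * A x = -∫ x in a..b, (∫ y in a..x, g y) * deriv A x := by
  have huIcc := Set.uIcc_of_le hab
  have hprim : ContinuousOn (fun x => ∫ y in a..x, g y) (Set.uIcc a b) :=
    intervalIntegral.continuousOn_primitive_interval (huIcc ▸ hg.integrableOn_Icc)
  have hprim' : ∀ x ∈ Set.Ioo (min a b) (max a b),
      HasDerivWithinAt (fun x => ∫ y in a..x, g y) (g x) (Set.Ioi x) x := fun x hx => by
    rw [min_eq_left hab, max_eq_right hab] at hx
    refine (intervalIntegral.integral_hasDerivAt_right ?_ ?_ ?_).hasDerivWithinAt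
    · exact (hg.mono (Set.Icc_subset_Icc_right hx.2.le)).intervalIntegrable_of_Icc hx.1.le
    · exact (hg.mono Set.Ioo_subset_Icc_self).stronglyMeasurableAtFilter isOpen_Ioo x hx
    · exact hg.continuousAt (Icc_mem_nhds hx.1 hx.2)
  have hderiv : ∀ x ∈ Set.Ioo (min a b) (max a b),
      HasDerivWithinAt A (deriv A x) (Set.Ioi x) x := fun x hx => by
    rw [min_eq_left hab, max_eq_right hab] at hx
    exact (hA x (Set.Ioo_subset_Icc_self hx)).differentiableAt.hasDerivAt.hasDerivWithinAt
  rw [intervalIntegral.integral_mul_deriv_eq_deriv_mul_of_hasDeriv_right hprim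
    (huIcc ▸ HasDerivAt.continuousOn hA) hprim' hderiv (hg.intervalIntegrable_of_Icc hab)
    (intervalIntegrable_deriv_of_norm_le hab hA hA'), hb]
  simp

theorem norm_integral_mul_le_of_norm_primitive_le {g : ℝ → ℂ} {M : ℝ} (hab : a ≤ b)
    (hg : ContinuousOn g (Set.Icc a b)) (hA : ∀ x ∈ Set.Icc a b, HasDerivAt A (A' x) x)
    (hA' : ∀ x ∈ Set.Icc a b, ‖A' x‖ ≤ D) (hb : A b = 0)
    (hM : ∀ c ∈ Set.Icc a b, ‖∫ x in a..c, g x‖ ≤ M) :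
    ‖∫ x in a..b, g x * A x‖ ≤ M * D * (b - a) := by
  rw [integral_mul_eq_neg_integral_primitive_mul_deriv hab hg hA hA' hb, norm_neg]
  have := intervalIntegral.norm_integral_le_of_norm_le_const (a := a) (b := b) (C := M * D)
    (f := fun x => (∫ y in a..x, g y) * deriv A x) fun x hx => by
      rw [Set.uIoc_of_le hab] at hx
      have hx' := Set.Ioc_subset_Icc_self hx
      have hM0 : 0 ≤ M := (norm_nonneg _).trans (hM x hx')
      rw [norm_mul, (hA x hx').deriv]
      gcongr
      exacts [hM x hx', hA' x hx']
  rwa [abs_of_nonneg (sub_nonneg.2 hab)] at this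

theorem norm_integral_exp_mul_le_of_le_deriv₂ {φ' φ'' : ℝ → ℝ} {κ : ℝ} (hab : a ≤ b)
    (hκ : 0 < κ) (h : HasDeriv₂On φ φ' φ'' (Set.Icc a b)) (h₂ : ∀ x ∈ Set.Icc a b, κ ≤ φ'' x)
    (hA : ∀ x ∈ Set.Icc a b, HasDerivAt A (A' x) x) (hA' : ∀ x ∈ Set.Icc a b, ‖A' x‖ ≤ D)
    (hb : A b = 0) : ‖∫ x in a..b, cexp (φ x * I) * A x‖ ≤ 8 / √κ * D * (b - a) :=
  norm_integral_mul_le_of_norm_primitive_le hab h.continuousOn_cexp hA hA' hb fun c hc => by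
    have hsub : Set.Icc a c ⊆ Set.Icc a b := Set.Icc_subset_Icc_right hc.2
    exact norm_integral_exp_le_of_le_deriv₂ hc.1 hκ (h.mono hsub) fun x hx => h₂ x (hsub hx)

theorem forall_le_or_forall_le_neg {f : ℝ → ℝ} {κ : ℝ} (hκ : 0 < κ)
    (hf : ContinuousOn f (Set.Icc a b)) (h : ∀ x ∈ Set.Icc a b, κ ≤ |f x|) :
    (∀ x ∈ Set.Icc a b, κ ≤ f x) ∨ ∀ x ∈ Set.Icc a b, κ ≤ -f x := by
  by_contra! hne
  obtain ⟨⟨x, hx, hxκ⟩, y, hy, hyκ⟩ := hne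
  have hx' : f x ≤ 0 := by
    rcases le_abs.1 (h x hx) with h' | h' <;> linarith
  have hy' : 0 ≤ f y := by
    rcases le_abs.1 (h y hy) with h' | h' <;> linarith
  obtain ⟨z, hz, hz0⟩ := isPreconnected_Icc.intermediate_value hx hy hf ⟨hx', hy'⟩
  have := h z hz
  rw [hz0, abs_zero] at this
  exact this.not_gt hκ

theorem norm_integral_exp_mul_conj (hab : a ≤ b) :
    ‖∫ x in a..b, cexp (((-φ x : ℝ) : ℂ) * I) * starRingEnd ℂ (A x)‖ =
      ‖∫ x in a..b, cexp (φ x * I) * A x‖ := by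
  rw [← Complex.norm_conj, intervalIntegral.integral_of_le hab, intervalIntegral.integral_of_le hab,
    ← integral_conj]
  congr with x
  rw [map_mul, conj_conj, ← Complex.exp_conj, map_mul, conj_I, conj_ofReal]
  push_cast
  ring_nf

theorem norm_integral_exp_mul_le_of_le_abs_deriv₂ {φ' φ'' : ℝ → ℝ} {κ : ℝ} (hab : a ≤ b)
    (hκ : 0 < κ) (h : HasDeriv₂On φ φ' φ'' (Set.Icc a b))
    (h₂ : ∀ x ∈ Set.Icc a b, κ ≤ |φ'' x|)
    (hA : ∀ x ∈ Set.Icc a b, HasDerivAt A (A' x) x) (hA' : ∀ x ∈ Set.Icc a b, ‖A' x‖ ≤ D)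
    (hb : A b = 0) : ‖∫ x in a..b, cexp (φ x * I) * A x‖ ≤ 8 / √κ * D * (b - a) := by
  rcases forall_le_or_forall_le_neg hκ h.3 h₂ with hpos | hneg
  · exact norm_integral_exp_mul_le_of_le_deriv₂ hab hκ h hpos hA hA' hb
  · rw [← norm_integral_exp_mul_conj hab]
    exact norm_integral_exp_mul_le_of_le_deriv₂ hab hκ (φ' := fun x => -φ' x)
      (φ'' := fun x => -φ'' x) (A' := fun x => starRingEnd ℂ (A' x))
      (by simpa only [neg_one_mul] using h.const_mul (-1)) hneg
      (fun x hx => conjCLE.toContinuousLinearMap.hasFDerivAt.comp_hasDerivAt x (hA x hx))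
      (by simpa using hA') (by simp [hb])

end Amplitude

/-! ### Nonstationary phase -/

section SndDeriv

variable {E F : Type*} [NormedAddCommGroup E] [NormedSpace ℝ E] [NormedAddCommGroup F]
  [NormedSpace ℝ F]

/-- Partial derivative in the last (real) variable of a function on `E × ℝ`, where `E` is thought of
as a space of parameters. -/
def sndDeriv (f : E × ℝ → F) (z : E × ℝ) : F := fderiv ℝ f z (0, 1)

variable {f : E × ℝ → F} {W : Set (E × ℝ)}

theorem contDiffOn_sndDeriv (hf : ContDiffOn ℝ ∞ f W) (hW : IsOpen W) :
    ContDiffOn ℝ ∞ (sndDeriv f) W :=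
  (hf.fderiv_of_isOpen hW (by simp)).clm_apply contDiffOn_const

theorem hasDerivAt_sndDeriv (hf : ContDiffOn ℝ ∞ f W) (hW : IsOpen W) {p : E} {u : ℝ}
    (h : (p, u) ∈ W) : HasDerivAt (fun v => f (p, v)) (sndDeriv f (p, u)) u :=
  ((hf.contDiffAt (hW.mem_nhds h)).differentiableAt (by simp)).hasFDerivAt.comp_hasDerivAt u
    ((hasDerivAt_const u p).prodMk (hasDerivAt_id u))

theorem hasDeriv₂On_sndDeriv {f : E × ℝ → ℝ} (hf : ContDiffOn ℝ ∞ f W) (hW : IsOpen W) (p : E) :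
    HasDeriv₂On (fun v => f (p, v)) (fun v => sndDeriv f (p, v))
      (fun v => sndDeriv (sndDeriv f) (p, v)) {v | (p, v) ∈ W} where
  hasDerivAt _ hv := hasDerivAt_sndDeriv hf hW hv
  hasDerivAt_deriv _ hv := hasDerivAt_sndDeriv (contDiffOn_sndDeriv hf hW) hW hv
  continuousOn_deriv₂ := (contDiffOn_sndDeriv (contDiffOn_sndDeriv hf hW) hW).continuousOn.comp
    (by fun_prop) fun _ hv => hv

theorem sndDeriv_eq_zero_of_notMem {K : Set ℝ} (hK : IsClosed K)
    (hf : ∀ p, ∀ u ∉ K, f (p, u) = 0) (p : E) (u : ℝ) (hu : u ∉ K) : sndDeriv f (p, u) = 0 := by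
  have : f =ᶠ[nhds (p, u)] fun _ => 0 := by
    filter_upwards [(hK.isOpen_compl.preimage continuous_snd).mem_nhds hu] with z hz
    exact hf z.1 z.2 hz
  rw [sndDeriv, this.fderiv_eq]
  simp

end SndDeriv

theorem integral_exp_mul_eq_of_deriv_ne_zero {θ θ' : ℝ → ℝ} {g g' : ℝ → ℂ} {a b : ℝ} (hab : a ≤ b)
    (hθ : ∀ x ∈ Set.Icc a b, HasDerivAt θ (θ' x) x) (hθ' : ContinuousOn θ' (Set.Icc a b))
    (hθ0 : ∀ x ∈ Set.Icc a b, θ' x ≠ 0)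
    (hg : ∀ x ∈ Set.Icc a b, HasDerivAt (fun x => g x / θ' x) (g' x) x)
    (hg' : ContinuousOn g' (Set.Icc a b)) (hga : g a = 0) (hgb : g b = 0) :
    ∫ x in a..b, cexp (θ x * I) * g x = I * ∫ x in a..b, cexp (θ x * I) * g' x := by
  have hparts := integral_exp_mul_deriv_mul hab hθ hθ' hg hg'
  have hI : ∫ x in a..b, cexp (θ x * I) * (θ' x * I * (g x / θ' x)) =
      I * ∫ x in a..b, cexp (θ x * I) * g x := by
    rw [← intervalIntegral.integral_const_mul]
    refine intervalIntegral.integral_congr fun x hx => ?_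
    have : (θ' x : ℂ) ≠ 0 := by exact_mod_cast hθ0 x (Set.uIcc_of_le hab ▸ hx)
    field_simp
  rw [hI, hga, hgb] at hparts
  linear_combination (-I) * hparts + (∫ x in a..b, cexp (θ x * I) * g x) * I_sq

theorem exists_norm_integral_exp_le_pow {E : Type*} [NormedAddCommGroup E] [NormedSpace ℝ E]
    {P : Set E} (hP : IsCompact P) {a b : ℝ} (hab : a ≤ b) {K : Set ℝ} (hK : IsClosed K)
    (ha : a ∉ K) (hb : b ∉ K) {W : Set (E × ℝ)} (hW : IsOpen W) (hPW : P ×ˢ Set.Icc a b ⊆ W)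
    {θ : E × ℝ → ℝ} (hθ : ContDiffOn ℝ ∞ θ W) (hθ0 : ∀ z ∈ W, sndDeriv θ z ≠ 0) (N : ℕ)
    (q : E × ℝ → ℝ) (hq : ContDiffOn ℝ ∞ q W) (hqK : ∀ p, ∀ u ∉ K, q (p, u) = 0) :
    ∃ C, ∀ p ∈ P, ∀ T > 0,
      ‖∫ u in a..b, cexp ((T * θ (p, u) : ℝ) * I) * q (p, u)‖ ≤ C * T⁻¹ ^ N := by
  induction N generalizing q with
  | zero =>
    obtain ⟨C, hC⟩ := (hP.prod isCompact_Icc).exists_bound_of_continuousOn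
      (hq.continuousOn.mono hPW)
    refine ⟨C * |b - a|, fun p hp T _ => ?_⟩
    rw [pow_zero, mul_one]
    refine intervalIntegral.norm_integral_le_of_norm_le_const fun u hu => ?_
    rw [Set.uIoc_of_le hab] at hu
    rw [norm_mul, norm_exp_ofReal_mul_I, one_mul, Complex.norm_real]
    exact hC (p, u) ⟨hp, Set.Ioc_subset_Icc_self hu⟩
  | succ N ih =>
    set q₁ : E × ℝ → ℝ := fun z => q z / sndDeriv θ z with hq₁
    have hq₁W : ContDiffOn ℝ ∞ q₁ W := hq.div (contDiffOn_sndDeriv hθ hW) hθ0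
    have hq₁K : ∀ p, ∀ u ∉ K, q₁ (p, u) = 0 := fun p u hu => by simp [hq₁, hqK p u hu]
    obtain ⟨C, hC⟩ := ih (sndDeriv q₁) (contDiffOn_sndDeriv hq₁W hW)
      (sndDeriv_eq_zero_of_notMem hK hq₁K)
    refine ⟨C, fun p hp T hT => ?_⟩
    have hmem : ∀ u ∈ Set.Icc a b, (p, u) ∈ W := fun u hu => hPW ⟨hp, hu⟩
    have hphase := ((hasDeriv₂On_sndDeriv hθ hW p).mono hmem).const_mul T
    have hquot : ∀ u ∈ Set.Icc a b, HasDerivAt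
        (fun u => (q (p, u) : ℂ) / ((T * sndDeriv θ (p, u) : ℝ) : ℂ))
        ((T : ℂ)⁻¹ * (sndDeriv q₁ (p, u) : ℝ)) u := fun u hu => by
      refine ((hasDerivAt_sndDeriv hq₁W hW (hmem u hu)).ofReal_comp.const_mul
        (T : ℂ)⁻¹).congr_of_eventuallyEq (.of_forall fun v => ?_)
      simp only [hq₁, ofReal_div, ofReal_mul]
      field_simp
    have hderiv : ContinuousOn (fun u => (T : ℂ)⁻¹ * (sndDeriv q₁ (p, u) : ℝ)) (Set.Icc a b) :=
      continuousOn_const.mul (continuous_ofReal.comp_continuousOn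
        ((hasDeriv₂On_sndDeriv hq₁W hW p).mono hmem).continuousOn_deriv)
    rw [integral_exp_mul_eq_of_deriv_ne_zero hab hphase.hasDerivAt hphase.continuousOn_deriv
      (fun u hu => mul_ne_zero hT.ne' (hθ0 _ (hmem u hu))) hquot hderiv
      (by simp [hqK p a ha]) (by simp [hqK p b hb])]
    simp only [mul_left_comm _ (T : ℂ)⁻¹]
    rw [intervalIntegral.integral_const_mul, norm_mul, norm_I, one_mul, norm_mul, norm_inv,
      Complex.norm_real, Real.norm_of_nonneg hT.le, pow_succ]
    calc _ ≤ T⁻¹ * (C * T⁻¹ ^ N) := by gcongr; exact hC p hp T hT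
      _ = _ := by ring

/-! ### The phase `σ r² + y² / σ - 2 r y` -/

/-- The phase `(√σ r - y / √σ)²`, written without square roots. -/
def squarePhase (y r σ : ℝ) : ℝ := σ * r ^ 2 + y ^ 2 / σ - 2 * r * y

theorem hasDeriv₂On_squarePhase (y r : ℝ) :
    HasDeriv₂On (squarePhase y r) (fun σ => r ^ 2 - y ^ 2 / σ ^ 2) (fun σ => 2 * y ^ 2 / σ ^ 3)
      (Set.Ioi 0) where
  hasDerivAt σ hσ := by
    have h := (((hasDerivAt_id σ).mul_const (r ^ 2)).add
      ((hasDerivAt_inv (ne_of_gt hσ)).const_mul (y ^ 2))).sub_const (2 * r * y)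
    exact h.congr_deriv (by ring)
  hasDerivAt_deriv σ hσ := by
    have hσ0 : σ ≠ 0 := ne_of_gt hσ
    have h := (((hasDerivAt_pow 2 σ).inv (pow_ne_zero 2 hσ0)).const_mul (y ^ 2)).const_sub (r ^ 2)
    refine h.congr_deriv ?_
    field_simp
    ring
  continuousOn_deriv₂ := continuousOn_const.div (by fun_prop) fun σ hσ => by
    have : σ ≠ 0 := ne_of_gt hσ
    positivity

theorem hasDerivAt_squarePhase_param (y σ r : ℝ) :
    HasDerivAt (fun r => squarePhase y r σ) (2 * σ * r - 2 * y) r := by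
  have h := (((hasDerivAt_pow 2 r).const_mul σ).add_const (y ^ 2 / σ)).sub
    (((hasDerivAt_id r).const_mul 2).mul_const y)
  exact h.congr_deriv (by norm_num; ring)

section SquarePhase

variable {σ₀ σ₁ r₀ r₁ : ℝ}

theorem norm_integral_exp_squarePhase_le_of_le (hσ₀ : 0 < σ₀) (hσ : σ₀ ≤ σ₁) (hr₀ : 0 < r₀)
    {T y : ℝ} (hT : 0 < T) (hy : σ₀ * r₀ / 2 ≤ y) (r : ℝ) :
    ‖∫ σ in σ₀..σ₁, cexp ((T * squarePhase y r σ : ℝ) * I)‖ ≤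
      8 / √(T * (σ₀ ^ 2 * r₀ ^ 2 / (2 * σ₁ ^ 3))) := by
  have hpos : ∀ σ ∈ Set.Icc σ₀ σ₁, 0 < σ := fun σ h => hσ₀.trans_le h.1
  have hσ₁ : 0 < σ₁ := hσ₀.trans_le hσ
  refine norm_integral_exp_le_of_le_deriv₂ hσ (by positivity)
    (((hasDeriv₂On_squarePhase y r).mono hpos).const_mul T) fun σ h => ?_
  have := hpos σ h
  calc T * (σ₀ ^ 2 * r₀ ^ 2 / (2 * σ₁ ^ 3)) = T * (2 * (σ₀ * r₀ / 2) ^ 2 / σ₁ ^ 3) := by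
        field_simp
    _ ≤ T * (2 * y ^ 2 / σ ^ 3) := by gcongr; exact h.2

theorem norm_integral_exp_squarePhase_le_of_ge (hσ₀ : 0 < σ₀) (hσ : σ₀ ≤ σ₁) (hr₀ : 0 < r₀)
    {T y r : ℝ} (hT : 0 < T) (hy₀ : 0 ≤ y) (hy : y ≤ σ₀ * r₀ / 2) (hr : r₀ ≤ r) :
    ‖∫ σ in σ₀..σ₁, cexp ((T * squarePhase y r σ : ℝ) * I)‖ ≤ 3 / (T * (3 / 4 * r₀ ^ 2)) := by
  have hpos : ∀ σ ∈ Set.Icc σ₀ σ₁, 0 < σ := fun σ h => hσ₀.trans_le h.1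
  refine norm_integral_exp_le_of_le_deriv hσ (by positivity)
    (((hasDeriv₂On_squarePhase y r).mono hpos).const_mul T) (fun σ h => ?_) fun σ h => ?_
  · have := hpos σ h
    positivity
  · have hσpos := hpos σ h
    have hyσ : y ^ 2 / σ ^ 2 ≤ 1 / 4 * r₀ ^ 2 := by
      rw [div_le_iff₀ (by positivity)]
      calc y ^ 2 ≤ (σ * r₀ / 2) ^ 2 := by gcongr; exact hy.trans (by gcongr; exact h.1)
        _ = _ := by ring
    have hr2 : r₀ ^ 2 ≤ r ^ 2 := by gcongr
    gcongr
    linarith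

theorem exists_norm_integral_exp_squarePhase_le (hσ₀ : 0 < σ₀) (hσ : σ₀ ≤ σ₁) (hr₀ : 0 < r₀) :
    ∃ K > 0, ∀ T ≥ 1, ∀ y ≥ 0, ∀ r ≥ r₀, ∀ c ∈ Set.Icc σ₀ σ₁,
      ‖∫ σ in σ₀..c, cexp ((T * squarePhase y r σ : ℝ) * I)‖ ≤ K / √T := by
  have hσ₁ : 0 < σ₁ := hσ₀.trans_le hσ
  set κ := σ₀ ^ 2 * r₀ ^ 2 / (2 * σ₁ ^ 3) with hκ
  have hκ₀ : 0 < κ := by positivity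
  refine ⟨8 / √κ + 4 / r₀ ^ 2, by positivity, fun T hT y hy r hr c hc => ?_⟩
  have hT₀ : 0 < T := one_pos.trans_le hT
  rw [add_div]
  rcases le_total (σ₀ * r₀ / 2) y with hyr | hyr
  · have hc₀ : 0 < c := hσ₀.trans_le hc.1
    calc _ ≤ 8 / √(T * (σ₀ ^ 2 * r₀ ^ 2 / (2 * c ^ 3))) :=
          norm_integral_exp_squarePhase_le_of_le hσ₀ hc.1 hr₀ hT₀ hyr r
      _ ≤ 8 / √(T * κ) := by rw [hκ]; gcongr; exact hc.2
      _ = 8 / √κ / √T := by rw [mul_comm, Real.sqrt_mul hκ₀.le, div_div]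
      _ ≤ _ := le_add_of_nonneg_right (by positivity)
  · calc _ ≤ 3 / (T * (3 / 4 * r₀ ^ 2)) :=
          norm_integral_exp_squarePhase_le_of_ge hσ₀ hc.1 hr₀ hT₀ hy hyr hr
      _ = 4 / r₀ ^ 2 / T := by field_simp
      _ ≤ 4 / r₀ ^ 2 / √T := by gcongr; exact (Real.sqrt_le_left hT₀.le).2 (by nlinarith)
      _ ≤ _ := le_add_of_nonneg_left (by positivity)

theorem exists_norm_integral_exp_squarePhase_mul_le (hσ₀ : 0 < σ₀) (hσ : σ₀ ≤ σ₁) (hr₀ : 0 < r₀) :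
    ∃ K > 0, ∀ T ≥ 1, ∀ y ≥ 0, ∀ r ≥ r₀, ∀ (A A' : ℝ → ℂ) (D : ℝ),
      (∀ σ ∈ Set.Icc σ₀ σ₁, HasDerivAt A (A' σ) σ) → A σ₁ = 0 →
      (∀ σ ∈ Set.Icc σ₀ σ₁, ‖A' σ‖ ≤ D) →
      ‖∫ σ in σ₀..σ₁, cexp ((T * squarePhase y r σ : ℝ) * I) * A σ‖ ≤ K * D / √T := by
  obtain ⟨K, hK₀, hK⟩ := exists_norm_integral_exp_squarePhase_le hσ₀ hσ hr₀
  refine ⟨K * (σ₁ - σ₀ + 1), mul_pos hK₀ (by linarith), fun T hT y hy r hr A A' D hA hA₁ hA' => ?_⟩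
  have hD : 0 ≤ D := (norm_nonneg _).trans (hA' σ₀ (Set.left_mem_Icc.2 hσ))
  have hphase := (((hasDeriv₂On_squarePhase y r).mono
    fun σ h => hσ₀.trans_le h.1 : HasDeriv₂On _ _ _ (Set.Icc σ₀ σ₁))).const_mul T
  calc _ ≤ K / √T * D * (σ₁ - σ₀) := norm_integral_mul_le_of_norm_primitive_le hσ
        hphase.continuousOn_cexp hA hA' hA₁ (hK T hT y hy r hr)
    _ ≤ K / √T * D * (σ₁ - σ₀ + 1) := by gcongr; linarith
    _ = _ := by ring

theorem hasDerivAt_intervalIntegral_of_continuousOn {F F' : ℝ → ℝ → ℂ} {a b : ℝ} (hab : a ≤ b)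
    (hF : ∀ s, ContinuousOn (F s) (Set.Icc a b))
    (hF' : ContinuousOn (fun z : ℝ × ℝ => F' z.1 z.2) (Set.univ ×ˢ Set.Icc a b))
    (h : ∀ s, ∀ x ∈ Set.Icc a b, HasDerivAt (fun s => F s x) (F' s x) s) (s : ℝ) :
    HasDerivAt (fun s => ∫ x in a..b, F s x) (∫ x in a..b, F' s x) s := by
  have hIoc : Set.uIoc a b ⊆ Set.Icc a b := Set.uIoc_of_le hab ▸ Set.Ioc_subset_Icc_self
  have hmeas : ∀ {g : ℝ → ℂ}, ContinuousOn g (Set.Icc a b) →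
      AEStronglyMeasurable g (volume.restrict (Set.uIoc a b)) := fun hg =>
    (hg.mono hIoc).aestronglyMeasurable measurableSet_uIoc
  obtain ⟨M, hM⟩ := ((isCompact_closedBall s 1).prod isCompact_Icc).exists_bound_of_continuousOn
    (hF'.mono (Set.prod_mono_left (Set.subset_univ _)))
  refine (intervalIntegral.hasDerivAt_integral_of_dominated_loc_of_deriv_le (bound := fun _ => M)
    (Metric.closedBall_mem_nhds s one_pos) (.of_forall fun s => hmeas (hF s))
    ((hF s).intervalIntegrable_of_Icc hab) (hmeas ?_) (.of_forall fun x hx s' hs' => ?_)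
    intervalIntegrable_const (.of_forall fun x hx s' _ => h s' x (hIoc hx))).2
  · exact hF'.comp (f := fun x => (s, x)) (by fun_prop) fun x hx => ⟨trivial, hx⟩
  · exact hM (s', x) ⟨hs', hIoc hx⟩

/-- The `r`-derivative of the phase is `2 σ² / (σ r + y)` times its `σ`-derivative, so the factor
`T` which it brings down is removed by an integration by parts in `σ`. -/
theorem hasDerivAt_integral_exp_squarePhase_mul (hσ₀ : 0 < σ₀) (hσ : σ₀ ≤ σ₁) {T y r : ℝ}
    {A A' : ℝ → ℝ} (hr : 0 < r) (hy : 0 ≤ y) (hA : Continuous A)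
    (hA' : ∀ σ ∈ Set.Icc σ₀ σ₁, HasDerivAt (fun σ => 2 * σ ^ 2 * A σ * (σ * r + y)⁻¹) (A' σ) σ)
    (hA'c : ContinuousOn A' (Set.Icc σ₀ σ₁)) (hAσ₀ : A σ₀ = 0) (hAσ₁ : A σ₁ = 0) :
    HasDerivAt (fun r => ∫ σ in σ₀..σ₁, cexp ((T * squarePhase y r σ : ℝ) * I) * A σ)
      (-∫ σ in σ₀..σ₁, cexp ((T * squarePhase y r σ : ℝ) * I) * A' σ) r := by
  have hpos : ∀ σ ∈ Set.Icc σ₀ σ₁, 0 < σ := fun σ h => hσ₀.trans_le h.1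
  have hphase : ∀ s, HasDeriv₂On _ _ _ (Set.Icc σ₀ σ₁) := fun s =>
    ((hasDeriv₂On_squarePhase y s).mono hpos).const_mul T
  have hcont : ContinuousOn (fun z : ℝ × ℝ => squarePhase y z.1 z.2)
      (Set.univ ×ˢ Set.Icc σ₀ σ₁) := by
    have : ContinuousOn (fun z : ℝ × ℝ => y ^ 2 / z.2) (Set.univ ×ˢ Set.Icc σ₀ σ₁) :=
      continuousOn_const.div continuousOn_snd fun z hz => (hpos _ hz.2).ne'
    unfold squarePhase
    fun_prop
  have hderiv := hasDerivAt_intervalIntegral_of_continuousOn hσ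
    (F := fun s σ => cexp ((T * squarePhase y s σ : ℝ) * I) * A σ)
    (F' := fun s σ => cexp ((T * squarePhase y s σ : ℝ) * I) *
      ((T * (2 * σ * s - 2 * y) : ℝ) * I) * A σ)
    (fun s => (hphase s).continuousOn_cexp.mul (by fun_prop)) (by fun_prop)
    (fun s σ _ => ((((hasDerivAt_squarePhase_param y σ s).const_mul T).ofReal_comp.mul_const
      I).cexp).mul_const _) r
  have hparts := integral_exp_mul_deriv_mul hσ (hphase r).hasDerivAt
    (hphase r).continuousOn_deriv (fun σ h => (hA' σ h).ofReal_comp)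
    (continuous_ofReal.comp_continuousOn hA'c)
  simp only [hAσ₀, hAσ₁, mul_zero, zero_mul, ofReal_zero, sub_zero, zero_sub] at hparts
  rw [← hparts]
  refine hderiv.congr_deriv (intervalIntegral.integral_congr fun σ h => ?_)
  have hσpos := hpos σ (Set.uIcc_of_le hσ ▸ h)
  have hreal : T * (2 * σ * r - 2 * y) * A σ =
      T * (r ^ 2 - y ^ 2 / σ ^ 2) * (2 * σ ^ 2 * A σ * (σ * r + y)⁻¹) := by
    field_simp
    ring
  calc _ = cexp ((T * squarePhase y r σ : ℝ) * I) *
        (((T * (2 * σ * r - 2 * y) * A σ : ℝ) : ℂ) * I) := by push_cast; ring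
    _ = _ := by rw [hreal]; push_cast; ring

theorem HasDeriv₂On.mul_inv_affine {g g' g'' : ℝ → ℝ} {s : Set ℝ} {r y : ℝ}
    (hg : HasDeriv₂On g g' g'' s) (h0 : ∀ σ ∈ s, σ * r + y ≠ 0) :
    HasDeriv₂On (fun σ => g σ * (σ * r + y)⁻¹)
      (fun σ => g' σ * (σ * r + y)⁻¹ - g σ * r * (σ * r + y)⁻¹ ^ 2)
      (fun σ => g'' σ * (σ * r + y)⁻¹ - 2 * g' σ * r * (σ * r + y)⁻¹ ^ 2 +
        2 * g σ * r ^ 2 * (σ * r + y)⁻¹ ^ 3) s := by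
  have hinv : ∀ σ ∈ s, HasDerivAt (fun σ => (σ * r + y)⁻¹) (-(r * (σ * r + y)⁻¹ ^ 2)) σ :=
    fun σ hσ => ((((hasDerivAt_id σ).mul_const r).add_const y).inv (h0 σ hσ)).congr_deriv
      (by simp [div_eq_mul_inv])
  have := HasDerivAt.continuousOn hinv
  refine ⟨fun σ hσ => ?_, fun σ hσ => ?_, ?_⟩
  · exact ((hg.hasDerivAt σ hσ).mul (hinv σ hσ)).congr_deriv (by ring)
  · refine (((hg.hasDerivAt_deriv σ hσ).mul (hinv σ hσ)).sub
      (((hg.hasDerivAt σ hσ).mul_const r).mul ((hinv σ hσ).pow 2))).congr_deriv ?_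
    simp only [Pi.pow_apply]
    ring
  · have := hg.continuousOn
    have := hg.continuousOn_deriv
    have := hg.continuousOn_deriv₂
    fun_prop

theorem norm_deriv₂_mul_inv_affine_le {r₀ r w L g g' g'' : ℝ} (hσ₀ : 0 < σ₀) (hr₀ : 0 < r₀)
    (hr : r₀ ≤ r) (hw₀ : 0 ≤ w) (hw : w * (σ₀ * r) ≤ 1) (hg : |g| ≤ L) (hg' : |g'| ≤ L)
    (hg'' : |g''| ≤ L) :
    |g'' * w - 2 * g' * r * w ^ 2 + 2 * g * r ^ 2 * w ^ 3| ≤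
      L * (1 + 2 / σ₀ + 2 / σ₀ ^ 2) / (σ₀ * r₀) := by
  have hrpos : 0 < r := hr₀.trans_le hr
  have hrw : r * w ≤ 1 / σ₀ := by
    rw [le_div_iff₀ hσ₀]
    linarith
  have hw' : w ≤ 1 / (σ₀ * r₀) := by
    rw [le_div_iff₀ (by positivity)]
    exact (by gcongr : w * (σ₀ * r₀) ≤ w * (σ₀ * r)).trans hw
  have hL : 0 ≤ L := (abs_nonneg g).trans hg
  have hfactor : |g'' - 2 * g' * (r * w) + 2 * g * (r * w) ^ 2| ≤
      L * (1 + 2 / σ₀ + 2 / σ₀ ^ 2) :=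
    calc _ ≤ |g''| + |2 * g' * (r * w)| + |2 * g * (r * w) ^ 2| :=
          (abs_add_le _ _).trans (by gcongr; exact abs_sub _ _)
      _ = |g''| + 2 * |g'| * (r * w) + 2 * |g| * (r * w) ^ 2 := by
          simp only [abs_mul, abs_pow, abs_of_pos hrpos, abs_of_nonneg hw₀, abs_two]
      _ ≤ L + 2 * L * (1 / σ₀) + 2 * L * (1 / σ₀) ^ 2 := by gcongr
      _ = _ := by ring
  calc _ = |g'' - 2 * g' * (r * w) + 2 * g * (r * w) ^ 2| * w := by
        rw [← abs_of_nonneg hw₀, ← abs_mul, abs_of_nonneg hw₀]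
        ring_nf
    _ ≤ L * (1 + 2 / σ₀ + 2 / σ₀ ^ 2) * (1 / (σ₀ * r₀)) := by gcongr
    _ = _ := by ring

theorem hasDeriv₂On_of_contDiff {f : ℝ → ℝ} (hf : ContDiff ℝ ∞ f) (s : Set ℝ) :
    HasDeriv₂On f (deriv f) (deriv (deriv f)) s := by
  have hf' : ContDiff ℝ ∞ (deriv f) := (contDiff_infty_iff_deriv.1 hf).2
  exact ⟨fun x _ => (hf.differentiable (by simp) x).hasDerivAt,
    fun x _ => (hf'.differentiable (by simp) x).hasDerivAt,
    (contDiff_infty_iff_deriv.1 hf').2.continuous.continuousOn⟩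

theorem exists_forall_mem_Icc_abs_le (f : ℝ → ℝ) {a b : ℝ} (hf : ContDiff ℝ ∞ f) :
    ∃ L, ∀ x ∈ Set.Icc a b, |f x| ≤ L ∧ |deriv f x| ≤ L ∧ |deriv (deriv f) x| ≤ L := by
  have h := hasDeriv₂On_of_contDiff hf (Set.Icc a b)
  obtain ⟨L, hL⟩ := isCompact_Icc.exists_bound_of_continuousOn
    (h.continuousOn.prodMk (h.continuousOn_deriv.prodMk h.continuousOn_deriv₂))
  exact ⟨L, fun x hx => by simpa [Prod.norm_def] using hL x hx⟩

theorem exists_norm_integral_exp_squarePhase_mul_contDiff_le (hσ₀ : 0 < σ₀) (hσ : σ₀ ≤ σ₁)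
    (hr₀ : 0 < r₀) {A : ℝ → ℝ} (hA : ContDiff ℝ ∞ A) (hAσ₁ : A σ₁ = 0) :
    ∃ C > 0, ∀ T ≥ 1, ∀ y ≥ 0, ∀ r ≥ r₀,
      ‖∫ σ in σ₀..σ₁, cexp ((T * squarePhase y r σ : ℝ) * I) * A σ‖ ≤ C / √T := by
  obtain ⟨K, hK₀, hK⟩ := exists_norm_integral_exp_squarePhase_mul_le hσ₀ hσ hr₀
  obtain ⟨L, hL⟩ := exists_forall_mem_Icc_abs_le A (a := σ₀) (b := σ₁) hA
  refine ⟨K * max 1 L, by positivity, fun T hT y hy r hr => ?_⟩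
  refine hK T hT y hy r hr (fun σ => A σ) (fun σ => (deriv A σ : ℝ)) (max 1 L)
    (fun σ _ => (hA.differentiable (by simp) σ).hasDerivAt.ofReal_comp) (by simp [hAσ₁])
    fun σ h => ?_
  rw [Complex.norm_real]
  exact (hL σ h).2.1.trans (le_max_right _ _)

theorem exists_norm_deriv_integral_exp_squarePhase_mul_le (hσ₀ : 0 < σ₀) (hσ : σ₀ ≤ σ₁)
    (hr₀ : 0 < r₀) {A : ℝ → ℝ} (hA : ContDiff ℝ ∞ A) (hAσ₀ : A σ₀ = 0) (hAσ₁ : A σ₁ = 0)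
    (hA'σ₁ : deriv A σ₁ = 0) :
    ∃ C > 0, ∀ T ≥ 1, ∀ y ≥ 0, ∀ r ≥ r₀, ∃ J' : ℂ,
      HasDerivAt (fun r => ∫ σ in σ₀..σ₁, cexp ((T * squarePhase y r σ : ℝ) * I) * A σ) J' r ∧
        ‖J'‖ ≤ C / √T := by
  obtain ⟨K, hK₀, hK⟩ := exists_norm_integral_exp_squarePhase_mul_le hσ₀ hσ hr₀
  set A₂ : ℝ → ℝ := fun σ => 2 * σ ^ 2 * A σ with hA₂
  have hA₂s : ContDiff ℝ ∞ A₂ := by fun_prop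
  have hA₂' : deriv A₂ σ₁ = 0 := by
    have h := ((hasDerivAt_pow 2 σ₁).const_mul 2).mul (hA.differentiable (by simp) σ₁).hasDerivAt
    exact h.deriv.trans (by simp [hAσ₁, hA'σ₁])
  obtain ⟨L, hL⟩ := exists_forall_mem_Icc_abs_le A₂ (a := σ₀) (b := σ₁) hA₂s
  refine ⟨K * max 1 (L * (1 + 2 / σ₀ + 2 / σ₀ ^ 2) / (σ₀ * r₀)), by positivity,
    fun T hT y hy r hr => ?_⟩
  have hrpos : 0 < r := hr₀.trans_le hr
  have hden : ∀ σ ∈ Set.Icc σ₀ σ₁, 0 < σ * r + y := fun σ h =>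
    add_pos_of_pos_of_nonneg (mul_pos (hσ₀.trans_le h.1) hrpos) hy
  have hB := (hasDeriv₂On_of_contDiff hA₂s (Set.Icc σ₀ σ₁)).mul_inv_affine
    fun σ h => (hden σ h).ne'
  refine ⟨_, hasDerivAt_integral_exp_squarePhase_mul hσ₀ hσ hrpos hy hA.continuous hB.hasDerivAt
    hB.continuousOn_deriv hAσ₀ hAσ₁, ?_⟩
  rw [norm_neg]
  refine hK T hT y hy r hr _ _ _ (fun σ h => (hB.hasDerivAt_deriv σ h).ofReal_comp)
    (by simp [hA₂', show A₂ σ₁ = 0 by simp [hA₂, hAσ₁]]) fun σ h => ?_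
  rw [Complex.norm_real]
  have hw : (σ * r + y)⁻¹ * (σ₀ * r) ≤ 1 := by
    rw [inv_mul_le_one₀ (hden σ h)]
    nlinarith [h.1]
  obtain ⟨h₀, h₁, h₂⟩ := hL σ h
  exact (norm_deriv₂_mul_inv_affine_le hσ₀ hr₀ hr (inv_nonneg.2 (hden σ h).le) hw h₀ h₁
    h₂).trans (le_max_right _ _)

end SquarePhase

/-! ### Complex Gaussians -/

theorem mul_ofReal_mul_I_cpow {w : ℂ} (hw : 0 < w.re) {t : ℝ} (ht : 0 < t) (a : ℂ) :
    (w * (t * I)) ^ a = w ^ a * (I ^ a * (t : ℂ) ^ a) := by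
  have hw0 : w ≠ 0 := fun h => by simp [h] at hw
  have ht0 : (t : ℂ) ≠ 0 := by exact_mod_cast ht.ne'
  have harg : arg w + arg (t * I) ∈ Set.Ioc (-π) π := by
    have h := abs_lt.1 (Complex.abs_arg_lt_pi_div_two_iff.2 (.inl hw))
    rw [Complex.arg_real_mul I ht, arg_I]
    constructor <;> linarith [h.1, h.2, Real.pi_pos]
  have hlog : Complex.log (t * I) = Complex.log I + Complex.log t := by
    rw [Complex.log_ofReal_mul ht I_ne_zero, ofReal_log ht.le, add_comm]
  have htI : (t * I : ℂ) ≠ 0 := mul_ne_zero ht0 I_ne_zero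
  rw [cpow_def_of_ne_zero (mul_ne_zero hw0 htI), cpow_def_of_ne_zero hw0,
    cpow_def_of_ne_zero I_ne_zero, cpow_def_of_ne_zero ht0,
    (Complex.log_mul_eq_add_log_iff hw0 htI).2 harg, hlog, ← Complex.exp_add, ← Complex.exp_add]
  ring_nf

section GaussianKernel

theorem norm_cexp_gaussian {V : Type*} [NormedAddCommGroup V] [InnerProductSpace ℝ V] (s : ℝ)
    (x η : V) :
    ‖cexp (-(1 + 2 * π * s * I) * ‖η‖ ^ 2 + 2 * π * I * ⟪x, η⟫)‖ = rexp (-1 * ‖η‖ ^ 2) := by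
  rw [Complex.norm_exp, show (-(1 + 2 * π * s * I) * ‖η‖ ^ 2 + 2 * π * I * ⟪x, η⟫ : ℂ) =
    ((-1 * ‖η‖ ^ 2 : ℝ) : ℂ) + ((-(2 * π * s * ‖η‖ ^ 2) + 2 * π * ⟪x, η⟫ : ℝ) : ℂ) * I by
      push_cast; ring]
  simp only [add_re, ofReal_re, re_ofReal_mul, I_re, mul_zero, add_zero]

variable {V : Type*} [NormedAddCommGroup V] [InnerProductSpace ℝ V] [FiniteDimensional ℝ V]
  [MeasurableSpace V] [BorelSpace V]

/-- Inverse Fourier transform of the complex Gaussian `e^{-(1+2πis)|η|²}`. -/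
def gaussianKernel (s : ℝ) (x : V) : ℂ :=
  ∫ η : V, cexp (-(1 + 2 * π * s * I) * ‖η‖ ^ 2 + 2 * π * I * ⟪x, η⟫)

theorem integrable_rexp_neg_mul_sq_norm {c : ℝ} (hc : 0 < c) :
    Integrable fun z : V => rexp (-c * ‖z‖ ^ 2) := by
  have := (GaussianFourier.integrable_cexp_neg_mul_sq_norm_add (V := V) (b := c)
    (by rwa [ofReal_re]) 0 0).norm
  refine this.congr (ae_of_all _ fun z => ?_)
  simp only [zero_mul, add_zero, Complex.norm_exp]
  rw [show (-(c : ℂ) * ‖z‖ ^ 2) = ((-c * ‖z‖ ^ 2 : ℝ) : ℂ) by push_cast; ring, ofReal_re]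

theorem norm_gaussianKernel_le (s : ℝ) (x : V) :
    ‖gaussianKernel s x‖ ≤ ∫ η : V, rexp (-1 * ‖η‖ ^ 2) := by
  refine (norm_integral_le_integral_norm _).trans_eq ?_
  simp only [norm_cexp_gaussian]

theorem gaussianKernel_eq_cpow_mul_cexp (s : ℝ) (x : V) :
    gaussianKernel s x = (π / (1 + 2 * π * s * I)) ^ (Module.finrank ℝ V / 2 : ℂ) *
      cexp (-π ^ 2 * ‖x‖ ^ 2 / (1 + 2 * π * s * I)) := by
  have hre : (1 + 2 * π * s * I : ℂ).re = 1 := by simp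
  simp only [gaussianKernel]
  generalize (1 + 2 * π * s * I : ℂ) = b at hre
  have hb0 : b ≠ 0 := fun h => by simp [h] at hre
  rw [GaussianFourier.integral_cexp_neg_mul_sq_norm_add (by rw [hre]; norm_num) (2 * π * I) x]
  congr 2
  field_simp
  linear_combination (4 * ‖x‖ ^ 2 : ℂ) * I_sq

theorem integral_gaussian_mul_schrodinger_eq_cpow_mul_cexp {s : ℝ} (hs : 0 < s) (x : V) :
    ∫ z : V, cexp (-π ^ 2 * ‖z‖ ^ 2) * cexp ((π / (2 * s) * ‖x - z‖ ^ 2 : ℝ) * I) =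
      (π / (π ^ 2 - π / (2 * s) * I)) ^ (Module.finrank ℝ V / 2 : ℂ) *
        cexp (-π ^ 2 * ‖x‖ ^ 2 / (1 + 2 * π * s * I)) := by
  have hs0 : (s : ℂ) ≠ 0 := by exact_mod_cast hs.ne'
  have hπ : (π : ℂ) ≠ 0 := by exact_mod_cast Real.pi_ne_zero
  set B : ℂ := π ^ 2 - π / (2 * s) * I with hB
  have hre : B.re = π ^ 2 := by
    rw [hB, show (π ^ 2 - π / (2 * s) * I : ℂ) =
      ((π ^ 2 : ℝ) : ℂ) + ((-(π / (2 * s)) : ℝ) : ℂ) * I by push_cast; ring]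
    simp only [add_re, ofReal_re, re_ofReal_mul, I_re, mul_zero, add_zero]
  have hrepos : 0 < B.re := by rw [hre]; positivity
  have hB0 : B ≠ 0 := fun h => by simp [h] at hrepos
  have hsquare : ∀ z : V,
      cexp (-π ^ 2 * ‖z‖ ^ 2) * cexp ((π / (2 * s) * ‖x - z‖ ^ 2 : ℝ) * I) =
        cexp (π / (2 * s) * I * ‖x‖ ^ 2) *
          cexp (-B * ‖z‖ ^ 2 + -(π / s) * I * ⟪x, z⟫) := fun z => by
    rw [← Complex.exp_add, ← Complex.exp_add, norm_sub_sq_real, hB]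
    push_cast
    ring_nf
  simp_rw [hsquare]
  rw [integral_const_mul, GaussianFourier.integral_cexp_neg_mul_sq_norm_add hrepos,
    mul_left_comm, ← Complex.exp_add]
  congr 2
  have hBb : B = -(π / (2 * s) * I) * (1 + 2 * π * s * I) := by
    rw [hB]
    field_simp
    linear_combination (2 * π * s : ℂ) * I_sq
  set b : ℂ := 1 + 2 * π * s * I with hb
  have hb0 : b ≠ 0 := right_ne_zero_of_mul (hBb ▸ hB0)
  rw [hBb]
  field_simp
  rw [hb]
  linear_combination (8 * π * s * ‖x‖ ^ 2 : ℂ) * I_sq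

theorem gaussianKernel_eq_integral {s : ℝ} (hs : 0 < s) (x : V) :
    gaussianKernel s x =
      I ^ (-(Module.finrank ℝ V / 2 : ℂ)) *
        (((2 / π) ^ (-(Module.finrank ℝ V / 2 : ℝ)) *
          s ^ (-(Module.finrank ℝ V / 2 : ℝ)) : ℝ) : ℂ) *
      ∫ z : V, cexp (-π ^ 2 * ‖z‖ ^ 2) * cexp ((π / (2 * s) * ‖x - z‖ ^ 2 : ℝ) * I) := by
  have hπ : (π : ℂ) ≠ 0 := by exact_mod_cast Real.pi_ne_zero
  have hs0 : (s : ℂ) ≠ 0 := by exact_mod_cast hs.ne'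
  rw [gaussianKernel_eq_cpow_mul_cexp, integral_gaussian_mul_schrodinger_eq_cpow_mul_cexp hs]
  set b : ℂ := 1 + 2 * π * s * I with hb
  have hbre : b.re = 1 := by simp [hb]
  have hb0 : b ≠ 0 := fun h => by simp [h] at hbre
  have hre : 0 < (π / b).re := by
    rw [div_eq_mul_inv, re_ofReal_mul, inv_re, hbre]
    have := normSq_pos.2 hb0
    positivity
  have ht : 0 < 2 / π * s := by positivity
  have hfactor : π / (π ^ 2 - π / (2 * s) * I) = π / b * ((2 / π * s : ℝ) * I) := by
    have hBb : (π ^ 2 - π / (2 * s) * I : ℂ) = -(π / (2 * s) * I) * b := by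
      rw [hb]
      field_simp
      linear_combination (2 * π * s : ℂ) * I_sq
    rw [hBb]
    push_cast
    field_simp
    linear_combination (-1 : ℂ) * I_sq
  have hI : I ^ (Module.finrank ℝ V / 2 : ℂ) ≠ 0 :=
    (Complex.cpow_ne_zero_iff).2 (.inl I_ne_zero)
  have : ((2 / π * s : ℝ) : ℂ) ^ (Module.finrank ℝ V / 2 : ℂ) ≠ 0 :=
    (Complex.cpow_ne_zero_iff).2 (.inl (by exact_mod_cast ht.ne'))
  rw [hfactor, mul_ofReal_mul_I_cpow hre ht, ← Real.mul_rpow (by positivity) hs.le,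
    ofReal_cpow ht.le, ofReal_neg, ofReal_div, ofReal_natCast, ofReal_ofNat, cpow_neg, cpow_neg]
  field_simp

theorem integral_gaussian_mul_comp_sq (F : SchwartzMap ℝ ℂ) (x : V) :
    ∫ η : V, cexp (-‖η‖ ^ 2 + 2 * π * I * ⟪x, η⟫) * F (‖η‖ ^ 2) =
      ∫ s, 𝓕⁻ F s * gaussianKernel s x := by
  have hinv : ∀ u, F u = ∫ s, cexp ((-(2 * π * s * u) : ℝ) * I) * 𝓕⁻ F s := fun u => by
    have h : 𝓕 (𝓕⁻ F) = F := FourierTransform.fourier_fourierInv_eq F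
    conv_lhs => rw [← h, SchwartzMap.fourier_coe, Real.fourier_eq']
    refine integral_congr_ae (ae_of_all _ fun s => ?_)
    simp only [smul_eq_mul, RCLike.inner_apply, conj_trivial]
    push_cast
    ring_nf
  have hgauss : ∀ η : V, cexp (-‖η‖ ^ 2 + 2 * π * I * ⟪x, η⟫) * F (‖η‖ ^ 2) =
      ∫ s, 𝓕⁻ F s * cexp (-(1 + 2 * π * s * I) * ‖η‖ ^ 2 + 2 * π * I * ⟪x, η⟫) := fun η => by
    rw [hinv, ← integral_const_mul]
    refine integral_congr_ae (ae_of_all _ fun s => ?_)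
    simp only
    rw [← mul_assoc, ← Complex.exp_add, mul_comm]
    push_cast
    ring_nf
  simp_rw [hgauss]
  rw [integral_integral_swap]
  · simp_rw [integral_const_mul]
    rfl
  · have hprod := ((integrable_rexp_neg_mul_sq_norm (V := V) one_pos).ofReal (𝕜 := ℂ)).mul_prod
      ((𝓕⁻ F).integrable (μ := volume))
    refine hprod.mono ?_ (ae_of_all _ fun z => ?_)
    · have := (𝓕⁻ F).continuous
      apply Continuous.aestronglyMeasurable
      simp only [Function.uncurry_def]
      fun_prop
    · simp only [Function.uncurry, norm_mul, norm_cexp_gaussian, RCLike.norm_ofReal,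
        Real.abs_exp]
      rw [mul_comm]

/-- The Gaussian average over `z` is taken last, so only the scalar `Y = ‖x - z‖` remains. -/
theorem exists_norm_integral_mul_gaussianKernel_le (V : Type*) [NormedAddCommGroup V]
    [InnerProductSpace ℝ V] [FiniteDimensional ℝ V] [MeasurableSpace V] [BorelSpace V] :
    ∃ C > 0, ∀ (G : ℝ → ℂ) (M : ℝ), (∀ s ≤ 0, G s = 0) →
      Integrable (fun s => ((s ^ (-(Module.finrank ℝ V / 2 : ℝ)) : ℝ) : ℂ) * G s) →
      (∀ Y ≥ 0, ‖∫ s, ((s ^ (-(Module.finrank ℝ V / 2 : ℝ)) : ℝ) : ℂ) * G s *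
        cexp ((π / (2 * s) * Y ^ 2 : ℝ) * I)‖ ≤ M) →
      ∀ x : V, ‖∫ s, G s * gaussianKernel s x‖ ≤ C * M := by
  set a : ℝ := -(Module.finrank ℝ V / 2 : ℝ)
  set c₀ : ℂ := I ^ (-(Module.finrank ℝ V / 2 : ℂ)) * (((2 / π) ^ a : ℝ) : ℂ)
  have hint : Integrable fun z : V => rexp (-π ^ 2 * ‖z‖ ^ 2) :=
    integrable_rexp_neg_mul_sq_norm (by positivity)
  refine ⟨‖c₀‖ * ∫ z : V, rexp (-π ^ 2 * ‖z‖ ^ 2), ?_, fun G M hG0 hG hM x => ?_⟩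
  · have hc₀ : c₀ ≠ 0 := mul_ne_zero ((Complex.cpow_ne_zero_iff).2 (.inl I_ne_zero))
      (by exact_mod_cast (Real.rpow_pos_of_pos (by positivity) _).ne')
    exact mul_pos (norm_pos_iff.2 hc₀) (integral_exp_pos hint)
  have hkernel : ∀ s, G s * gaussianKernel s x = c₀ * ∫ z : V, ((s ^ a : ℝ) : ℂ) * G s *
      (cexp (-π ^ 2 * ‖z‖ ^ 2) * cexp ((π / (2 * s) * ‖x - z‖ ^ 2 : ℝ) * I)) := fun s => by
    rw [integral_const_mul]
    rcases le_or_gt s 0 with h | h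
    · simp [hG0 s h]
    · rw [gaussianKernel_eq_integral h, ofReal_mul]
      ring
  have hswap : Integrable (Function.uncurry fun (s : ℝ) (z : V) => ((s ^ a : ℝ) : ℂ) * G s *
      (cexp (-π ^ 2 * ‖z‖ ^ 2) * cexp ((π / (2 * s) * ‖x - z‖ ^ 2 : ℝ) * I)))
      (volume.prod volume) := by
    have hmeas : AEStronglyMeasurable (fun z : ℝ × V =>
        cexp ((π / (2 * z.1) * ‖x - z.2‖ ^ 2 : ℝ) * I)) (volume.prod volume) := by
      apply Measurable.aestronglyMeasurable
      fun_prop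
    refine ((hG.mul_prod (hint.ofReal (𝕜 := ℂ))).mul_bdd (c := 1) hmeas
      (ae_of_all _ fun z => (norm_exp_ofReal_mul_I _).le)).congr (ae_of_all _ fun z => ?_)
    simp [Function.uncurry, mul_assoc]
  simp_rw [hkernel]
  rw [integral_const_mul, integral_integral_swap hswap, norm_mul, mul_assoc, ← integral_mul_const]
  gcongr
  refine norm_integral_le_of_norm_le (hint.mul_const M) (ae_of_all _ fun z => ?_)
  simp_rw [mul_left_comm _ (cexp (-π ^ 2 * ‖z‖ ^ 2))]
  have hexp : cexp (-π ^ 2 * ‖z‖ ^ 2) = (rexp (-π ^ 2 * ‖z‖ ^ 2) : ℝ) := by push_cast; rfl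
  rw [integral_const_mul, norm_mul, hexp, Complex.norm_real, Real.norm_eq_abs, Real.abs_exp]
  gcongr
  exact hM _ (norm_nonneg _)

end GaussianKernel

/-! ### The resonant contribution -/

theorem exp_neg_mul_exp_add_div_eq (τ φ y r σ : ℝ) :
    cexp ((-(τ * φ) : ℝ) * I) * cexp ((2 * π * τ * (σ * r ^ 2 + y ^ 2 / σ) : ℝ) * I) =
      cexp ((-τ * φ + 4 * π * τ * y * r : ℝ) * I) *
        cexp ((2 * π * τ * squarePhase y r σ : ℝ) * I) := by
  rw [← Complex.exp_add, ← Complex.exp_add, squarePhase]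
  push_cast
  ring_nf

theorem exists_norm_integral_integral_exp_le {σ₀ σ₁ r₀ r₁ : ℝ} (hσ₀ : 0 < σ₀) (hσ : σ₀ ≤ σ₁)
    (hr₀ : 0 < r₀) (hr : r₀ ≤ r₁) {A : ℝ → ℝ} (hA : ContDiff ℝ ∞ A) (hAσ₀ : A σ₀ = 0)
    (hAσ₁ : A σ₁ = 0) (hA'σ₁ : deriv A σ₁ = 0) {α : ℝ → ℝ} (hα : ContDiff ℝ ∞ α)
    (hαr₁ : α r₁ = 0) :
    ∃ C > 0, ∀ (φ φ' φ'' : ℝ → ℝ) (κ : ℝ), 0 < κ → HasDeriv₂On φ φ' φ'' (Set.Icc r₀ r₁) →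
      (∀ r ∈ Set.Icc r₀ r₁, κ ≤ |φ'' r|) → ∀ τ ≥ 1, ∀ y ≥ 0,
      ‖∫ r in r₀..r₁, (cexp ((-(τ * φ r) : ℝ) * I) * α r) * ∫ σ in σ₀..σ₁,
        cexp ((2 * π * τ * (σ * r ^ 2 + y ^ 2 / σ) : ℝ) * I) * A σ‖ ≤ C / (τ * √κ) := by
  obtain ⟨C, hC₀, hC⟩ := exists_norm_integral_exp_squarePhase_mul_contDiff_le hσ₀ hσ hr₀ hA hAσ₁
  obtain ⟨C', hC'₀, hC'⟩ :=
    exists_norm_deriv_integral_exp_squarePhase_mul_le hσ₀ hσ hr₀ hA hAσ₀ hAσ₁ hA'σ₁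
  obtain ⟨L, hL⟩ := exists_forall_mem_Icc_abs_le α (a := r₀) (b := r₁) hα
  have hL₀ : 0 ≤ L := (abs_nonneg _).trans (hL r₀ ⟨le_rfl, hr⟩).1
  obtain ⟨D, hD, hLD⟩ : ∃ D > 0, L * (C + C') ≤ D :=
    ⟨L * (C + C') + 1, by positivity, by linarith⟩
  have hr₀₁ : 0 < r₁ - r₀ + 1 := by linarith
  refine ⟨8 * D * (r₁ - r₀ + 1), by positivity, fun φ φ' φ'' κ hκ hφ hφκ τ hτ y hy => ?_⟩
  have hτ₀ : 0 < τ := by linarith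
  have hT : τ ≤ 2 * π * τ := le_mul_of_one_le_left hτ₀.le (by linarith [Real.pi_gt_three])
  set J : ℝ → ℂ := fun r => ∫ σ in σ₀..σ₁, cexp ((2 * π * τ * squarePhase y r σ : ℝ) * I) * A σ
  choose! J' hJ' hJ'le using hC' (2 * π * τ) (hτ.trans hT) y hy
  have hamplitude : ∀ r ∈ Set.Icc r₀ r₁,
      ‖((deriv α r : ℝ) : ℂ) * J r + α r * J' r‖ ≤ D / √τ := fun r h => by
    obtain ⟨hα₀, hα₁, -⟩ := hL r h
    calc _ ≤ |deriv α r| * ‖J r‖ + |α r| * ‖J' r‖ := by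
          refine (norm_add_le _ _).trans_eq ?_
          rw [norm_mul, norm_mul, Complex.norm_real, Complex.norm_real, Real.norm_eq_abs,
            Real.norm_eq_abs]
      _ ≤ L * (C / √(2 * π * τ)) + L * (C' / √(2 * π * τ)) := by
          gcongr
          · exact hC _ (hτ.trans hT) y hy r h.1
          · exact hJ'le r h.1
      _ = L * (C + C') / √(2 * π * τ) := by ring
      _ ≤ D / √τ := by gcongr
  have key := norm_integral_exp_mul_le_of_le_abs_deriv₂ hr (mul_pos hτ₀ hκ)
    ((hφ.const_mul (-τ)).add_const_mul_id (4 * π * τ * y))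
    (fun r h => by rw [abs_mul, abs_neg, abs_of_pos hτ₀]; gcongr; exact hφκ r h)
    (fun r h => ((hα.differentiable (by simp) r).hasDerivAt.ofReal_comp).mul (hJ' r h.1))
    hamplitude (by simp [hαr₁])
  calc _ = ‖∫ r in r₀..r₁, cexp ((-τ * φ r + 4 * π * τ * y * r : ℝ) * I) * (α r * J r)‖ := by
        refine congrArg norm (intervalIntegral.integral_congr fun r _ => ?_)
        simp only [J, ← intervalIntegral.integral_const_mul]
        refine intervalIntegral.integral_congr fun σ _ => ?_
        linear_combination (α r * A σ : ℂ) * exp_neg_mul_exp_add_div_eq τ (φ r) y r σ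
    _ ≤ 8 / √(τ * κ) * (D / √τ) * (r₁ - r₀) := key
    _ ≤ 8 / √(τ * κ) * (D / √τ) * (r₁ - r₀ + 1) := by gcongr; linarith
    _ = 8 * D * (r₁ - r₀ + 1) / (√τ * √τ * √κ) := by rw [Real.sqrt_mul hτ₀.le]; field_simp
    _ = _ := by rw [Real.mul_self_sqrt hτ₀.le]

theorem fourierInv_eq_integral_exp_mul (F : ℝ → ℂ) (s : ℝ) :
    𝓕⁻ F s = ∫ u, cexp ((2 * π * s * u : ℝ) * I) * F u := by
  simp only [Real.fourierInv_eq', smul_eq_mul, RCLike.inner_apply, conj_trivial, mul_assoc]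

theorem intervalIntegral_eq_integral_of_eq_zero {a b : ℝ} (hab : a ≤ b) {f : ℝ → ℂ}
    (hf : ∀ u ∉ Set.Icc a b, f u = 0) : ∫ u in a..b, f u = ∫ u, f u := by
  rw [intervalIntegral.integral_of_le hab, ← integral_Icc_eq_integral_Ioc,
    setIntegral_eq_integral_of_forall_compl_eq_zero hf]

theorem fourierInv_eq_integral_comp_sq {r₀ r₁ : ℝ} (hr₀ : 0 ≤ r₀) (hr : r₀ ≤ r₁) {F : ℝ → ℂ}
    (hF : Continuous F) (hF0 : ∀ u ∉ Set.Icc (r₀ ^ 2) (r₁ ^ 2), F u = 0) (s : ℝ) :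
    𝓕⁻ F s = ∫ r in r₀..r₁, cexp ((2 * π * s * r ^ 2 : ℝ) * I) * (F (r ^ 2) * (2 * r)) := by
  rw [fourierInv_eq_integral_exp_mul, ← intervalIntegral_eq_integral_of_eq_zero
    (pow_le_pow_left₀ hr₀ hr 2) fun u hu => by rw [hF0 u hu, mul_zero]]
  refine (intervalIntegral.integral_deriv_smul_comp' (f := fun r : ℝ => r ^ 2)
    (f' := fun r => 2 * r) (fun r _ => by simpa using hasDerivAt_pow 2 r) (by fun_prop)
    (by fun_prop)).symm.trans (intervalIntegral.integral_congr fun r _ => ?_)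
  simp only [Function.comp_apply, real_smul]
  push_cast
  ring

theorem fourierInv_mul_exp_eq_integral {r₀ r₁ : ℝ} (hr₀ : 0 ≤ r₀) (hr : r₀ ≤ r₁) {F : ℝ → ℂ}
    (hF : Continuous F) (hF0 : ∀ u ∉ Set.Icc (r₀ ^ 2) (r₁ ^ 2), F u = 0) {τ σ : ℝ} (hτ : τ ≠ 0)
    (hσ : σ ≠ 0) (y : ℝ) :
    𝓕⁻ F (τ * σ) * cexp ((π / (2 * (τ * σ)) * (2 * τ * y) ^ 2 : ℝ) * I) =
      ∫ r in r₀..r₁, (F (r ^ 2) * (2 * r)) *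
        cexp ((2 * π * τ * (σ * r ^ 2 + y ^ 2 / σ) : ℝ) * I) := by
  rw [fourierInv_eq_integral_comp_sq hr₀ hr hF hF0, ← intervalIntegral.integral_mul_const]
  refine intervalIntegral.integral_congr fun r _ => ?_
  have hphase : 2 * π * τ * (σ * r ^ 2 + y ^ 2 / σ) =
      2 * π * (τ * σ) * r ^ 2 + π / (2 * (τ * σ)) * (2 * τ * y) ^ 2 := by field_simp
  simp only [hphase, ofReal_add, add_mul, Complex.exp_add]
  ring

theorem integral_rpow_mul_fourierInv_mul_exp_eq {r₀ r₁ : ℝ} (hr₀ : 0 ≤ r₀) (hr : r₀ ≤ r₁)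
    {F : ℝ → ℂ} (hF : Continuous F) (hF0 : ∀ u ∉ Set.Icc (r₀ ^ 2) (r₁ ^ 2), F u = 0)
    {σ₀ σ₁ τ : ℝ} (hσ₀ : 0 < σ₀) (hσ : σ₀ ≤ σ₁) (hτ : 0 < τ) {ψ : ℝ → ℝ} (hψ : Continuous ψ)
    (hψ0 : ∀ σ ∉ Set.Icc σ₀ σ₁, ψ σ = 0) (a y : ℝ) :
    ∫ s, ((s ^ a : ℝ) : ℂ) * (ψ (s / τ) * 𝓕⁻ F s) *
        cexp ((π / (2 * s) * (2 * τ * y) ^ 2 : ℝ) * I) =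
      (τ * τ ^ a : ℝ) * ∫ r in r₀..r₁, (F (r ^ 2) * (2 * r)) * ∫ σ in σ₀..σ₁,
        cexp ((2 * π * τ * (σ * r ^ 2 + y ^ 2 / σ) : ℝ) * I) * (σ ^ a * ψ σ : ℝ) := by
  set H : ℝ → ℂ := fun s => ((s ^ a : ℝ) : ℂ) * (ψ (s / τ) * 𝓕⁻ F s) *
      cexp ((π / (2 * s) * (2 * τ * y) ^ 2 : ℝ) * I) with hH
  have hscale : ∫ s, H s = τ * ∫ σ in σ₀..σ₁, H (τ * σ) := by
    rw [intervalIntegral_eq_integral_of_eq_zero hσ fun σ h => by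
      simp [hH, mul_div_cancel_left₀ σ hτ.ne', hψ0 σ h], Measure.integral_comp_mul_left,
      abs_of_pos (by positivity), real_smul, ← mul_assoc, ← ofReal_mul, mul_inv_cancel₀ hτ.ne',
      ofReal_one, one_mul]
  have hH_eq : ∀ σ ∈ Set.uIcc σ₀ σ₁, H (τ * σ) = ∫ r in r₀..r₁, ((τ ^ a : ℝ) : ℂ) *
      ((F (r ^ 2) * (2 * r)) * (cexp ((2 * π * τ * (σ * r ^ 2 + y ^ 2 / σ) : ℝ) * I) *
        (σ ^ a * ψ σ : ℝ))) := fun σ h => by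
    rw [Set.uIcc_of_le hσ] at h
    have hσ : 0 < σ := hσ₀.trans_le h.1
    calc H (τ * σ) = (τ ^ a * (σ ^ a * ψ σ) : ℝ) * (𝓕⁻ F (τ * σ) *
          cexp ((π / (2 * (τ * σ)) * (2 * τ * y) ^ 2 : ℝ) * I)) := by
          simp only [hH, mul_div_cancel_left₀ σ hτ.ne', Real.mul_rpow hτ.le hσ.le, ofReal_mul]
          ring
      _ = _ := by
          rw [fourierInv_mul_exp_eq_integral hr₀ hr hF hF0 hτ.ne' hσ.ne',
            ← intervalIntegral.integral_const_mul]
          refine intervalIntegral.integral_congr fun r _ => ?_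
          push_cast
          ring
  rw [hscale, intervalIntegral.integral_congr hH_eq, intervalIntegral_intervalIntegral_swap]
  · simp only [intervalIntegral.integral_const_mul, ofReal_mul, mul_assoc]
  · rw [Set.uIoc_of_le hσ, Set.uIoc_of_le hr]
    refine (ContinuousOn.integrableOn_compact (isCompact_Icc.prod isCompact_Icc) ?_).mono_set
      (Set.prod_mono Set.Ioc_subset_Icc_self Set.Ioc_subset_Icc_self)
    have hne : ∀ z ∈ Set.Icc σ₀ σ₁ ×ˢ Set.Icc r₀ r₁, z.1 ≠ 0 := fun z hz =>
      (hσ₀.trans_le hz.1.1).ne'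
    have hamp : Continuous fun z : ℝ × ℝ => F (z.2 ^ 2) * (2 * z.2) := by fun_prop
    have hphase : ContinuousOn (fun z : ℝ × ℝ => 2 * π * τ * (z.1 * z.2 ^ 2 + y ^ 2 / z.1))
        (Set.Icc σ₀ σ₁ ×ˢ Set.Icc r₀ r₁) := by fun_prop (disch := exact hne)
    have hweight : ContinuousOn (fun z : ℝ × ℝ => z.1 ^ a * ψ z.1)
        (Set.Icc σ₀ σ₁ ×ˢ Set.Icc r₀ r₁) :=
      (continuousOn_fst.rpow_const fun z hz => .inl (hne z hz)).mul (by fun_prop)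
    exact continuousOn_const.mul (hamp.continuousOn.mul
      (((continuous_ofReal.comp_continuousOn hphase).mul continuousOn_const).cexp.mul
        (continuous_ofReal.comp_continuousOn hweight)))

theorem contDiff_of_contDiffOn_Ioi {G : Type*} [NormedAddCommGroup G] [NormedSpace ℝ G]
    {f : ℝ → G} {δ : ℝ} (hδ : 0 < δ) (hf : ContDiffOn ℝ ∞ f (Set.Ioi 0))
    (hf0 : ∀ u < δ, f u = 0) : ContDiff ℝ ∞ f := by
  refine contDiff_iff_contDiffAt.2 fun u => ?_
  rcases lt_or_ge u δ with h | h
  · exact (contDiffAt_const (c := (0 : G))).congr_of_eventuallyEq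
      (Filter.eventually_of_mem (isOpen_Iio.mem_nhds h) hf0)
  · exact hf.contDiffAt (isOpen_Ioi.mem_nhds (hδ.trans_le h))

theorem contDiff_rpow_mul {a b : ℝ} (ha : 0 < a) {ψ : ℝ → ℝ} (hψ : ContDiff ℝ ∞ ψ)
    (hψ0 : ∀ σ ∉ Set.Icc a b, ψ σ = 0) (e : ℝ) : ContDiff ℝ ∞ fun σ => σ ^ e * ψ σ :=
  contDiff_of_contDiffOn_Ioi ha
    ((contDiffOn_id.rpow_const_of_ne fun _ hσ => ne_of_gt hσ).mul hψ.contDiffOn)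
    fun σ hσ => by rw [hψ0 σ fun h => hσ.not_ge h.1, mul_zero]

theorem integrable_rpow_mul_fourierInv {a b : ℝ} (ha : 0 < a) {ψ : ℝ → ℝ} (hψ : ContDiff ℝ ∞ ψ)
    (hψ0 : ∀ σ ∉ Set.Icc a b, ψ σ = 0) {τ : ℝ} (hτ : 0 < τ) (F : SchwartzMap ℝ ℂ) (e : ℝ) :
    Integrable fun s => ((s ^ e : ℝ) : ℂ) * (ψ (s / τ) * 𝓕⁻ F s) := by
  have hψτ0 : ∀ s ∉ Set.Icc (a * τ) (b * τ), ψ (s / τ) = 0 := fun s hs =>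
    hψ0 _ fun h => hs ⟨(le_div_iff₀ hτ).1 h.1, (div_le_iff₀ hτ).1 h.2⟩
  have hweight := (contDiff_rpow_mul (mul_pos ha hτ) (hψ.comp (contDiff_id.div_const τ)) hψτ0
    e).continuous
  refine (((continuous_ofReal.comp hweight).mul (𝓕⁻ F).continuous).integrable_of_hasCompactSupport
    (.intro (isCompact_Icc (a := a * τ) (b := b * τ)) fun s hs => ?_)).congr
    (ae_of_all _ fun s => ?_)
  · simp [hψτ0 s hs]
  · simp [mul_assoc]

theorem exists_norm_integral_resonant_le (V : Type*) [NormedAddCommGroup V]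
    [InnerProductSpace ℝ V] [FiniteDimensional ℝ V] [MeasurableSpace V] [BorelSpace V] {a b : ℝ}
    (ha : 0 < a) (hab : a ≤ b) {ψ : ℝ → ℝ} (hψ : ContDiff ℝ ∞ ψ)
    (hψ0 : ∀ σ ∉ Set.Icc a b, ψ σ = 0) {r₀ r₁ : ℝ} (hr₀ : 0 < r₀) (hr : r₀ ≤ r₁) {α : ℝ → ℝ}
    (hα : ContDiff ℝ ∞ α) (hαr₁ : α r₁ = 0) :
    ∃ C > 0, ∀ (φ φ' φ'' : ℝ → ℝ) (κ : ℝ), 0 < κ → HasDeriv₂On φ φ' φ'' (Set.Icc r₀ r₁) →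
      (∀ r ∈ Set.Icc r₀ r₁, κ ≤ |φ'' r|) → ∀ τ ≥ 1, ∀ F : SchwartzMap ℝ ℂ,
      (∀ u ∉ Set.Icc (r₀ ^ 2) (r₁ ^ 2), F u = 0) →
      (∀ r ∈ Set.Icc r₀ r₁, F (r ^ 2) * (2 * r) = cexp ((-(τ * φ r) : ℝ) * I) * α r) →
      ∀ x : V, ‖∫ s, (ψ (s / τ) * 𝓕⁻ F s) * gaussianKernel s x‖ ≤
        C * ((√κ)⁻¹ * τ ^ (-(Module.finrank ℝ V / 2 : ℝ))) := by
  set e : ℝ := -(Module.finrank ℝ V / 2 : ℝ)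
  have hA0 : ∀ σ ∉ Set.Icc a b, σ ^ e * ψ σ = 0 := fun σ h => by rw [hψ0 σ h, mul_zero]
  have hA'0 : deriv (fun σ => σ ^ e * ψ σ) (b + 1) = 0 := by
    have : (fun σ => σ ^ e * ψ σ) =ᶠ[nhds (b + 1)] fun _ => 0 :=
      Filter.eventually_of_mem (isClosed_Icc.isOpen_compl.mem_nhds fun h => by linarith [h.2]) hA0
    rw [this.deriv_eq, deriv_const]
  obtain ⟨C, hC₀, hC⟩ := exists_norm_integral_integral_exp_le (half_pos ha)
    (by linarith : a / 2 ≤ b + 1) hr₀ hr (contDiff_rpow_mul ha hψ hψ0 e)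
    (hA0 _ fun h => by linarith [h.1]) (hA0 _ fun h => by linarith [h.2]) hA'0 hα hαr₁
  obtain ⟨C', hC'₀, hC'⟩ := exists_norm_integral_mul_gaussianKernel_le V
  refine ⟨C' * C, by positivity, fun φ φ' φ'' κ hκ hφ hφκ τ hτ F hF0 hF x => ?_⟩
  have hτ₀ : 0 < τ := by linarith
  rw [mul_assoc]
  refine hC' _ _ (fun s hs => ?_) (integrable_rpow_mul_fourierInv ha hψ hψ0 hτ₀ F e)
    (fun Y hY => ?_) x
  · rw [hψ0 _ fun h => (div_nonpos_of_nonpos_of_nonneg hs hτ₀.le).not_gt (ha.trans_le h.1),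
      ofReal_zero, zero_mul]
  have hψ0' : ∀ σ ∉ Set.Icc (a / 2) (b + 1), ψ σ = 0 := fun σ h =>
    hψ0 σ fun h' => h ⟨by linarith [h'.1], by linarith [h'.2]⟩
  have hscale := integral_rpow_mul_fourierInv_mul_exp_eq hr₀.le hr F.continuous hF0 (half_pos ha)
    (by linarith) hτ₀ hψ.continuous hψ0' e (Y / (2 * τ))
  rw [mul_div_cancel₀ Y (by positivity : 2 * τ ≠ 0), ← SchwartzMap.fourierInv_coe] at hscale
  have hamplitude (J : ℝ → ℂ) : ∫ r in r₀..r₁, (F (r ^ 2) * (2 * r)) * J r =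
      ∫ r in r₀..r₁, (cexp ((-(τ * φ r) : ℝ) * I) * α r) * J r :=
    intervalIntegral.integral_congr fun r h =>
      congrArg (· * J r) (hF r (by rwa [Set.uIcc_of_le hr] at h))
  rw [hscale, hamplitude, norm_mul, Complex.norm_real, Real.norm_of_nonneg (by positivity)]
  calc _ ≤ τ * τ ^ e * (C / (τ * √κ)) := by
        gcongr
        exact hC φ φ' φ'' κ hκ hφ hφκ τ hτ (Y / (2 * τ)) (by positivity)
    _ = _ := by field_simp

/-! ### The nonresonant contribution -/

section Nonresonant

variable {E : Type*} [NormedAddCommGroup E] [NormedSpace ℝ E]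

theorem isCompact_nonresonant (c C : ℝ) :
    IsCompact {z : ℝ × ℝ | 0 ≤ z.2 ∧ |z.1| + z.2 = 1 ∧ (z.1 ≤ c * z.2 ∨ C * z.2 ≤ z.1)} := by
  have hclosed :
      IsClosed {z : ℝ × ℝ | 0 ≤ z.2 ∧ |z.1| + z.2 = 1 ∧ (z.1 ≤ c * z.2 ∨ C * z.2 ≤ z.1)} := by
    simp only [Set.ofPred_and, Set.ofPred_or]
    exact (isClosed_le (by fun_prop) (by fun_prop)).inter
      ((isClosed_eq (by fun_prop) (by fun_prop)).inter
        ((isClosed_le (by fun_prop) (by fun_prop)).union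
          (isClosed_le (by fun_prop) (by fun_prop))))
  refine (isCompact_Icc.prod isCompact_Icc).of_isClosed_subset hclosed
    (fun z ⟨hb, hab, _⟩ => ⟨abs_le.1 (?_ : |z.1| ≤ 1), hb, (?_ : z.2 ≤ 1)⟩)
  · linarith
  · linarith [abs_nonneg z.1]

theorem sub_mul_ne_zero_of_nonresonant {a b c C D : ℝ} (hc : 0 < c) (hcD : c ≤ D) (hDC : D ≤ C)
    (hb : 0 ≤ b) (hab : |a| + b = 1) (h : a ≤ c / 2 * b ∨ 2 * C * b ≤ a) : a - b * D ≠ 0 := by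
  intro h0
  have ha : a = b * D := by linarith
  have hb : 0 < b := hb.lt_of_ne fun hb => by simp [ha, ← hb] at hab
  rcases h with h | h <;> nlinarith

theorem contDiffOn_linear_sub {Φ : E × ℝ → ℝ} (hΦ : ContDiffOn ℝ ∞ Φ (Set.univ ×ˢ Set.Ioi 0)) :
    ContDiffOn ℝ ∞ (fun z : (E × ℝ × ℝ) × ℝ => z.1.2.1 * z.2 - z.1.2.2 * Φ (z.1.1, z.2))
      (Set.univ ×ˢ Set.Ioi 0) := by
  have hcomp : ContDiffOn ℝ ∞ (fun z : (E × ℝ × ℝ) × ℝ => Φ (z.1.1, z.2)) (Set.univ ×ˢ Set.Ioi 0) :=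
    hΦ.comp (by fun_prop) fun z hz => ⟨trivial, hz.2⟩
  exact ContDiffOn.sub (by fun_prop) (ContDiffOn.mul (by fun_prop) hcomp)

theorem sndDeriv_linear_sub {Φ : E × ℝ → ℝ} (hΦ : ContDiffOn ℝ ∞ Φ (Set.univ ×ˢ Set.Ioi 0))
    {z : (E × ℝ × ℝ) × ℝ} (hz : 0 < z.2) :
    sndDeriv (fun z : (E × ℝ × ℝ) × ℝ => z.1.2.1 * z.2 - z.1.2.2 * Φ (z.1.1, z.2)) z =
      z.1.2.1 - z.1.2.2 * sndDeriv Φ (z.1.1, z.2) := by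
  have h := (hasDerivAt_sndDeriv (contDiffOn_linear_sub hΦ) (isOpen_univ.prod isOpen_Ioi)
    (p := z.1) (u := z.2) ⟨trivial, hz⟩).unique (((hasDerivAt_id z.2).const_mul z.1.2.1).sub
      ((hasDerivAt_sndDeriv hΦ (isOpen_univ.prod isOpen_Ioi) (p := z.1.1) (u := z.2)
        ⟨trivial, hz⟩).const_mul z.1.2.2))
  simpa using h

theorem exists_norm_integral_exp_linear_sub_le {P : Set E} (hP : IsCompact P) {Φ : E × ℝ → ℝ}
    (hΦ : ContDiffOn ℝ ∞ Φ (Set.univ ×ˢ Set.Ioi 0)) {u₀ u₁ : ℝ} (hu₀ : 0 < u₀) (hu : u₀ ≤ u₁)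
    {c C : ℝ} (hc : 0 < c) (hcΦ : ∀ p ∈ P, ∀ u ∈ Set.Icc (u₀ / 2) (2 * u₁),
      c ≤ sndDeriv Φ (p, u) ∧ sndDeriv Φ (p, u) ≤ C) {q : ℝ → ℝ} (hq : ContDiff ℝ ∞ q)
    (hq0 : ∀ u ∉ Set.Icc u₀ u₁, q u = 0) (N : ℕ) :
    ∃ M, ∀ p ∈ P, ∀ a b : ℝ, 0 ≤ b → 0 < |a| + b → (a ≤ c / 2 * b ∨ 2 * C * b ≤ a) →
      ‖∫ u, cexp ((a * u - b * Φ (p, u) : ℝ) * I) * q u‖ ≤ M * (|a| + b)⁻¹ ^ N := by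
  set θ : (E × ℝ × ℝ) × ℝ → ℝ := fun z => z.1.2.1 * z.2 - z.1.2.2 * Φ (z.1.1, z.2) with hθ
  have hθU : ContDiffOn ℝ ∞ θ (Set.univ ×ˢ Set.Ioi 0) := contDiffOn_linear_sub hΦ
  have hU : IsOpen (Set.univ ×ˢ Set.Ioi 0 : Set ((E × ℝ × ℝ) × ℝ)) := isOpen_univ.prod isOpen_Ioi
  have hsubset : (P ×ˢ {z : ℝ × ℝ | 0 ≤ z.2 ∧ |z.1| + z.2 = 1 ∧
      (z.1 ≤ c / 2 * z.2 ∨ 2 * C * z.2 ≤ z.1)}) ×ˢ Set.Icc (u₀ / 2) (2 * u₁) ⊆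
      (Set.univ ×ˢ Set.Ioi 0) ∩ sndDeriv θ ⁻¹' {0}ᶜ := by
    rintro ⟨⟨p, a, b⟩, u⟩ ⟨⟨hp, hb, hab, h⟩, hu⟩
    have hu' : 0 < u := (half_pos hu₀).trans_le hu.1
    refine ⟨⟨trivial, hu'⟩, ?_⟩
    rw [Set.mem_preimage, hθ, sndDeriv_linear_sub hΦ hu']
    exact sub_mul_ne_zero_of_nonresonant hc (hcΦ p hp u hu).1 (hcΦ p hp u hu).2 hb hab h
  obtain ⟨M, hM⟩ := exists_norm_integral_exp_le_pow
    (hP.prod (isCompact_nonresonant (c / 2) (2 * C))) (a := u₀ / 2) (b := 2 * u₁) (by linarith)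
    (isClosed_Icc (a := u₀) (b := u₁))
    (fun h => by linarith [h.1]) (fun h => by linarith [h.2])
    ((contDiffOn_sndDeriv hθU hU).continuousOn.isOpen_inter_preimage hU isOpen_compl_singleton)
    hsubset (hθU.mono Set.inter_subset_left) (fun z hz => hz.2) N (fun z => q z.2)
    (by fun_prop) (fun _ u hu => hq0 u hu)
  refine ⟨M, fun p hp a b hb hT h => ?_⟩
  set T := |a| + b
  have hparam : (p, a / T, b / T) ∈ P ×ˢ {z : ℝ × ℝ | 0 ≤ z.2 ∧ |z.1| + z.2 = 1 ∧
      (z.1 ≤ c / 2 * z.2 ∨ 2 * C * z.2 ≤ z.1)} := by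
    refine ⟨hp, by positivity, ?_, h.imp (fun h => ?_) fun h => ?_⟩
    · rw [abs_div, abs_of_pos hT, ← add_div, div_self hT.ne']
    · dsimp only; rw [← mul_div_assoc]; gcongr
    · dsimp only; rw [← mul_div_assoc]; gcongr
  rw [← intervalIntegral_eq_integral_of_eq_zero (a := u₀ / 2) (b := 2 * u₁) (by linarith)
    fun u hu => by
      rw [hq0 u fun h => hu ⟨by linarith [h.1], by linarith [h.2]⟩, ofReal_zero, mul_zero]]
  convert hM _ hparam T hT using 6 with u
  simp only [hθ]
  field_simp

theorem exists_norm_fourierInv_nonresonant_le {P : Set E} (hP : IsCompact P) {Φ : E × ℝ → ℝ}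
    (hΦ : ContDiffOn ℝ ∞ Φ (Set.univ ×ˢ Set.Ioi 0)) {u₀ u₁ : ℝ} (hu₀ : 0 < u₀) (hu : u₀ ≤ u₁)
    {c C : ℝ} (hc : 0 < c) (hcΦ : ∀ p ∈ P, ∀ u ∈ Set.Icc (u₀ / 2) (2 * u₁),
      c ≤ sndDeriv Φ (p, u) ∧ sndDeriv Φ (p, u) ≤ C) {q : ℝ → ℝ} (hq : ContDiff ℝ ∞ q)
    (hq0 : ∀ u ∉ Set.Icc u₀ u₁, q u = 0) (k : ℕ) :
    ∃ M ≥ 0, ∀ p ∈ P, ∀ τ ≥ 1, ∀ s, 2 * π * s ≤ c / 2 * τ ∨ 2 * C * τ ≤ 2 * π * s →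
      ‖𝓕⁻ (fun u => cexp ((-(τ * Φ (p, u)) : ℝ) * I) * (q u : ℂ)) s‖ ≤
        M * (τ⁻¹ ^ k * (1 + s ^ 2)⁻¹) := by
  obtain ⟨M, hM⟩ := exists_norm_integral_exp_linear_sub_le hP hΦ hu₀ hu hc hcΦ hq hq0 (k + 2)
  refine ⟨|M|, abs_nonneg M, fun p hp τ hτ s hs => ?_⟩
  have hτ₀ : 0 < τ := by linarith
  have hs₀ : |s| ≤ |2 * π * s| := by
    rw [abs_mul, abs_of_pos Real.two_pi_pos]
    exact le_mul_of_one_le_left (abs_nonneg s) (by linarith [Real.pi_gt_three])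
  set T := |2 * π * s| + τ with hT
  have hT₀ : 0 < T := by positivity
  calc _ = ‖∫ u, cexp ((2 * π * s * u - τ * Φ (p, u) : ℝ) * I) * q u‖ := by
        rw [fourierInv_eq_integral_exp_mul]
        refine congrArg norm (integral_congr_ae (ae_of_all _ fun u => ?_))
        simp only [sub_eq_add_neg, ofReal_add, add_mul, Complex.exp_add, mul_assoc]
    _ ≤ M * T⁻¹ ^ (k + 2) := hM p hp _ τ hτ₀.le hT₀ hs
    _ ≤ |M| * (T⁻¹ ^ k * (T ^ 2)⁻¹) := by
        rw [pow_add, inv_pow T 2]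
        gcongr
        exact le_abs_self M
    _ ≤ |M| * (τ⁻¹ ^ k * (1 + s ^ 2)⁻¹) := by
        gcongr
        · exact le_add_of_nonneg_left (abs_nonneg _)
        · rw [hT, ← sq_abs s]
          nlinarith [abs_nonneg s]

end Nonresonant

theorem exists_contDiff_eq_one_Icc_eq_zero {l h : ℝ} (hl : 0 < l) (hlh : l < h) :
    ∃ ψ : ℝ → ℝ, ContDiff ℝ ∞ ψ ∧ (∀ σ, ψ σ ∈ Set.Icc 0 1) ∧ (∀ σ ∈ Set.Icc l h, ψ σ = 1) ∧
      ∀ σ ∉ Set.Icc (l / 2) (h + l / 2), ψ σ = 0 := by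
  let f : ContDiffBump ((l + h) / 2) := ⟨(h - l) / 2, h / 2, by linarith, by linarith⟩
  have hin : f.rIn = (h - l) / 2 := rfl
  have hout : f.rOut = h / 2 := rfl
  refine ⟨f, f.contDiff, fun σ => ⟨f.nonneg, f.le_one⟩,
    fun σ hσ => f.one_of_mem_closedBall ?_, fun σ hσ => f.zero_of_le_dist ?_⟩
  · rw [Metric.mem_closedBall, Real.dist_eq, abs_le, hin]
    constructor <;> linarith [hσ.1, hσ.2]
  · contrapose! hσ
    rw [Real.dist_eq, abs_lt, hout] at hσ
    constructor <;> linarith [hσ.1, hσ.2]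

section Radial

variable {V : Type*} [NormedAddCommGroup V] [InnerProductSpace ℝ V] [FiniteDimensional ℝ V]
  [MeasurableSpace V] [BorelSpace V]

theorem continuous_gaussianKernel (x : V) : Continuous fun s => gaussianKernel s x :=
  continuous_of_dominated (bound := fun η => rexp (-1 * ‖η‖ ^ 2))
    (fun _ => Continuous.aestronglyMeasurable (by fun_prop))
    (fun s => ae_of_all _ fun η => (norm_cexp_gaussian s x η).le)
    (integrable_rexp_neg_mul_sq_norm one_pos) (ae_of_all _ fun _ => by fun_prop)

theorem integral_fourierInv_mul_gaussianKernel_eq_add {ψ : ℝ → ℝ} (hψ : Continuous ψ)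
    (hψ01 : ∀ s, ψ s ∈ Set.Icc 0 1) (F : SchwartzMap ℝ ℂ) (x : V) :
    ∫ s, 𝓕⁻ F s * gaussianKernel s x = (∫ s, (ψ s * 𝓕⁻ F s) * gaussianKernel s x) +
      ∫ s, ((1 - ψ s : ℝ) * 𝓕⁻ F s) * gaussianKernel s x := by
  have hint (w : ℝ → ℝ) (hw : Continuous w) (hw1 : ∀ s, |w s| ≤ 1) :
      Integrable fun s => (w s * 𝓕⁻ F s) * gaussianKernel s x := by
    refine ((𝓕⁻ F).integrable.bdd_mul (c := 1)
      (continuous_ofReal.comp hw).aestronglyMeasurable (ae_of_all _ fun s => ?_)).mul_bdd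
        (continuous_gaussianKernel x).aestronglyMeasurable
        (ae_of_all _ fun s => norm_gaussianKernel_le s x)
    exact (Complex.norm_real _).trans_le (hw1 s)
  rw [← integral_add (hint ψ hψ fun s => abs_le.2 ?_)
    (hint (fun s => 1 - ψ s) (by fun_prop) fun s => abs_le.2 ?_)]
  · refine integral_congr_ae (ae_of_all _ fun s => ?_)
    push_cast
    ring
  · constructor <;> linarith [(hψ01 s).1, (hψ01 s).2]
  · constructor <;> linarith [(hψ01 s).1, (hψ01 s).2]

variable {E : Type*} [NormedAddCommGroup E] [NormedSpace ℝ E] {P : Set E}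

theorem exists_norm_integral_nonresonant_le (V : Type*) [NormedAddCommGroup V]
    [InnerProductSpace ℝ V] [FiniteDimensional ℝ V] [MeasurableSpace V] [BorelSpace V]
    (hP : IsCompact P) {Φ : E × ℝ → ℝ}
    (hΦ : ContDiffOn ℝ ∞ Φ (Set.univ ×ˢ Set.Ioi 0)) {u₀ u₁ : ℝ} (hu₀ : 0 < u₀) (hu : u₀ ≤ u₁)
    {c C : ℝ} (hc : 0 < c) (hcΦ : ∀ p ∈ P, ∀ u ∈ Set.Icc (u₀ / 2) (2 * u₁),
      c ≤ sndDeriv Φ (p, u) ∧ sndDeriv Φ (p, u) ≤ C) {q : ℝ → ℝ} (hq : ContDiff ℝ ∞ q)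
    (hq0 : ∀ u ∉ Set.Icc u₀ u₁, q u = 0) {ψ : ℝ → ℝ} (hψ01 : ∀ σ, ψ σ ∈ Set.Icc 0 1)
    (hψ1 : ∀ σ ∈ Set.Icc (c / (4 * π)) (C / π), ψ σ = 1) :
    ∃ M ≥ 0, ∀ p ∈ P, ∀ τ ≥ 1, ∀ x : V,
      ‖∫ s, ((1 - ψ (s / τ) : ℝ) *
          𝓕⁻ (fun u => cexp ((-(τ * Φ (p, u)) : ℝ) * I) * (q u : ℂ)) s) * gaussianKernel s x‖ ≤
        M * τ ^ (-(Module.finrank ℝ V / 2 : ℝ)) := by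
  set n := Module.finrank ℝ V
  obtain ⟨M, hM₀, hM⟩ := exists_norm_fourierInv_nonresonant_le hP hΦ hu₀ hu hc hcΦ hq hq0 n
  set B := ∫ η : V, rexp (-1 * ‖η‖ ^ 2)
  have : 0 ≤ B := integral_nonneg fun _ => (Real.exp_pos _).le
  refine ⟨M * π * B, by positivity, fun p hp τ hτ x => ?_⟩
  have hτ₀ : 0 < τ := by linarith
  have hpointwise (s : ℝ) : ‖((1 - ψ (s / τ) : ℝ) *
      𝓕⁻ (fun u => cexp ((-(τ * Φ (p, u)) : ℝ) * I) * (q u : ℂ)) s) * gaussianKernel s x‖ ≤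
        M * τ⁻¹ ^ n * B * (1 + s ^ 2)⁻¹ := by
    by_cases hs : s / τ ∈ Set.Icc (c / (4 * π)) (C / π)
    · rw [hψ1 _ hs, sub_self, ofReal_zero, zero_mul, zero_mul, norm_zero]
      positivity
    have hs' : 2 * π * s ≤ c / 2 * τ ∨ 2 * C * τ ≤ 2 * π * s := by
      contrapose! hs
      rw [Set.mem_Icc, div_le_div_iff₀ (by positivity) hτ₀, div_le_div_iff₀ hτ₀ (by positivity)]
      constructor <;> linarith [hs.1, hs.2]
    have hψle : |1 - ψ (s / τ)| ≤ 1 := by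
      rw [abs_le]
      constructor <;> linarith [(hψ01 (s / τ)).1, (hψ01 (s / τ)).2]
    rw [norm_mul, norm_mul, Complex.norm_real]
    calc _ ≤ 1 * (M * (τ⁻¹ ^ n * (1 + s ^ 2)⁻¹)) * B := by
          gcongr
          exacts [hψle, hM p hp τ hτ s hs', norm_gaussianKernel_le s x]
      _ = _ := by ring
  calc _ ≤ ∫ s : ℝ, M * τ⁻¹ ^ n * B * (1 + s ^ 2)⁻¹ :=
        norm_integral_le_of_norm_le (integrable_inv_one_add_sq.const_mul _)
          (ae_of_all _ hpointwise)
    _ = M * π * B * τ ^ (-(n : ℝ)) := by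
        rw [integral_const_mul, integral_univ_inv_one_add_sq, Real.rpow_neg hτ₀.le,
          Real.rpow_natCast, inv_pow]
        ring
    _ ≤ M * π * B * τ ^ (-(n / 2 : ℝ)) := by
        gcongr
        exact half_le_self n.cast_nonneg

end Radial

/-! ### Radial oscillatory integrals -/

section Radial

variable {E : Type*} [NormedAddCommGroup E] [NormedSpace ℝ E] {P : Set E} {φ : E × ℝ → ℝ}

theorem contDiffOn_comp_sqrt (hφ : ContDiffOn ℝ ∞ φ (Set.univ ×ˢ Set.Ioi 0)) :
    ContDiffOn ℝ ∞ (fun z : E × ℝ => φ (z.1, √z.2)) (Set.univ ×ˢ Set.Ioi 0) :=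
  hφ.comp (contDiffOn_fst.prodMk (contDiffOn_snd.sqrt fun _ hz => ne_of_gt hz.2))
    fun _ hz => ⟨trivial, Real.sqrt_pos.2 hz.2⟩

theorem sndDeriv_comp_sqrt (hφ : ContDiffOn ℝ ∞ φ (Set.univ ×ˢ Set.Ioi 0)) (p : E) {u : ℝ}
    (hu : 0 < u) : sndDeriv (fun z : E × ℝ => φ (z.1, √z.2)) (p, u) =
      sndDeriv φ (p, √u) * (1 / (2 * √u)) :=
  (hasDerivAt_sndDeriv (contDiffOn_comp_sqrt hφ) (isOpen_univ.prod isOpen_Ioi)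
    ⟨trivial, hu⟩).unique ((hasDerivAt_sndDeriv hφ (isOpen_univ.prod isOpen_Ioi)
      ⟨trivial, Real.sqrt_pos.2 hu⟩).comp u (Real.hasDerivAt_sqrt hu.ne'))

theorem exists_sndDeriv_comp_sqrt_mem_Icc (hP : IsCompact P)
    (hφ : ContDiffOn ℝ ∞ φ (Set.univ ×ˢ Set.Ioi 0))
    (hφ' : ∀ p ∈ P, ∀ r > 0, 0 < sndDeriv φ (p, r)) {u₀ : ℝ} (hu₀ : 0 < u₀) (u₁ : ℝ) :
    ∃ c > 0, ∃ C > c, ∀ p ∈ P, ∀ u ∈ Set.Icc u₀ u₁,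
      c ≤ sndDeriv (fun z : E × ℝ => φ (z.1, √z.2)) (p, u) ∧
        sndDeriv (fun z : E × ℝ => φ (z.1, √z.2)) (p, u) ≤ C := by
  have hK : IsCompact (P ×ˢ Set.Icc u₀ u₁) := hP.prod isCompact_Icc
  have hcont : ContinuousOn (sndDeriv fun z : E × ℝ => φ (z.1, √z.2)) (P ×ˢ Set.Icc u₀ u₁) :=
    (contDiffOn_sndDeriv (contDiffOn_comp_sqrt hφ)
      (isOpen_univ.prod isOpen_Ioi)).continuousOn.mono
      fun z hz => ⟨trivial, hu₀.trans_le hz.2.1⟩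
  have hpos : ∀ z ∈ P ×ˢ Set.Icc u₀ u₁, 0 < sndDeriv (fun z : E × ℝ => φ (z.1, √z.2)) z := by
    rintro ⟨p, u⟩ ⟨hp, hu⟩
    have hu' : 0 < u := hu₀.trans_le hu.1
    rw [sndDeriv_comp_sqrt hφ p hu']
    exact mul_pos (hφ' p hp _ (Real.sqrt_pos.2 hu')) (by positivity)
  obtain ⟨c, hc, hcle⟩ := hK.exists_forall_le' hcont hpos
  obtain ⟨C, hC⟩ := hK.exists_bound_of_continuousOn hcont
  exact ⟨c, hc, max C (c + 1), by simp, fun p hp u hu => ⟨hcle _ ⟨hp, hu⟩,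
    ((le_abs_self _).trans (hC _ ⟨hp, hu⟩)).trans (le_max_left _ _)⟩⟩

theorem exists_schwartzMap_eq_exp_mul {Φ : E × ℝ → ℝ}
    (hΦ : ContDiffOn ℝ ∞ Φ (Set.univ ×ˢ Set.Ioi 0)) {u₀ u₁ : ℝ} (hu₀ : 0 < u₀) {q : ℝ → ℝ}
    (hq : ContDiff ℝ ∞ q) (hq0 : ∀ u ∉ Set.Icc u₀ u₁, q u = 0) (p : E) (τ : ℝ) :
    ∃ F : SchwartzMap ℝ ℂ, ⇑F = fun u => cexp ((-(τ * Φ (p, u)) : ℝ) * I) * q u := by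
  have hF0 : ∀ u ∉ Set.Icc u₀ u₁, cexp ((-(τ * Φ (p, u)) : ℝ) * I) * q u = 0 := fun u hu => by
    rw [hq0 u hu, ofReal_zero, mul_zero]
  have hphase : ContDiffOn ℝ ∞ (fun u => -(τ * Φ (p, u))) (Set.Ioi 0) :=
    (contDiffOn_const.mul (hΦ.comp (contDiff_prodMk_right p).contDiffOn
      fun u hu => ⟨trivial, hu⟩)).neg
  have hF : ContDiff ℝ ∞ fun u => cexp ((-(τ * Φ (p, u)) : ℝ) * I) * q u :=
    contDiff_of_contDiffOn_Ioi hu₀ (((ofRealCLM.contDiff.comp_contDiffOn hphase).mul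
      contDiffOn_const).cexp.mul (ofRealCLM.contDiff.comp hq).contDiffOn)
      fun u hu => hF0 u fun h => hu.not_ge h.1
  exact ⟨(HasCompactSupport.intro isCompact_Icc hF0).toSchwartzMap hF, rfl⟩

variable {r₀ r₁ : ℝ} {ϱ : ℝ → ℝ}

theorem exp_mul_comp_sqrt_eq_zero (hr₀ : 0 < r₀) (hϱ0 : ∀ r ≥ 0, r ∉ Set.Icc r₀ r₁ → ϱ r = 0)
    {u : ℝ} (hu : u ∉ Set.Icc (r₀ ^ 2) (r₁ ^ 2)) : rexp u * ϱ √u = 0 := by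
  rw [hϱ0 _ (Real.sqrt_nonneg u) fun h => hu ⟨(Real.le_sqrt' hr₀).1 h.1,
    (Real.sqrt_le_left (hr₀.le.trans (h.1.trans h.2))).1 h.2⟩, mul_zero]

theorem contDiff_exp_mul_comp_sqrt (hr₀ : 0 < r₀) (hϱ : ContDiff ℝ ∞ ϱ)
    (hϱ0 : ∀ r ≥ 0, r ∉ Set.Icc r₀ r₁ → ϱ r = 0) : ContDiff ℝ ∞ fun u => rexp u * ϱ √u :=
  contDiff_of_contDiffOn_Ioi (pow_pos hr₀ 2)
    (Real.contDiff_exp.contDiffOn.mul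
      (hϱ.comp_contDiffOn (contDiffOn_id.sqrt fun _ hu => ne_of_gt hu)))
    fun _ hu => exp_mul_comp_sqrt_eq_zero hr₀ hϱ0 fun h => hu.not_ge h.1

theorem eq_zero_of_forall_notMem_Icc (hr₁ : 0 ≤ r₁) (hϱ : Continuous ϱ)
    (hϱ0 : ∀ r ≥ 0, r ∉ Set.Icc r₀ r₁ → ϱ r = 0) : ϱ r₁ = 0 := by
  have hzero : Set.EqOn ϱ 0 (Set.Ioi r₁) := fun r hr =>
    hϱ0 r (hr₁.trans (le_of_lt hr)) fun h => h.2.not_gt hr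
  exact hzero.closure hϱ continuous_const (closure_Ioi r₁ ▸ Set.self_mem_Ici)

theorem exists_one_le_mul_inv_sqrt (hP : IsCompact P) (hr₀ : 0 < r₀) (hr : r₀ ≤ r₁)
    (hφ : ContDiffOn ℝ ∞ φ (Set.univ ×ˢ Set.Ioi 0)) :
    ∃ B > 0, ∀ p ∈ P, ∀ κ > 0, (∀ r ∈ Set.Icc r₀ r₁, κ ≤ |sndDeriv (sndDeriv φ) (p, r)|) →
      1 ≤ B * (√κ)⁻¹ := by
  have hU : IsOpen (Set.univ ×ˢ Set.Ioi 0 : Set (E × ℝ)) := isOpen_univ.prod isOpen_Ioi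
  obtain ⟨B, hB⟩ := (hP.prod (isCompact_singleton (x := r₀))).exists_bound_of_continuousOn
    ((contDiffOn_sndDeriv (contDiffOn_sndDeriv hφ hU) hU).continuousOn.mono
      fun z hz => ⟨trivial, hr₀.trans_eq hz.2.symm⟩)
  refine ⟨√(max B 1), by positivity, fun p hp κ hκ hφκ => ?_⟩
  rw [← div_eq_mul_inv, one_le_div (Real.sqrt_pos.2 hκ)]
  exact Real.sqrt_le_sqrt (((hφκ r₀ ⟨le_rfl, hr⟩).trans (hB (p, r₀) ⟨hp, rfl⟩)).trans
    (le_max_left _ _))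

variable {V : Type*} [NormedAddCommGroup V] [InnerProductSpace ℝ V]

theorem exp_mul_radial_eq_gaussian_mul (θ : ℝ → ℝ) (τ : ℝ) (x η : V) :
    cexp (2 * π * I * ⟪x, η⟫) * (cexp ((-(τ * θ ‖η‖) : ℝ) * I) * (ϱ ‖η‖ : ℂ)) =
      cexp (-‖η‖ ^ 2 + 2 * π * I * ⟪x, η⟫) * (cexp ((-(τ * θ √(‖η‖ ^ 2)) : ℝ) * I) *
        ((rexp (‖η‖ ^ 2) * ϱ √(‖η‖ ^ 2) : ℝ) : ℂ)) := by
  have hexp : cexp (-(‖η‖ : ℂ) ^ 2) * cexp ((‖η‖ : ℂ) ^ 2) = 1 := by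
    rw [← Complex.exp_add, neg_add_cancel, Complex.exp_zero]
  rw [Real.sqrt_sq (norm_nonneg η), Complex.exp_add]
  push_cast
  linear_combination (-cexp (2 * π * I * ⟪x, η⟫) *
    (cexp (-(τ * θ ‖η‖) * I) * (ϱ ‖η‖ : ℂ))) * hexp

variable [FiniteDimensional ℝ V] [MeasurableSpace V] [BorelSpace V]

theorem norm_integral_radial_le (θ : ℝ → ℝ) (τ : ℝ) (x : V) :
    ‖∫ η : V, cexp (2 * π * I * ⟪x, η⟫) * (cexp ((-(τ * θ ‖η‖) : ℝ) * I) * (ϱ ‖η‖ : ℂ))‖ ≤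
      ∫ η : V, |ϱ ‖η‖| := by
  refine (norm_integral_le_integral_norm _).trans_eq
    (integral_congr_ae (ae_of_all _ fun η => ?_))
  have : (2 * π * I * ⟪x, η⟫ : ℂ) = ((2 * π * ⟪x, η⟫ : ℝ) : ℂ) * I := by push_cast; ring
  simp only [norm_mul, this, norm_exp_ofReal_mul_I, Complex.norm_real, one_mul, Real.norm_eq_abs]

end Radial

section RadialBound

variable (V : Type*) [NormedAddCommGroup V] [InnerProductSpace ℝ V] [FiniteDimensional ℝ V]
  [MeasurableSpace V] [BorelSpace V] {E : Type*} [NormedAddCommGroup E] [NormedSpace ℝ E]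
  {P : Set E} {φ : E × ℝ → ℝ} {r₀ r₁ : ℝ} {ϱ : ℝ → ℝ}

variable {V} in
theorem integral_radial_eq_add {θ : ℝ → ℝ} {τ : ℝ} {F : SchwartzMap ℝ ℂ}
    (hF : ∀ u, F u = cexp ((-(τ * θ √u) : ℝ) * I) * (rexp u * ϱ √u : ℝ)) {ψ : ℝ → ℝ}
    (hψ : Continuous ψ) (hψ01 : ∀ s, ψ s ∈ Set.Icc 0 1) (x : V) :
    ∫ η : V, cexp (2 * π * I * ⟪x, η⟫) * (cexp ((-(τ * θ ‖η‖) : ℝ) * I) * (ϱ ‖η‖ : ℂ)) =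
      (∫ s, (ψ s * 𝓕⁻ F s) * gaussianKernel s x) +
        ∫ s, ((1 - ψ s : ℝ) * 𝓕⁻ F s) * gaussianKernel s x := by
  rw [← integral_fourierInv_mul_gaussianKernel_eq_add hψ hψ01, ← integral_gaussian_mul_comp_sq]
  refine integral_congr_ae (ae_of_all _ fun η => ?_)
  dsimp only
  rw [hF, exp_mul_radial_eq_gaussian_mul]

theorem exists_norm_integral_radial_le_add_of_one_le (hP : IsCompact P) (hr₀ : 0 < r₀)
    (hr : r₀ ≤ r₁) (hφ : ContDiffOn ℝ ∞ φ (Set.univ ×ˢ Set.Ioi 0))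
    (hφ' : ∀ p ∈ P, ∀ r > 0, 0 < sndDeriv φ (p, r)) (hϱ : ContDiff ℝ ∞ ϱ)
    (hϱ0 : ∀ r ≥ 0, r ∉ Set.Icc r₀ r₁ → ϱ r = 0) :
    ∃ C ≥ 0, ∃ M ≥ 0, ∀ p ∈ P, ∀ κ > 0,
      (∀ r ∈ Set.Icc r₀ r₁, κ ≤ |sndDeriv (sndDeriv φ) (p, r)|) → ∀ τ ≥ 1, ∀ x : V,
      ‖∫ η : V, cexp (2 * π * I * ⟪x, η⟫) *
          (cexp ((-(τ * φ (p, ‖η‖)) : ℝ) * I) * (ϱ ‖η‖ : ℂ))‖ ≤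
        C * ((√κ)⁻¹ * τ ^ (-(Module.finrank ℝ V / 2 : ℝ))) +
          M * τ ^ (-(Module.finrank ℝ V / 2 : ℝ)) := by
  have hU : IsOpen (Set.univ ×ˢ Set.Ioi 0 : Set (E × ℝ)) := isOpen_univ.prod isOpen_Ioi
  have hsq : r₀ ^ 2 ≤ r₁ ^ 2 := by gcongr
  obtain ⟨c, hc, C, hcC, hcΦ⟩ := exists_sndDeriv_comp_sqrt_mem_Icc hP hφ hφ'
    (half_pos (pow_pos hr₀ 2)) (2 * r₁ ^ 2)
  have hlow : 0 < c / (4 * π) := by positivity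
  have hlow_lt : c / (4 * π) < C / π := by
    rw [div_lt_div_iff₀ (by positivity) Real.pi_pos]
    nlinarith [Real.pi_pos]
  obtain ⟨ψ, hψ, hψ01, hψ1, hψ0⟩ := exists_contDiff_eq_one_Icc_eq_zero hlow hlow_lt
  have hq := contDiff_exp_mul_comp_sqrt hr₀ hϱ hϱ0
  have hq0 : ∀ u ∉ Set.Icc (r₀ ^ 2) (r₁ ^ 2), rexp u * ϱ √u = 0 := fun _ =>
    exp_mul_comp_sqrt_eq_zero hr₀ hϱ0
  obtain ⟨C₁, hC₁₀, hC₁⟩ := exists_norm_integral_resonant_le V (half_pos hlow)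
    (by linarith : c / (4 * π) / 2 ≤ C / π + c / (4 * π) / 2) hψ hψ0 hr₀ hr
    (α := fun r => 2 * r * rexp (r ^ 2) * ϱ r) (by fun_prop)
    (by simp [eq_zero_of_forall_notMem_Icc (hr₀.le.trans hr) hϱ.continuous hϱ0])
  obtain ⟨M, hM₀, hM⟩ := exists_norm_integral_nonresonant_le V hP (contDiffOn_comp_sqrt hφ)
    (pow_pos hr₀ 2) hsq hc hcΦ hq hq0 hψ01 hψ1
  refine ⟨C₁, hC₁₀.le, M, hM₀, fun p hp κ hκ hφκ τ hτ x => ?_⟩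
  obtain ⟨F, hF⟩ := exists_schwartzMap_eq_exp_mul (contDiffOn_comp_sqrt hφ)
    (pow_pos hr₀ 2) hq hq0 p τ
  have hF0 : ∀ u ∉ Set.Icc (r₀ ^ 2) (r₁ ^ 2), F u = 0 := fun u hu => by
    simp only [hF, hq0 u hu, ofReal_zero, mul_zero]
  have hderiv₂ : HasDeriv₂On (fun r => φ (p, r)) (fun r => sndDeriv φ (p, r))
      (fun r => sndDeriv (sndDeriv φ) (p, r)) (Set.Icc r₀ r₁) :=
    (hasDeriv₂On_sndDeriv hφ hU p).mono fun r h => ⟨trivial, hr₀.trans_le h.1⟩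
  rw [integral_radial_eq_add (θ := fun r => φ (p, r)) (fun u => congrFun hF u)
    (ψ := fun s => ψ (s / τ)) (hψ.continuous.comp (continuous_id.div_const τ)) (fun s => hψ01 _)]
  refine (norm_add_le _ _).trans (add_le_add ?_ ?_)
  · refine hC₁ _ _ _ κ hκ hderiv₂ hφκ τ hτ F hF0 (fun r h => ?_) x
    simp only [hF, Real.sqrt_sq (hr₀.le.trans h.1)]
    push_cast
    ring
  · rw [SchwartzMap.fourierInv_coe, hF]
    exact hM p hp τ hτ x

theorem exists_norm_integral_radial_le (hP : IsCompact P) (hr₀ : 0 < r₀) (hr : r₀ ≤ r₁)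
    (hφ : ContDiffOn ℝ ∞ φ (Set.univ ×ˢ Set.Ioi 0))
    (hφ' : ∀ p ∈ P, ∀ r > 0, 0 < sndDeriv φ (p, r)) (hϱ : ContDiff ℝ ∞ ϱ)
    (hϱ0 : ∀ r ≥ 0, r ∉ Set.Icc r₀ r₁ → ϱ r = 0) :
    ∃ C > 0, ∀ p ∈ P, ∀ κ > 0,
      (∀ r ∈ Set.Icc r₀ r₁, κ ≤ |sndDeriv (sndDeriv φ) (p, r)|) → ∀ τ > 0, ∀ x : V,
      ‖∫ η : V, cexp (2 * π * I * ⟪x, η⟫) *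
          (cexp ((-(τ * φ (p, ‖η‖)) : ℝ) * I) * (ϱ ‖η‖ : ℂ))‖ ≤
        C * ((√κ)⁻¹ * τ ^ (-(Module.finrank ℝ V / 2 : ℝ))) := by
  obtain ⟨C₁, hC₁₀, M, hM₀, hlarge⟩ :=
    exists_norm_integral_radial_le_add_of_one_le V hP hr₀ hr hφ hφ' hϱ hϱ0
  obtain ⟨B, hB₀, hB⟩ := exists_one_le_mul_inv_sqrt hP hr₀ hr hφ
  set A := ∫ η : V, |ϱ ‖η‖|
  have hA₀ : 0 ≤ A := integral_nonneg fun _ => abs_nonneg _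
  refine ⟨C₁ + (M + A + 1) * B, by positivity, fun p hp κ hκ hφκ τ hτ x => ?_⟩
  have hBκ := hB p hp κ hκ hφκ
  set T := τ ^ (-(Module.finrank ℝ V / 2 : ℝ))
  have hT₀ : 0 < T := Real.rpow_pos_of_pos hτ _
  have := Real.sqrt_pos.2 hκ
  rcases le_total 1 τ with hτ1 | hτ1
  · calc _ ≤ C₁ * ((√κ)⁻¹ * T) + M * T := hlarge p hp κ hκ hφκ τ hτ1 x
      _ ≤ C₁ * ((√κ)⁻¹ * T) + (M + A + 1) * ((B * (√κ)⁻¹) * T) := by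
        gcongr
        · linarith
        · exact le_mul_of_one_le_left hT₀.le hBκ
      _ = _ := by ring
  · have hT : 1 ≤ T := Real.one_le_rpow_of_pos_of_le_one_of_nonpos hτ hτ1
      (neg_nonpos.2 (by positivity))
    calc _ ≤ A := norm_integral_radial_le (fun r => φ (p, r)) τ x
      _ ≤ A * ((B * (√κ)⁻¹) * T) :=
        le_mul_of_one_le_right hA₀ (one_le_mul_of_one_le_of_one_le hBκ hT)
      _ ≤ C₁ * ((√κ)⁻¹ * T) + (M + A + 1) * ((B * (√κ)⁻¹) * T) := by
        refine le_add_of_nonneg_of_le (by positivity) ?_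
        gcongr
        linarith
      _ = _ := by ring

end RadialBound

/-! ### Convexity of the dispersion relation -/

theorem HasDeriv₂On.sqrt {W W₁ W₂ : ℝ → ℝ} {s : Set ℝ} (h : HasDeriv₂On W W₁ W₂ s)
    (hW : ∀ x ∈ s, 0 < W x) :
    HasDeriv₂On (fun x => √(W x)) (fun x => W₁ x / (2 * √(W x)))
      (fun x => (2 * W x * W₂ x - W₁ x ^ 2) / (4 * W x * √(W x))) s where
  hasDerivAt x hx := (h.hasDerivAt x hx).sqrt (hW x hx).ne'
  hasDerivAt_deriv x hx := by
    have hpos := Real.sqrt_pos.2 (hW x hx)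
    have hsq := Real.sq_sqrt (hW x hx).le
    refine ((h.hasDerivAt_deriv x hx).fun_div
      (((h.hasDerivAt x hx).sqrt (hW x hx).ne').const_mul 2) (by positivity)).congr_deriv ?_
    have := hW x hx
    rw [div_eq_div_iff (by positivity) (by positivity)]
    generalize √(W x) = r at *
    rw [← hsq]
    field_simp
    ring
  continuousOn_deriv₂ := by
    have h₀ := h.continuousOn
    have h₁ := h.continuousOn_deriv
    have h₂ := h.continuousOn_deriv₂
    refine ContinuousOn.div (by fun_prop) (by fun_prop) fun x hx => ?_
    have := hW x hx
    positivity

theorem sinh_le_self_mul_cosh {x : ℝ} (hx : 0 ≤ x) : Real.sinh x ≤ x * Real.cosh x := by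
  have hderiv : ∀ y, HasDerivAt (fun y => y * Real.cosh y - Real.sinh y) (y * Real.sinh y) y :=
    fun y => (((hasDerivAt_id' y).fun_mul (Real.hasDerivAt_cosh y)).fun_sub
      (Real.hasDerivAt_sinh y)).congr_deriv (by ring)
  have hmono : MonotoneOn (fun y => y * Real.cosh y - Real.sinh y) (Set.Ici 0) := by
    refine monotoneOn_of_deriv_nonneg (convex_Ici 0) (by fun_prop) (by fun_prop) fun y hy => ?_
    rw [interior_Ici] at hy
    rw [(hderiv y).deriv]
    exact mul_nonneg hy.le (Real.sinh_nonneg_iff.2 hy.le)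
  simpa using hmono Set.self_mem_Ici hx hx

theorem one_add_sq_div_two_le_cosh {x : ℝ} (hx : 0 ≤ x) : 1 + x ^ 2 / 2 ≤ Real.cosh x := by
  have hdouble := Real.cosh_two_mul (x / 2)
  rw [mul_div_cancel₀ x two_ne_zero, Real.cosh_sq (x / 2)] at hdouble
  have : x / 2 ≤ Real.sinh (x / 2) := Real.self_le_sinh_iff.2 (by positivity)
  nlinarith

theorem self_le_sinh_mul_cosh {x : ℝ} (hx : 0 ≤ x) : x ≤ Real.sinh x * Real.cosh x := by
  nlinarith [Real.self_le_sinh_iff.2 hx, Real.one_le_cosh x]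

theorem hasDerivAt_sinh_div_cosh (x : ℝ) :
    HasDerivAt (fun y => Real.sinh y / Real.cosh y) (1 / Real.cosh x ^ 2) x := by
  refine ((Real.hasDerivAt_sinh x).fun_div (Real.hasDerivAt_cosh x)
    (Real.cosh_pos x).ne').congr_deriv ?_
  rw [← Real.cosh_sq_sub_sinh_sq x]
  ring

/-- The square `x (1 + β x²) tanh x` of the dispersion relation `mSymb β`. -/
def symbSq (β x : ℝ) : ℝ := (x + β * x ^ 3) * (Real.sinh x / Real.cosh x)

/-- First derivative of `symbSq β`, in closed form. -/
def symbSqDeriv (β x : ℝ) : ℝ :=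
  (1 + 3 * β * x ^ 2) * (Real.sinh x / Real.cosh x) + (x + β * x ^ 3) / Real.cosh x ^ 2

/-- Second derivative of `symbSq β`, in closed form. -/
def symbSqDeriv₂ (β x : ℝ) : ℝ :=
  6 * β * x * (Real.sinh x / Real.cosh x) + 2 * (1 + 3 * β * x ^ 2) / Real.cosh x ^ 2
    - 2 * (x + β * x ^ 3) * Real.sinh x / Real.cosh x ^ 3

/-- First derivative of the dispersion relation `mSymb β` on `(0, ∞)`. -/
def mSymbDeriv (β x : ℝ) : ℝ := symbSqDeriv β x / (2 * √(symbSq β x))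

/-- Second derivative of the dispersion relation `mSymb β` on `(0, ∞)`. -/
def mSymbDeriv₂ (β x : ℝ) : ℝ :=
  (2 * symbSq β x * symbSqDeriv₂ β x - symbSqDeriv β x ^ 2) / (4 * symbSq β x * √(symbSq β x))

theorem mSymb_eq_sqrt (β x : ℝ) : mSymb β x = √(symbSq β x) := by
  rw [mSymb, symbSq, Real.tanh_eq_sinh_div_cosh]
  ring_nf

theorem hasDeriv₂On_symbSq (β : ℝ) (s : Set ℝ) :
    HasDeriv₂On (symbSq β) (symbSqDeriv β) (symbSqDeriv₂ β) s := by
  have hcube (x : ℝ) : HasDerivAt (fun y : ℝ => y + β * y ^ 3) (1 + 3 * β * x ^ 2) x :=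
    ((hasDerivAt_id' x).fun_add ((hasDerivAt_pow 3 x).const_mul β)).congr_deriv
      (by push_cast; ring)
  have hsquare (x : ℝ) : HasDerivAt (fun y : ℝ => 1 + 3 * β * y ^ 2) (6 * β * x) x :=
    (((hasDerivAt_pow 2 x).const_mul (3 * β)).const_add 1).congr_deriv (by push_cast; ring)
  refine ⟨fun x _ => ((hcube x).fun_mul (hasDerivAt_sinh_div_cosh x)).congr_deriv ?_,
    fun x _ => (((hsquare x).fun_mul (hasDerivAt_sinh_div_cosh x)).fun_add ((hcube x).fun_div
      ((Real.hasDerivAt_cosh x).fun_pow 2) (pow_ne_zero 2 (Real.cosh_pos x).ne'))).congr_deriv ?_,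
    ?_⟩
  · rw [symbSqDeriv]
    ring
  · have := (Real.cosh_pos x).ne'
    rw [symbSqDeriv₂]
    field_simp
    ring
  · unfold symbSqDeriv₂
    fun_prop (disch := intro x _; have := (Real.cosh_pos x).ne'; positivity)

section Symbol

variable {β x : ℝ}

theorem symbSq_pos (hβ : 0 ≤ β) (hx : 0 < x) : 0 < symbSq β x := by
  have := Real.sinh_pos_iff.2 hx
  have := Real.cosh_pos x
  unfold symbSq
  positivity

theorem hasDeriv₂On_mSymb (hβ : 0 ≤ β) :
    HasDeriv₂On (mSymb β) (mSymbDeriv β) (mSymbDeriv₂ β) (Set.Ioi 0) := by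
  rw [show mSymb β = fun x => √(symbSq β x) from funext (mSymb_eq_sqrt β)]
  exact (hasDeriv₂On_symbSq β _).sqrt fun x hx => symbSq_pos hβ hx

theorem mSymbDeriv_pos (hβ : 0 ≤ β) (hx : 0 < x) : 0 < mSymbDeriv β x := by
  have := Real.sqrt_pos.2 (symbSq_pos hβ hx)
  have := Real.sinh_pos_iff.2 hx
  have := Real.cosh_pos x
  unfold mSymbDeriv symbSqDeriv
  positivity

theorem two_mul_symbSq_mul_sub_sq (β x : ℝ) :
    2 * symbSq β x * symbSqDeriv₂ β x - symbSqDeriv β x ^ 2 =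
      ((Real.sinh x * Real.cosh x) ^ 2 * (12 * (x + β * x ^ 3) * β * x - (1 + 3 * β * x ^ 2) ^ 2)
        + 2 * (x + β * x ^ 3) * (1 + 3 * β * x ^ 2) * (Real.sinh x * Real.cosh x)
        - (x + β * x ^ 3) ^ 2 * (1 + 4 * Real.sinh x ^ 2)) / Real.cosh x ^ 4 := by
  have := (Real.cosh_pos x).ne'
  unfold symbSq symbSqDeriv symbSqDeriv₂
  field_simp
  ring

theorem two_mul_symbSq_zero_mul_sub_sq_le (hx : 0 < x) :
    2 * symbSq 0 x * symbSqDeriv₂ 0 x - symbSqDeriv 0 x ^ 2 ≤ -(4 * x ^ 4 / Real.cosh x ^ 4) := by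
  rw [two_mul_symbSq_mul_sub_sq, ← neg_div]
  gcongr
  have hsinh : x ^ 2 * x ^ 2 ≤ x ^ 2 * Real.sinh x ^ 2 := by
    gcongr
    exact Real.self_le_sinh_iff.2 hx.le
  nlinarith [sq_nonneg (Real.sinh x * Real.cosh x - x)]

theorem five_mul_pow_le_of_lt_one {h s : ℝ} (hx : 0 < x) (hx1 : x < 1) (hxh : x ≤ h)
    (hhx : (1 - x ^ 2) * h ≤ x) (hs : (1 + x ^ 2) * s ≤ h ^ 2) :
    5 * x ^ 4 ≤ h ^ 2 * (3 * x ^ 4 + 6 * x ^ 2 - 1) + 2 * x * (1 + x ^ 2) * (1 + 3 * x ^ 2) * h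
      - x ^ 2 * (1 + x ^ 2) ^ 2 * (1 + 4 * s) := by
  have : 0 < h := hx.trans_le hxh
  have : 0 ≤ 1 - x ^ 2 := by nlinarith
  have hquad : ((1 - x ^ 2) * h) * ((1 - x ^ 2) * h) ≤ x * ((1 - x ^ 2) * h) := by gcongr
  have hlin := mul_le_mul_of_nonneg_left hxh
    (by positivity : 0 ≤ x * (1 + 9 * x ^ 2 + 6 * x ^ 4))
  have hs' := mul_le_mul_of_nonneg_left hs (by positivity : 0 ≤ 4 * x ^ 2 * (1 + x ^ 2))
  nlinarith [pow_pos hx 4, pow_pos hx 6]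

theorem five_mul_pow_le_of_one_le {h s : ℝ} (hx : 1 ≤ x) (hxh : x + x ^ 3 / 2 ≤ h) (hs : s ≤ h) :
    5 * x ^ 4 ≤ h ^ 2 * (3 * x ^ 4 + 6 * x ^ 2 - 1) + 2 * x * (1 + x ^ 2) * (1 + 3 * x ^ 2) * h
      - x ^ 2 * (1 + x ^ 2) ^ 2 * (1 + 4 * s) := by
  have hx0 : 0 < x := by linarith
  have hh : 0 < h := lt_of_lt_of_le (by positivity) hxh
  have hcoef : 0 ≤ 3 * x ^ 4 + 6 * x ^ 2 - 1 := by
    nlinarith [one_le_pow₀ hx (n := 4), one_le_pow₀ hx (n := 2)]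
  have hpoly : 9.5 * x ^ 3 + x ≤ (x + x ^ 3 / 2) * (3 * x ^ 4 + 6 * x ^ 2 - 1)
      + 2 * x * (1 + x ^ 2) * (1 + 3 * x ^ 2) - 4 * x ^ 2 * (1 + x ^ 2) ^ 2 := by
    have h₇ : 0 ≤ x ^ 5 * (1.5 * x ^ 2 - 4 * x + 4) :=
      mul_nonneg (by positivity) (by nlinarith [sq_nonneg (x - 4 / 3)])
    have h₅ : 0 ≤ x ^ 4 * (x - 1) := mul_nonneg (by positivity) (by linarith)
    have h₃ : 0 ≤ x ^ 2 * (x - 1) := mul_nonneg (by positivity) (by linarith)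
    nlinarith
  have hs' := mul_le_mul_of_nonneg_left hs (by positivity : 0 ≤ 4 * x ^ 2 * (1 + x ^ 2) ^ 2)
  have hquad := mul_le_mul_of_nonneg_left (mul_le_mul_of_nonneg_right hxh hcoef) hh.le
  have hpoly' := mul_le_mul_of_nonneg_left hpoly hh.le
  have hlin := mul_le_mul_of_nonneg_right hxh (by positivity : 0 ≤ 9.5 * x ^ 3 + x)
  nlinarith [pow_pos hx0 4, pow_pos hx0 6]

theorem le_two_mul_symbSq_one_mul_sub_sq (hx : 0 < x) :
    4 * x ^ 4 / Real.cosh x ^ 4 ≤ 2 * symbSq 1 x * symbSqDeriv₂ 1 x - symbSqDeriv 1 x ^ 2 := by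
  rw [two_mul_symbSq_mul_sub_sq]
  gcongr
  set h := Real.sinh x * Real.cosh x with hh
  suffices 5 * x ^ 4 ≤ h ^ 2 * (3 * x ^ 4 + 6 * x ^ 2 - 1)
      + 2 * x * (1 + x ^ 2) * (1 + 3 * x ^ 2) * h
      - x ^ 2 * (1 + x ^ 2) ^ 2 * (1 + 4 * Real.sinh x ^ 2) by
    nlinarith [pow_pos hx 4]
  have hsinh := Real.self_le_sinh_iff.2 hx.le
  have hcosh := one_add_sq_div_two_le_cosh hx.le
  obtain hx1 | hx1 := lt_or_ge x 1
  · refine five_mul_pow_le_of_lt_one hx hx1 (self_le_sinh_mul_cosh hx.le) ?_ ?_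
    · nlinarith [mul_nonneg (sub_nonneg.2 (sinh_le_self_mul_cosh hx.le))
        (by positivity : (0:ℝ) ≤ Real.cosh x + x * Real.sinh x), Real.cosh_sq x]
    · rw [hh, mul_pow, mul_comm]
      gcongr
      nlinarith
  · refine five_mul_pow_le_of_one_le hx1 ?_ (?_ : Real.sinh x ^ 2 ≤ _)
    · nlinarith [mul_le_mul hsinh hcosh (by positivity) (hx.le.trans hsinh)]
    · nlinarith [Real.sinh_lt_cosh x]

theorem le_abs_two_mul_symbSq_mul_sub_sq (hβ : β = 0 ∨ β = 1) (hx : 0 < x) :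
    4 * x ^ 4 / Real.cosh x ^ 4 ≤
      |2 * symbSq β x * symbSqDeriv₂ β x - symbSqDeriv β x ^ 2| := by
  rcases hβ with rfl | rfl
  · exact (le_neg_of_le_neg (two_mul_symbSq_zero_mul_sub_sq_le hx)).trans (neg_le_abs _)
  · exact (le_two_mul_symbSq_one_mul_sub_sq hx).trans (le_abs_self _)

theorem abs_mSymbDeriv₂ (hβ : 0 ≤ β) (hx : 0 < x) :
    |mSymbDeriv₂ β x| = |2 * symbSq β x * symbSqDeriv₂ β x - symbSqDeriv β x ^ 2| /
      (4 * symbSq β x * √(symbSq β x)) := by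
  have := symbSq_pos hβ hx
  rw [mSymbDeriv₂, abs_div, abs_of_pos (a := 4 * _ * _) (by positivity)]

theorem mSymbDeriv₂_ne_zero (hβ : β = 0 ∨ β = 1) (hx : 0 < x) : mSymbDeriv₂ β x ≠ 0 := by
  have hβ0 : 0 ≤ β := by rcases hβ with rfl | rfl <;> norm_num
  have hsymb := symbSq_pos hβ0 hx
  have := Real.cosh_pos x
  rw [← abs_pos, abs_mSymbDeriv₂ hβ0 hx]
  exact div_pos ((by positivity : 0 < 4 * x ^ 4 / Real.cosh x ^ 4).trans_le
    (le_abs_two_mul_symbSq_mul_sub_sq hβ hx)) (by positivity)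

theorem symbSq_le (hβ : 0 ≤ β) (hx : 0 ≤ x) : symbSq β x ≤ (1 + β * x ^ 2) * x ^ 2 := by
  have htanh : Real.sinh x / Real.cosh x ≤ x :=
    (div_le_iff₀ (Real.cosh_pos x)).2 (sinh_le_self_mul_cosh hx)
  calc symbSq β x ≤ (x + β * x ^ 3) * x := by
        unfold symbSq
        gcongr
    _ = (1 + β * x ^ 2) * x ^ 2 := by ring

theorem exists_mul_le_abs_mSymbDeriv₂ (hβ : β = 0 ∨ β = 1) (R : ℝ) :
    ∃ c > 0, ∀ x ∈ Set.Ioc 0 R, c * x ≤ |mSymbDeriv₂ β x| := by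
  have hβ0 : 0 ≤ β := by rcases hβ with rfl | rfl <;> norm_num
  set A := 1 + β * R ^ 2 with hA
  have hA1 : 1 ≤ A := le_add_of_nonneg_right (by positivity)
  have := Real.cosh_pos R
  refine ⟨(A ^ 2 * Real.cosh R ^ 4)⁻¹, by positivity, fun x ⟨hx, hxR⟩ => ?_⟩
  have hpos := symbSq_pos hβ0 hx
  have hcosh : Real.cosh x ≤ Real.cosh R :=
    Real.cosh_le_cosh.2 (by rwa [abs_of_pos hx, abs_of_pos (hx.trans_le hxR)])
  have := Real.cosh_pos x
  have hsymb : symbSq β x ≤ A * x ^ 2 := (symbSq_le hβ0 hx.le).trans (by rw [hA]; gcongr)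
  have hsqrt : √(symbSq β x) ≤ A * x := by
    refine Real.sqrt_le_iff.2 ⟨by positivity, hsymb.trans ?_⟩
    rw [mul_pow]
    gcongr
    exact le_self_pow₀ hA1 two_ne_zero
  rw [abs_mSymbDeriv₂ hβ0 hx]
  calc (A ^ 2 * Real.cosh R ^ 4)⁻¹ * x
      = 4 * x ^ 4 / Real.cosh R ^ 4 / (4 * (A * x ^ 2) * (A * x)) := by field_simp
    _ ≤ 4 * x ^ 4 / Real.cosh x ^ 4 / (4 * symbSq β x * √(symbSq β x)) := by gcongr
    _ ≤ _ := by
      gcongr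
      exact le_abs_two_mul_symbSq_mul_sub_sq hβ hx

end Symbol

/-! ### Rescaled phases -/

namespace HasDeriv₂On

variable {f f' f'' g g' g'' : ℝ → ℝ} {s : Set ℝ}

theorem comp_mul_left (h : HasDeriv₂On f f' f'' s) (c : ℝ) :
    HasDeriv₂On (fun x => f (c * x)) (fun x => c * f' (c * x)) (fun x => c ^ 2 * f'' (c * x))
      ((c * ·) ⁻¹' s) where
  hasDerivAt x hx := ((h.hasDerivAt (c * x) hx).comp x (hasDerivAt_const_mul c)).congr_deriv
    (mul_comm _ _)
  hasDerivAt_deriv x hx := (((h.hasDerivAt_deriv (c * x) hx).comp x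
    (hasDerivAt_const_mul c)).const_mul c).congr_deriv (by ring)
  continuousOn_deriv₂ := continuousOn_const.mul
    (h.continuousOn_deriv₂.comp (by fun_prop) fun _ hx => hx)

theorem eqOn (hs : IsOpen s) (hf : HasDeriv₂On f f' f'' s) (hg : HasDeriv₂On g g' g'' s)
    (h : Set.EqOn f g s) : Set.EqOn f' g' s ∧ Set.EqOn f'' g'' s := by
  have hderiv : Set.EqOn f' g' s := fun x hx => (hf.hasDerivAt x hx).unique
    ((hg.hasDerivAt x hx).congr_of_eventuallyEq (h.eventuallyEq_of_mem (hs.mem_nhds hx)))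
  exact ⟨hderiv, fun x hx => (hf.hasDerivAt_deriv x hx).unique
    ((hg.hasDerivAt_deriv x hx).congr_of_eventuallyEq
      (hderiv.eventuallyEq_of_mem (hs.mem_nhds hx)))⟩

end HasDeriv₂On

theorem sndDeriv_eqOn {E : Type*} [NormedAddCommGroup E] [NormedSpace ℝ E] {φ : E × ℝ → ℝ}
    {s : Set ℝ} (hs : IsOpen s) (hφ : ContDiffOn ℝ ∞ φ (Set.univ ×ˢ s)) {p : E}
    {g g' g'' : ℝ → ℝ} (hg : HasDeriv₂On g g' g'' s) (h : ∀ r ∈ s, φ (p, r) = g r) :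
    (∀ r ∈ s, sndDeriv φ (p, r) = g' r) ∧ ∀ r ∈ s, sndDeriv (sndDeriv φ) (p, r) = g'' r :=
  ((hasDeriv₂On_sndDeriv hφ (isOpen_univ.prod hs) p).mono fun _ hr => ⟨trivial, hr⟩).eqOn hs hg h

theorem hasDeriv₂On_const_mul_mSymb {β c : ℝ} (hβ : 0 ≤ β) (hc : 0 < c) (k : ℝ) :
    HasDeriv₂On (fun r => k * mSymb β (c * r)) (fun r => k * (c * mSymbDeriv β (c * r)))
      (fun r => k * (c ^ 2 * mSymbDeriv₂ β (c * r))) (Set.Ioi 0) :=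
  (((hasDeriv₂On_mSymb hβ).comp_mul_left c).mono fun _ hr => mul_pos hc hr).const_mul k

theorem integral_radial_eq_rescale {V : Type*} [NormedAddCommGroup V] [InnerProductSpace ℝ V]
    [MeasurableSpace V] (μ : Measure V) {θ m ϱ : ℝ → ℝ} {c k : ℝ} (hk : k ≠ 0)
    (hθ : ∀ r > 0, θ r = k * m (c * r)) (hϱ : ϱ 0 = 0) (t : ℝ) (x : V) :
    ∫ η, cexp (2 * π * I * ⟪x, η⟫) * (cexp ((-(t * m (c * ‖η‖)) : ℝ) * I) * (ϱ ‖η‖ : ℂ)) ∂μ =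
      ∫ η, cexp (2 * π * I * ⟪x, η⟫) * (cexp ((-(t / k * θ ‖η‖) : ℝ) * I) * (ϱ ‖η‖ : ℂ)) ∂μ := by
  congr 1 with η
  obtain hη | hη := (norm_nonneg η).eq_or_lt
  · simp only [← hη, hϱ, ofReal_zero, mul_zero]
  · rw [hθ _ hη, ← mul_assoc (t / k), div_mul_cancel₀ t hk]

section LowFrequency

theorem contDiff_dslope {𝕜 : Type*} [NontriviallyNormedField 𝕜] [CompleteSpace 𝕜] {f : 𝕜 → 𝕜}
    (hf : ContDiff 𝕜 ω f) (a : 𝕜) : ContDiff 𝕜 ω (dslope f a) := by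
  rw [contDiff_iff_contDiffAt]
  intro x
  obtain rfl | hx := eq_or_ne x a
  · obtain ⟨p, hp⟩ := hf.contDiffAt.analyticAt (x := x)
    exact hp.has_fpower_series_dslope_fslope.analyticAt.contDiffAt
  · refine ContDiffAt.congr_of_eventuallyEq (f := fun y => (y - a)⁻¹ * (f y - f a))
      (((contDiffAt_id.sub contDiffAt_const).inv (sub_ne_zero.2 hx)).mul
        (hf.contDiffAt.sub contDiffAt_const)) ?_
    filter_upwards [isOpen_ne.mem_nhds hx] with y hy
    rw [dslope_of_ne _ hy, slope_def_field, div_eq_inv_mul]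

theorem dslope_sinh_of_ne {x : ℝ} (hx : x ≠ 0) : dslope Real.sinh 0 x = Real.sinh x / x := by
  rw [dslope_of_ne _ hx, slope_def_field, Real.sinh_zero, sub_zero, sub_zero]

theorem dslope_sinh_pos (x : ℝ) : 0 < dslope Real.sinh 0 x := by
  obtain h | rfl | h := lt_trichotomy x 0
  · rw [dslope_sinh_of_ne h.ne]
    exact div_pos_of_neg_of_neg (Real.sinh_neg_iff.2 h) h
  · simp
  · rw [dslope_sinh_of_ne h.ne']
    exact div_pos (Real.sinh_pos_iff.2 h) h

/-- The rescaled phase `m_β(p r) / p` at frequencies `p ≤ 1`, written so as to be smooth up to the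
limiting phase `r` at `p = 0`. -/
def lowPhase (β : ℝ) (z : ℝ × ℝ) : ℝ :=
  z.2 * √(dslope Real.sinh 0 (z.1 * z.2) / Real.cosh (z.1 * z.2) * (1 + β * (z.1 * z.2) ^ 2))

variable {β p r : ℝ}

theorem contDiff_lowPhase (hβ : 0 ≤ β) : ContDiff ℝ ∞ (lowPhase β) := by
  have hmul : ContDiff ℝ ∞ fun z : ℝ × ℝ => z.1 * z.2 := contDiff_fst.mul contDiff_snd
  have hdslope := ((contDiff_dslope Real.contDiff_sinh 0).of_le le_top).comp hmul
  refine contDiff_snd.mul (ContDiff.sqrt ((hdslope.div (Real.contDiff_cosh.comp hmul)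
    fun z => (Real.cosh_pos _).ne').mul (by fun_prop)) fun z => ?_)
  have := dslope_sinh_pos (z.1 * z.2)
  have := Real.cosh_pos (z.1 * z.2)
  positivity

theorem lowPhase_zero_left (β r : ℝ) : lowPhase β (0, r) = r := by
  simp [lowPhase]

theorem lowPhase_of_pos (hp : 0 < p) (hr : 0 < r) :
    lowPhase β (p, r) = p⁻¹ * mSymb β (p * r) := by
  have hpr : 0 < p * r := mul_pos hp hr
  have := Real.cosh_pos (p * r)
  have hsq : symbSq β (p * r) = (p * r) ^ 2 *
      (Real.sinh (p * r) / (p * r) / Real.cosh (p * r) * (1 + β * (p * r) ^ 2)) := by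
    rw [symbSq]
    field_simp
  rw [lowPhase, mSymb_eq_sqrt, dslope_sinh_of_ne hpr.ne', hsq, Real.sqrt_mul (sq_nonneg _),
    Real.sqrt_sq hpr.le]
  field_simp

theorem sndDeriv_lowPhase_pos (hβ : 0 ≤ β) (hp : 0 ≤ p) (hr : 0 < r) :
    0 < sndDeriv (lowPhase β) (p, r) := by
  have hφ := (contDiff_lowPhase hβ).contDiffOn (s := Set.univ ×ˢ Set.Ioi 0)
  obtain rfl | hp := hp.eq_or_lt
  · have hid : HasDeriv₂On (fun r => r) (fun _ => 1) (fun _ => 0) (Set.Ioi 0) :=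
      ⟨fun r _ => hasDerivAt_id' r, fun r _ => hasDerivAt_const r 1, continuousOn_const⟩
    rw [(sndDeriv_eqOn isOpen_Ioi hφ hid fun s _ => lowPhase_zero_left β s).1 r hr]
    exact one_pos
  · rw [(sndDeriv_eqOn isOpen_Ioi hφ (hasDeriv₂On_const_mul_mSymb hβ hp p⁻¹)
      fun s hs => lowPhase_of_pos hp hs).1 r hr]
    have := mSymbDeriv_pos hβ (mul_pos hp hr)
    positivity

theorem sndDeriv_sndDeriv_lowPhase (hβ : 0 ≤ β) (hp : 0 < p) (hr : 0 < r) :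
    sndDeriv (sndDeriv (lowPhase β)) (p, r) = p * mSymbDeriv₂ β (p * r) := by
  rw [(sndDeriv_eqOn isOpen_Ioi (contDiff_lowPhase hβ).contDiffOn
    (hasDeriv₂On_const_mul_mSymb hβ hp p⁻¹) fun s hs => lowPhase_of_pos hp hs).2 r hr]
  field_simp

end LowFrequency

section HighFrequency

theorem expNegInvGlue_of_pos {x : ℝ} (hx : 0 < x) : expNegInvGlue x = Real.exp (-x⁻¹) := by
  simp [expNegInvGlue, hx]

theorem expNegInvGlue_lt_one (x : ℝ) : expNegInvGlue x < 1 := by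
  obtain hx | hx := le_or_gt x 0
  · rw [expNegInvGlue.zero_of_nonpos hx]
    exact one_pos
  · rw [expNegInvGlue_of_pos hx, Real.exp_lt_one_iff, neg_lt_zero]
    exact inv_pos.2 hx

/-- The square `p^{1+2β} m_β(r/p)²` of the rescaled dispersion relation at frequencies `1 / p ≥ 1`
for `β ∈ {0, 1}`. Since `tanh (r/p) = (1 - e^{-2r/p}) / (1 + e^{-2r/p})`, writing `e^{-2r/p}`
through `expNegInvGlue` makes it smooth up to the limit at `p = 0`. -/
def highPhaseSq (β : ℝ) (z : ℝ × ℝ) : ℝ :=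
  z.2 * ((1 - β) + β * (z.1 ^ 2 + z.2 ^ 2)) *
    ((1 - expNegInvGlue (z.1 / (2 * z.2))) / (1 + expNegInvGlue (z.1 / (2 * z.2))))

/-- The rescaled phase `p^{1/2+β} m_β(r/p)` at frequencies `1 / p ≥ 1`, for `β ∈ {0, 1}`. -/
def highPhase (β : ℝ) (z : ℝ × ℝ) : ℝ := √(highPhaseSq β z)

variable {β p r : ℝ}

theorem highPhaseSq_pos (hβ : β = 0 ∨ β = 1) {z : ℝ × ℝ} (hz : 0 < z.2) : 0 < highPhaseSq β z := by
  have := sub_pos.2 (expNegInvGlue_lt_one (z.1 / (2 * z.2)))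
  have := expNegInvGlue.nonneg (z.1 / (2 * z.2))
  have : 0 < (1 - β) + β * (z.1 ^ 2 + z.2 ^ 2) := by
    rcases hβ with rfl | rfl <;> norm_num
    positivity
  unfold highPhaseSq
  positivity

theorem contDiffOn_highPhase (hβ : β = 0 ∨ β = 1) :
    ContDiffOn ℝ ∞ (highPhase β) (Set.univ ×ˢ Set.Ioi 0) := by
  have hglue : ContDiffOn ℝ ∞ (fun z : ℝ × ℝ => expNegInvGlue (z.1 / (2 * z.2)))
      (Set.univ ×ˢ Set.Ioi 0) :=
    expNegInvGlue.contDiff.comp_contDiffOn (contDiff_fst.contDiffOn.div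
      (contDiff_const.mul contDiff_snd).contDiffOn fun z hz =>
        mul_ne_zero two_ne_zero (ne_of_gt hz.2))
  refine ContDiffOn.sqrt (ContDiffOn.mul (by fun_prop)
    ((contDiffOn_const.sub hglue).div (contDiffOn_const.add hglue) fun z _ => ?_))
    fun z hz => (highPhaseSq_pos hβ hz.2).ne'
  have := expNegInvGlue.nonneg (z.1 / (2 * z.2))
  positivity

theorem highPhaseSq_of_pos (hβ : β = 0 ∨ β = 1) (hp : 0 < p) (hr : 0 < r) :
    highPhaseSq β (p, r) = (p ^ (1 / 2 + β)) ^ 2 * symbSq β (p⁻¹ * r) := by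
  have hglue : expNegInvGlue (p / (2 * r)) = Real.exp (-(p⁻¹ * r)) / Real.exp (p⁻¹ * r) := by
    rw [expNegInvGlue_of_pos (by positivity), ← Real.exp_sub]
    congr 1
    field_simp
    norm_num
  have := Real.exp_pos (p⁻¹ * r)
  have := Real.exp_pos (-(p⁻¹ * r))
  rw [highPhaseSq, hglue, symbSq, Real.sinh_eq, Real.cosh_eq, ← Real.rpow_mul_natCast hp.le]
  generalize Real.exp (p⁻¹ * r) = a at *
  generalize Real.exp (-(p⁻¹ * r)) = b at *
  rcases hβ with rfl | rfl
  · norm_num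
    field_simp
  · rw [show (1 / 2 + 1) * ((2 : ℕ) : ℝ) = (3 : ℕ) by norm_num, Real.rpow_natCast]
    field_simp
    ring

theorem highPhase_of_pos (hβ : β = 0 ∨ β = 1) (hp : 0 < p) (hr : 0 < r) :
    highPhase β (p, r) = p ^ (1 / 2 + β) * mSymb β (p⁻¹ * r) := by
  rw [highPhase, highPhaseSq_of_pos hβ hp hr, Real.sqrt_mul (sq_nonneg _),
    Real.sqrt_sq (by positivity), mSymb_eq_sqrt]

theorem highPhaseSq_zero_left (β r : ℝ) : highPhaseSq β (0, r) = (1 - β) * r + β * r ^ 3 := by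
  simp only [highPhaseSq, zero_div, expNegInvGlue.zero]
  ring

theorem hasDeriv₂On_highPhaseSq_zero_left (β : ℝ) (s : Set ℝ) :
    HasDeriv₂On (fun r => highPhaseSq β (0, r)) (fun r => (1 - β) + 3 * β * r ^ 2)
      (fun r => 6 * β * r) s := by
  simp only [highPhaseSq_zero_left]
  exact ⟨fun r _ => (((hasDerivAt_id' r).const_mul (1 - β)).fun_add
      ((hasDerivAt_pow 3 r).const_mul β)).congr_deriv (by push_cast; ring),
    fun r _ => (((hasDerivAt_pow 2 r).const_mul (3 * β)).const_add (1 - β)).congr_deriv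
      (by push_cast; ring), by fun_prop⟩

theorem hasDeriv₂On_highPhase_zero_left (hβ : β = 0 ∨ β = 1) :
    HasDeriv₂On (fun r => highPhase β (0, r))
      (fun r => ((1 - β) + 3 * β * r ^ 2) / (2 * √(highPhaseSq β (0, r))))
      (fun r => (2 * highPhaseSq β (0, r) * (6 * β * r) - ((1 - β) + 3 * β * r ^ 2) ^ 2) /
        (4 * highPhaseSq β (0, r) * √(highPhaseSq β (0, r)))) (Set.Ioi 0) :=
  (hasDeriv₂On_highPhaseSq_zero_left β _).sqrt fun _ hr => highPhaseSq_pos hβ hr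

theorem sndDeriv_highPhase_pos (hβ : β = 0 ∨ β = 1) (hp : 0 ≤ p) (hr : 0 < r) :
    0 < sndDeriv (highPhase β) (p, r) := by
  have hβ0 : 0 ≤ β := by rcases hβ with rfl | rfl <;> norm_num
  obtain rfl | hp := hp.eq_or_lt
  · rw [(sndDeriv_eqOn isOpen_Ioi (contDiffOn_highPhase hβ) (hasDeriv₂On_highPhase_zero_left hβ)
      fun _ _ => rfl).1 r hr]
    have := Real.sqrt_pos.2 (highPhaseSq_pos hβ (z := (0, r)) hr)
    refine div_pos ?_ (by positivity)
    rcases hβ with rfl | rfl <;> norm_num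
    positivity
  · rw [(sndDeriv_eqOn isOpen_Ioi (contDiffOn_highPhase hβ) (hasDeriv₂On_const_mul_mSymb hβ0
      (inv_pos.2 hp) _) fun s hs => highPhase_of_pos hβ hp hs).1 r hr]
    have := mSymbDeriv_pos hβ0 (mul_pos (inv_pos.2 hp) hr)
    positivity

theorem sndDeriv_sndDeriv_highPhase_ne_zero (hβ : β = 0 ∨ β = 1) (hp : 0 ≤ p) (hr : 0 < r) :
    sndDeriv (sndDeriv (highPhase β)) (p, r) ≠ 0 := by
  have hβ0 : 0 ≤ β := by rcases hβ with rfl | rfl <;> norm_num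
  obtain rfl | hp := hp.eq_or_lt
  · rw [(sndDeriv_eqOn isOpen_Ioi (contDiffOn_highPhase hβ) (hasDeriv₂On_highPhase_zero_left hβ)
      fun _ _ => rfl).2 r hr]
    have hpos := highPhaseSq_pos hβ (z := (0, r)) hr
    refine div_ne_zero ?_ (by positivity)
    rw [highPhaseSq_zero_left]
    rcases hβ with rfl | rfl
    · norm_num
    · have : 0 < r ^ 4 := by positivity
      nlinarith
  · rw [(sndDeriv_eqOn isOpen_Ioi (contDiffOn_highPhase hβ) (hasDeriv₂On_const_mul_mSymb hβ0
      (inv_pos.2 hp) _) fun s hs => highPhase_of_pos hβ hp hs).2 r hr]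
    have := mSymbDeriv₂_ne_zero hβ (mul_pos (inv_pos.2 hp) hr)
    positivity

theorem exists_le_abs_sndDeriv_sndDeriv_highPhase (hβ : β = 0 ∨ β = 1) {r₀ : ℝ} (hr₀ : 0 < r₀)
    (r₁ : ℝ) : ∃ κ > 0, ∀ p ∈ Set.Icc (0 : ℝ) 1, ∀ r ∈ Set.Icc r₀ r₁,
      κ ≤ |sndDeriv (sndDeriv (highPhase β)) (p, r)| := by
  have hU : IsOpen (Set.univ ×ˢ Set.Ioi 0 : Set (ℝ × ℝ)) := isOpen_univ.prod isOpen_Ioi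
  have hcont : ContinuousOn (fun z => |sndDeriv (sndDeriv (highPhase β)) z|)
      (Set.Icc (0 : ℝ) 1 ×ˢ Set.Icc r₀ r₁) :=
    ((contDiffOn_sndDeriv (contDiffOn_sndDeriv (contDiffOn_highPhase hβ) hU)
      hU).continuousOn.abs).mono (Set.prod_mono (Set.subset_univ _) fun r hr => hr₀.trans_le hr.1)
  obtain ⟨κ, hκ, hmin⟩ := (isCompact_Icc.prod isCompact_Icc).exists_forall_le' hcont
    fun z hz => abs_pos.2 (sndDeriv_sndDeriv_highPhase_ne_zero hβ hz.1.1 (hr₀.trans_le hz.2.1))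
  exact ⟨κ, hκ, fun p hp r hr => hmin (p, r) ⟨hp, hr⟩⟩

end HighFrequency

section FrequencyBounds

variable (V : Type*) [NormedAddCommGroup V] [InnerProductSpace ℝ V] [FiniteDimensional ℝ V]
  [MeasurableSpace V] [BorelSpace V] {β r₀ r₁ : ℝ} {ϱ : ℝ → ℝ}

theorem exists_norm_integral_mSymb_le_of_le_one (hβ : β = 0 ∨ β = 1) (hr₀ : 0 < r₀)
    (hr : r₀ ≤ r₁) (hϱ : ContDiff ℝ ∞ ϱ) (hϱ0 : ∀ r ≥ 0, r ∉ Set.Icc r₀ r₁ → ϱ r = 0) :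
    ∃ C > 0, ∀ lam > 0, lam ≤ 1 → ∀ t > 0, ∀ x : V,
      ‖∫ η : V, cexp (2 * π * I * ⟪x, η⟫) *
          (cexp ((-(t * mSymb β (lam * ‖η‖)) : ℝ) * I) * (ϱ ‖η‖ : ℂ))‖ ≤
        C * (lam⁻¹ * (t * lam) ^ (-(Module.finrank ℝ V / 2 : ℝ))) := by
  have hβ0 : 0 ≤ β := by rcases hβ with rfl | rfl <;> norm_num
  have hzero : ϱ 0 = 0 := hϱ0 0 le_rfl fun h => hr₀.not_ge h.1
  obtain ⟨c, hc, hconvex⟩ := exists_mul_le_abs_mSymbDeriv₂ hβ r₁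
  obtain ⟨C, hC, hbound⟩ := exists_norm_integral_radial_le V (isCompact_Icc (a := (0 : ℝ)) (b := 1))
    hr₀ hr (contDiff_lowPhase hβ0).contDiffOn
    (fun p hp r hr => sndDeriv_lowPhase_pos hβ0 hp.1 hr) hϱ hϱ0
  refine ⟨C * (√(c * r₀))⁻¹, by positivity, fun lam hlam hlam1 t ht x => ?_⟩
  have hκ : ∀ r ∈ Set.Icc r₀ r₁,
      c * r₀ * lam ^ 2 ≤ |sndDeriv (sndDeriv (lowPhase β)) (lam, r)| := fun r hr => by
    have hr' : 0 < r := hr₀.trans_le hr.1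
    rw [sndDeriv_sndDeriv_lowPhase hβ0 hlam hr', abs_mul, abs_of_pos hlam]
    calc c * r₀ * lam ^ 2 = lam * (c * (lam * r₀)) := by ring
      _ ≤ lam * (c * (lam * r)) := by
        gcongr
        exact hr.1
      _ ≤ lam * |mSymbDeriv₂ β (lam * r)| := by
        gcongr
        exact hconvex _ ⟨by positivity, (mul_le_of_le_one_left hr'.le hlam1).trans hr.2⟩
  rw [integral_radial_eq_rescale volume (inv_ne_zero hlam.ne')
    (fun r hr => lowPhase_of_pos hlam hr) hzero]
  refine (hbound lam ⟨hlam.le, hlam1⟩ _ (by positivity) hκ _ (by positivity) x).trans_eq ?_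
  rw [div_inv_eq_mul, Real.sqrt_mul (by positivity), Real.sqrt_sq hlam.le, mul_inv]
  ring

theorem exists_norm_integral_mSymb_le_of_one_le (hβ : β = 0 ∨ β = 1) (hr₀ : 0 < r₀)
    (hr : r₀ ≤ r₁) (hϱ : ContDiff ℝ ∞ ϱ) (hϱ0 : ∀ r ≥ 0, r ∉ Set.Icc r₀ r₁ → ϱ r = 0) :
    ∃ C > 0, ∀ lam ≥ 1, ∀ t > 0, ∀ x : V,
      ‖∫ η : V, cexp (2 * π * I * ⟪x, η⟫) *
          (cexp ((-(t * mSymb β (lam * ‖η‖)) : ℝ) * I) * (ϱ ‖η‖ : ℂ))‖ ≤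
        C * (t * lam ^ (1 / 2 + β)) ^ (-(Module.finrank ℝ V / 2 : ℝ)) := by
  have hzero : ϱ 0 = 0 := hϱ0 0 le_rfl fun h => hr₀.not_ge h.1
  obtain ⟨κ, hκ, hconvex⟩ := exists_le_abs_sndDeriv_sndDeriv_highPhase hβ hr₀ r₁
  obtain ⟨C, hC, hbound⟩ := exists_norm_integral_radial_le V (isCompact_Icc (a := (0 : ℝ)) (b := 1))
    hr₀ hr (contDiffOn_highPhase hβ) (fun p hp r hr => sndDeriv_highPhase_pos hβ hp.1 hr) hϱ hϱ0
  refine ⟨C * (√κ)⁻¹, by positivity, fun lam hlam t ht x => ?_⟩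
  have hlam0 : 0 < lam := one_pos.trans_le hlam
  have hphase : ∀ r > 0,
      highPhase β (lam⁻¹, r) = (lam ^ (1 / 2 + β))⁻¹ * mSymb β (lam * r) := fun r hr => by
    rw [highPhase_of_pos hβ (inv_pos.2 hlam0) hr, Real.inv_rpow hlam0.le, inv_inv]
  have hp : lam⁻¹ ∈ Set.Icc (0 : ℝ) 1 := ⟨by positivity, inv_le_one_of_one_le₀ hlam⟩
  rw [integral_radial_eq_rescale volume (by positivity) hphase hzero, div_inv_eq_mul, mul_assoc C]
  exact hbound _ hp κ hκ (hconvex _ hp) _ (by positivity) x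

end FrequencyBounds

/-! ### Fourier multipliers -/

section Multiplier

variable {d : ℕ}

theorem mulOp_mulOp {r : Euc d → ℂ} (m : Euc d → ℂ) (hr : ContDiff ℝ ∞ r)
    (hr₀ : HasCompactSupport r) (f : SchwartzMap (Euc d) ℂ) :
    mulOp m (mulOp r f) = mulOp (fun ξ => m ξ * r ξ) f := by
  have hg : ContDiff ℝ ∞ fun ξ => r ξ * 𝓕 (⇑f) ξ := by
    rw [← SchwartzMap.fourier_coe]
    exact hr.mul (𝓕 f).smooth'
  let g : SchwartzMap (Euc d) ℂ := HasCompactSupport.toSchwartzMap hr₀.mul_right hg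
  have hinv : 𝓕 (mulOp r f) = ⇑g := by
    change 𝓕 (𝓕⁻ (⇑g)) = ⇑g
    rw [← SchwartzMap.fourierInv_coe, ← SchwartzMap.fourier_coe,
      FourierTransform.fourier_fourierInv_eq]
  rw [mulOp, hinv, mulOp]
  simp only [mul_assoc]
  rfl

theorem mulOp_eq_integral_mul {a f : Euc d → ℂ} (ha : Integrable a) (hf : Integrable f)
    (x : Euc d) : mulOp a f x = ∫ y, f y * 𝓕⁻ a (x - y) := by
  have hflip := VectorFourier.integral_fourierIntegral_smul_eq_flip (L := innerₗ (Euc d))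
    Real.continuous_fourierChar continuous_inner hf
    (ha.bdd_mul (f := fun ξ => cexp (↑(2 * π * ⟪ξ, x⟫) * I)) (c := 1)
      (by fun_prop) (.of_forall fun ξ => by rw [norm_exp_ofReal_mul_I]))
  calc mulOp a f x = ∫ ξ, 𝓕 f ξ • (cexp (↑(2 * π * ⟪ξ, x⟫) * I) * a ξ) := by
        simp only [mulOp, Real.fourierInv_eq', smul_eq_mul]
        congr 1 with ξ
        ring
    _ = ∫ y, f y • 𝓕 (fun ξ => cexp (↑(2 * π * ⟪ξ, x⟫) * I) * a ξ) y := by simpa using! hflip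
    _ = ∫ y, f y * 𝓕⁻ a (x - y) := by
        congr 1 with y
        rw [smul_eq_mul, Real.fourier_eq', Real.fourierInv_eq']
        congr 2 with ξ
        rw [smul_eq_mul, smul_eq_mul, ← mul_assoc, ← Complex.exp_add, inner_sub_right]
        push_cast
        ring_nf

theorem eLpNorm_mulOp_le {a f : Euc d → ℂ} (ha : Integrable a) (hf : Integrable f) {B : ℝ}
    (hB : ∀ x, ‖𝓕⁻ a x‖ ≤ B) :
    eLpNorm (mulOp a f) ∞ volume ≤ ENNReal.ofReal B * eLpNorm f 1 volume := by
  have hB0 : 0 ≤ B := (norm_nonneg _).trans (hB 0)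
  rw [eLpNorm_one_eq_lintegral_enorm, ← ofReal_integral_norm_eq_lintegral_enorm hf,
    ← ENNReal.ofReal_mul hB0, eLpNorm_exponent_top]
  refine eLpNormEssSup_le_of_ae_bound (.of_forall fun x => ?_)
  rw [mulOp_eq_integral_mul ha hf, mul_comm, ← integral_mul_const]
  refine norm_integral_le_of_norm_le (hf.norm.mul_const B) (.of_forall fun y => ?_)
  rw [norm_mul]
  gcongr
  exact hB _

end Multiplier

/-! ### The kernel of the propagator -/

section Amplitude

variable {d : ℕ} {ϱ : ℝ → ℝ} {r₀ r₁ lam : ℝ}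

theorem contDiff_comp_norm_div (hr₀ : 0 < r₀) (hϱ : ContDiff ℝ ∞ ϱ)
    (hϱ0 : ∀ r ≥ 0, r ∉ Set.Icc r₀ r₁ → ϱ r = 0) (hlam : 0 < lam) :
    ContDiff ℝ ∞ fun ξ : Euc d => (ϱ (‖ξ‖ / lam) : ℂ) := by
  refine Complex.ofRealCLM.contDiff.comp (contDiff_iff_contDiffAt.2 fun ξ => ?_)
  obtain rfl | hξ := eq_or_ne ξ 0
  · have hzero : (fun η : Euc d => ϱ (‖η‖ / lam)) =ᶠ[nhds 0] fun _ => 0 := by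
      filter_upwards [Metric.ball_mem_nhds 0 (mul_pos hr₀ hlam)] with η hη
      rw [mem_ball_zero_iff, ← div_lt_iff₀ hlam] at hη
      exact hϱ0 _ (by positivity) fun h => hη.not_ge h.1
    exact contDiffAt_const.congr_of_eventuallyEq hzero
  · exact hϱ.contDiffAt.comp ξ ((contDiffAt_norm ℝ hξ).div_const lam)

theorem hasCompactSupport_comp_norm_div (hlam : 0 < lam)
    (hϱ0 : ∀ r ≥ 0, r ∉ Set.Icc r₀ r₁ → ϱ r = 0) :
    HasCompactSupport fun ξ : Euc d => (ϱ (‖ξ‖ / lam) : ℂ) := by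
  refine .intro (isCompact_closedBall 0 (r₁ * lam)) fun ξ hξ => ?_
  rw [mem_closedBall_zero_iff, ← div_le_iff₀ hlam] at hξ
  rw [hϱ0 _ (by positivity) fun h => hξ h.2, ofReal_zero]

theorem continuous_mSymb (β : ℝ) : Continuous (mSymb β) := by
  rw [funext (mSymb_eq_sqrt β), ← continuousOn_univ]
  exact (hasDeriv₂On_symbSq β Set.univ).continuousOn.sqrt

/-- The amplitude `e^{-it m_β(|ξ|)} ϱ(|ξ|/λ)` of the frequency-localised propagator. -/
def propgAmplitude (β : ℝ) (ϱ : ℝ → ℝ) (lam t : ℝ) (ξ : Euc d) : ℂ :=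
  cexp (-I * (t * mSymb β ‖ξ‖)) * (ϱ (‖ξ‖ / lam) : ℂ)

theorem integrable_propgAmplitude (β : ℝ) (hlam : 0 < lam) (hϱ : Continuous ϱ)
    (hϱ0 : ∀ r ≥ 0, r ∉ Set.Icc r₀ r₁ → ϱ r = 0) (t : ℝ) :
    Integrable (propgAmplitude (d := d) β ϱ lam t) := by
  have := continuous_mSymb β
  refine Continuous.integrable_of_hasCompactSupport ?_
    (hasCompactSupport_comp_norm_div hlam hϱ0).mul_left
  unfold propgAmplitude
  fun_prop

theorem fourierInv_propgAmplitude (β : ℝ) (ϱ : ℝ → ℝ) (hlam : 0 < lam) (t : ℝ) (x : Euc d) :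
    𝓕⁻ (propgAmplitude β ϱ lam t) x = (lam ^ d : ℝ) • ∫ η : Euc d,
      cexp (2 * π * I * ⟪lam • x, η⟫) *
        (cexp ((-(t * mSymb β (lam * ‖η‖)) : ℝ) * I) * (ϱ ‖η‖ : ℂ)) := by
  have h := Measure.integral_comp_smul_of_nonneg (volume : Measure (Euc d))
    (fun ξ => cexp (↑(2 * π * ⟪ξ, x⟫) * I) • propgAmplitude β ϱ lam t ξ) lam (hR := hlam.le)
  rw [finrank_euclideanSpace_fin, eq_inv_smul_iff₀ (by positivity)] at h
  rw [Real.fourierInv_eq', ← h]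
  congr 2 with η
  simp only [propgAmplitude, norm_smul, Real.norm_of_nonneg hlam.le, inner_smul_left,
    conj_trivial, mul_div_cancel_left₀ _ hlam.ne', real_inner_comm x η, smul_eq_mul]
  push_cast
  ring_nf

theorem norm_fourierInv_propgAmplitude_neg (β : ℝ) (ϱ : ℝ → ℝ) (lam t : ℝ) (x : Euc d) :
    ‖𝓕⁻ (propgAmplitude β ϱ lam (-t)) x‖ = ‖𝓕⁻ (propgAmplitude β ϱ lam t) (-x)‖ := by
  rw [← Complex.norm_conj, Real.fourierInv_eq', Real.fourierInv_eq', ← integral_conj]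
  congr 2 with ξ
  simp only [propgAmplitude, smul_eq_mul, map_mul, ← Complex.exp_conj, map_neg, conj_ofReal,
    conj_I, inner_neg_right]
  push_cast
  ring_nf

end Amplitude

section CFactor

variable {β lam t : ℝ}

theorem one_le_jap (x : ℝ) : 1 ≤ jap x :=
  Real.one_le_sqrt.2 (by nlinarith [sq_nonneg x])

theorem self_le_jap (x : ℝ) : x ≤ jap x :=
  Real.le_sqrt_of_sq_le (by linarith)

theorem cFactor_pos (β : ℝ) (d : ℕ) (hlam : 0 < lam) : 0 < cFactor β d lam := by
  have := one_le_jap (√β * lam)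
  have := one_le_jap lam
  unfold cFactor
  positivity

theorem jap_sqrt_mul_le (hβ : β = 0 ∨ β = 1) (hlam : 0 ≤ lam) :
    jap (√β * lam) ≤ 2 * max 1 lam ^ β := by
  rcases hβ with rfl | rfl
  · refine Real.sqrt_le_iff.2 ⟨by norm_num, ?_⟩
    norm_num
  · rw [Real.rpow_one, Real.sqrt_one]
    refine Real.sqrt_le_iff.2 ⟨by positivity, ?_⟩
    nlinarith [le_max_left 1 lam, le_max_right 1 lam]

theorem rpow_neg_half_le_jap_rpow (hβ : β = 0 ∨ β = 1) (hlam : 0 ≤ lam) (d : ℕ) :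
    (max 1 lam ^ β) ^ (-(d : ℝ) / 2) ≤
      2 ^ ((d : ℝ) / 2) * jap (√β * lam) ^ (-(d : ℝ) / 2) := by
  have hj := one_le_jap (√β * lam)
  calc (max 1 lam ^ β) ^ (-(d : ℝ) / 2)
      = 2 ^ ((d : ℝ) / 2) * (2 * max 1 lam ^ β) ^ (-(d : ℝ) / 2) := by
        rw [Real.mul_rpow two_pos.le (by positivity), ← mul_assoc, ← Real.rpow_add two_pos, neg_div,
          add_neg_cancel, Real.rpow_zero, one_mul]
    _ ≤ _ := by
        gcongr 2 ^ ((d : ℝ) / 2) * ?_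
        refine Real.rpow_le_rpow_of_nonpos (by linarith) (jap_sqrt_mul_le hβ hlam) ?_
        rw [neg_div, neg_nonpos]
        positivity

theorem pow_mul_rpow_le_cFactor_of_le_one (hβ : β = 0 ∨ β = 1) (d : ℕ) (hlam : 0 < lam)
    (hlam1 : lam ≤ 1) (ht : 0 ≤ t) :
    lam ^ d * (lam⁻¹ * (t * lam) ^ (-(d / 2 : ℝ))) ≤
      2 ^ ((d : ℝ) / 2) * cFactor β d lam * t ^ (-(d : ℝ) / 2) := by
  have hβ1 : 1 ≤ 2 ^ ((d : ℝ) / 2) * jap (√β * lam) ^ (-(d : ℝ) / 2) := by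
    simpa [max_eq_left hlam1] using rpow_neg_half_le_jap_rpow hβ hlam.le d
  have h1 : 1 ≤ jap lam ^ ((d : ℝ) / 4 + 1) := Real.one_le_rpow (one_le_jap lam) (by positivity)
  have hpow : lam ^ d * (lam⁻¹ * lam ^ (-(d / 2 : ℝ))) = lam ^ ((d : ℝ) / 2 - 1) := by
    rw [← Real.rpow_natCast, ← Real.rpow_neg_one lam, ← Real.rpow_add hlam, ← Real.rpow_add hlam]
    ring_nf
  calc lam ^ d * (lam⁻¹ * (t * lam) ^ (-(d / 2 : ℝ)))
      = lam ^ ((d : ℝ) / 2 - 1) * 1 * 1 * t ^ (-(d : ℝ) / 2) := by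
        rw [Real.mul_rpow ht hlam.le, ← hpow, neg_div]
        ring
    _ ≤ lam ^ ((d : ℝ) / 2 - 1) * (2 ^ ((d : ℝ) / 2) * jap (√β * lam) ^ (-(d : ℝ) / 2)) *
          jap lam ^ ((d : ℝ) / 4 + 1) * t ^ (-(d : ℝ) / 2) := by gcongr
    _ = _ := by
        rw [cFactor]
        ring

theorem pow_mul_rpow_le_cFactor_of_one_le (hβ : β = 0 ∨ β = 1) (d : ℕ) (hlam : 1 ≤ lam)
    (ht : 0 ≤ t) :
    lam ^ d * (t * lam ^ (1 / 2 + β)) ^ (-(d / 2 : ℝ)) ≤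
      2 ^ ((d : ℝ) / 2) * cFactor β d lam * t ^ (-(d : ℝ) / 2) := by
  have hlam0 : 0 < lam := by linarith
  have hβ1 : (lam ^ β) ^ (-(d : ℝ) / 2) ≤
      2 ^ ((d : ℝ) / 2) * jap (√β * lam) ^ (-(d : ℝ) / 2) := by
    simpa [max_eq_right hlam] using rpow_neg_half_le_jap_rpow hβ hlam0.le d
  have h1 : lam ^ ((d : ℝ) / 4 + 1) ≤ jap lam ^ ((d : ℝ) / 4 + 1) := by
    gcongr
    exact self_le_jap lam
  have hpow : lam ^ d * (lam ^ (1 / 2 + β)) ^ (-(d / 2 : ℝ)) =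
      lam ^ ((d : ℝ) / 2 - 1) * (lam ^ β) ^ (-(d : ℝ) / 2) * lam ^ ((d : ℝ) / 4 + 1) := by
    rw [← Real.rpow_natCast, ← Real.rpow_mul hlam0.le, ← Real.rpow_mul hlam0.le,
      ← Real.rpow_add hlam0, ← Real.rpow_add hlam0, ← Real.rpow_add hlam0]
    ring_nf
  calc lam ^ d * (t * lam ^ (1 / 2 + β)) ^ (-(d / 2 : ℝ))
      = lam ^ ((d : ℝ) / 2 - 1) * (lam ^ β) ^ (-(d : ℝ) / 2) * lam ^ ((d : ℝ) / 4 + 1) *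
          t ^ (-(d : ℝ) / 2) := by
        rw [Real.mul_rpow ht (by positivity), ← hpow, neg_div]
        ring
    _ ≤ lam ^ ((d : ℝ) / 2 - 1) * (2 ^ ((d : ℝ) / 2) * jap (√β * lam) ^ (-(d : ℝ) / 2)) *
          jap lam ^ ((d : ℝ) / 4 + 1) * t ^ (-(d : ℝ) / 2) := by
        have := one_le_jap (√β * lam)
        gcongr
    _ = _ := by
        rw [cFactor]
        ring

end CFactor

section KernelBound

variable {β : ℝ} {ϱ : ℝ → ℝ} {r₀ r₁ : ℝ}

theorem exists_norm_fourierInv_propgAmplitude_le_of_pos (hβ : β = 0 ∨ β = 1) (d : ℕ)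
    (hr₀ : 0 < r₀) (hr : r₀ ≤ r₁) (hϱ : ContDiff ℝ ∞ ϱ)
    (hϱ0 : ∀ r ≥ 0, r ∉ Set.Icc r₀ r₁ → ϱ r = 0) :
    ∃ C > 0, ∀ lam > 0, ∀ t > 0, ∀ x : Euc d,
      ‖𝓕⁻ (propgAmplitude β ϱ lam t) x‖ ≤ C * cFactor β d lam * t ^ (-(d : ℝ) / 2) := by
  obtain ⟨C₁, hC₁, hlow⟩ := exists_norm_integral_mSymb_le_of_le_one (Euc d) hβ hr₀ hr hϱ hϱ0
  obtain ⟨C₂, hC₂, hhigh⟩ := exists_norm_integral_mSymb_le_of_one_le (Euc d) hβ hr₀ hr hϱ hϱ0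
  rw [finrank_euclideanSpace_fin] at hlow hhigh
  refine ⟨max C₁ C₂ * 2 ^ ((d : ℝ) / 2), by positivity, fun lam hlam t ht x => ?_⟩
  have hc := cFactor_pos β d hlam
  have hfactor : ∀ {C K A : ℝ}, 0 < C → C ≤ max C₁ C₂ → A ≤ C * K →
      lam ^ d * K ≤ 2 ^ ((d : ℝ) / 2) * cFactor β d lam * t ^ (-(d : ℝ) / 2) →
      lam ^ d * A ≤ max C₁ C₂ * 2 ^ ((d : ℝ) / 2) * cFactor β d lam * t ^ (-(d : ℝ) / 2) := by
    intro C K A hC hCmax hA hK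
    calc lam ^ d * A ≤ lam ^ d * (C * K) := by gcongr
      _ = C * (lam ^ d * K) := by ring
      _ ≤ C * (2 ^ ((d : ℝ) / 2) * cFactor β d lam * t ^ (-(d : ℝ) / 2)) := by gcongr
      _ ≤ max C₁ C₂ * (2 ^ ((d : ℝ) / 2) * cFactor β d lam * t ^ (-(d : ℝ) / 2)) := by gcongr
      _ = _ := by ring
  rw [fourierInv_propgAmplitude β ϱ hlam, norm_smul, Real.norm_of_nonneg (by positivity)]
  obtain hlam1 | hlam1 := le_total lam 1
  · exact hfactor hC₁ (le_max_left _ _) (hlow lam hlam hlam1 t ht _)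
      (pow_mul_rpow_le_cFactor_of_le_one hβ d hlam hlam1 ht.le)
  · exact hfactor hC₂ (le_max_right _ _) (hhigh lam hlam1 t ht _)
      (pow_mul_rpow_le_cFactor_of_one_le hβ d hlam1 ht.le)

theorem exists_norm_fourierInv_propgAmplitude_le (hβ : β = 0 ∨ β = 1) (d : ℕ)
    (hr₀ : 0 < r₀) (hr : r₀ ≤ r₁) (hϱ : ContDiff ℝ ∞ ϱ)
    (hϱ0 : ∀ r ≥ 0, r ∉ Set.Icc r₀ r₁ → ϱ r = 0) :
    ∃ C > 0, ∀ lam > 0, ∀ t ≠ 0, ∀ x : Euc d,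
      ‖𝓕⁻ (propgAmplitude β ϱ lam t) x‖ ≤ C * cFactor β d lam * |t| ^ (-(d : ℝ) / 2) := by
  obtain ⟨C, hC, h⟩ := exists_norm_fourierInv_propgAmplitude_le_of_pos hβ d hr₀ hr hϱ hϱ0
  refine ⟨C, hC, fun lam hlam t ht x => ?_⟩
  obtain hneg | hpos := lt_or_gt_of_ne ht
  · rw [abs_of_neg hneg, ← neg_neg t, norm_fourierInv_propgAmplitude_neg, neg_neg]
    exact h lam hlam (-t) (neg_pos.2 hneg) (-x)
  · rw [abs_of_pos hpos]
    exact h lam hlam t hpos x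

end KernelBound

section Cutoff

variable {χ : ℝ → ℝ}

theorem contDiff_rho (hχ : IsCutoff χ) : ContDiff ℝ ∞ (rho χ) :=
  hχ.1.sub (hχ.1.comp (contDiff_const.mul contDiff_id))

theorem IsCutoff.eq_zero_of_two_lt (hχ : IsCutoff χ) {r : ℝ} (hr : 2 < r) : χ r = 0 := by
  by_contra h
  exact absurd (hχ.2.2.2.2 h).2 (not_le.2 hr)

theorem rho_eq_zero (hχ : IsCutoff χ) {r : ℝ} (hr : 0 ≤ r) (h : r ∉ Set.Icc (1 / 2 : ℝ) 2) :
    rho χ r = 0 := by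
  obtain hr1 | hr1 := lt_or_ge r (1 / 2)
  · rw [rho, hχ.2.2.2.1 r ⟨by linarith, by linarith⟩,
      hχ.2.2.2.1 (2 * r) ⟨by linarith, by linarith⟩, sub_self]
  · have hr2 : 2 < r := not_le.1 fun hr2 => h ⟨hr1, hr2⟩
    rw [rho, hχ.eq_zero_of_two_lt hr2, hχ.eq_zero_of_two_lt (by linarith), sub_zero]

end Cutoff

theorem dispersive_estimate_general {β : ℝ} (hβ : β = 0 ∨ β = 1) (d : ℕ) {ϱ : ℝ → ℝ} {r₀ r₁ : ℝ}
    (hr₀ : 0 < r₀) (hr : r₀ ≤ r₁) (hϱ : ContDiff ℝ ∞ ϱ)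
    (hϱ0 : ∀ r ≥ 0, r ∉ Set.Icc r₀ r₁ → ϱ r = 0) :
    ∃ C > 0, ∀ lam > 0, ∀ t ≠ 0, ∀ f : SchwartzMap (Euc d) ℂ,
      eLpNorm (propg β t (mulOp (fun ξ => (ϱ (‖ξ‖ / lam) : ℂ)) ⇑f)) ∞ volume ≤
        ENNReal.ofReal (C * cFactor β d lam * |t| ^ (-(d : ℝ) / 2)) * eLpNorm (⇑f) 1 volume := by
  obtain ⟨C, hC, hbound⟩ := exists_norm_fourierInv_propgAmplitude_le hβ d hr₀ hr hϱ hϱ0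
  refine ⟨C, hC, fun lam hlam t ht f => ?_⟩
  rw [propg, mulOp_mulOp _ (contDiff_comp_norm_div hr₀ hϱ hϱ0 hlam)
    (hasCompactSupport_comp_norm_div hlam hϱ0)]
  exact eLpNorm_mulOp_le (integrable_propgAmplitude β hlam hϱ.continuous hϱ0 t) f.integrable
    (hbound lam hlam t ht)

end DispersiveKernel

/-- Theorem 1 (localised dispersive estimate): for `β ∈ {0,1}`, `d ≥ 1` and `λ = 2^n ∈ 2^ℤ`,
`‖S_{m_β}(±t) P_λ f‖_{L^∞} ≤ C c_{β,d}(λ) |t|^{-d/2} ‖f‖_{L^1}` for all Schwartz `f`,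
with `C` independent of `λ`, `t` and `f`. -/
theorem dispersive_estimate
    (β : ℝ) (hβ : β = 0 ∨ β = 1) (d : ℕ) (hd : 1 ≤ d)
    (χ : ℝ → ℝ) (hχ : IsCutoff χ) :
    ∃ C > 0, ∀ (n : ℤ) (t : ℝ), t ≠ 0 → ∀ σ : ℝ, σ = 1 ∨ σ = -1 →
      ∀ f : SchwartzMap (Euc d) ℂ,
        eLpNorm (propg β (σ * t) (proj χ ((2 : ℝ) ^ n) ⇑f)) ∞ volume ≤
          ENNReal.ofReal (C * cFactor β d ((2 : ℝ) ^ n) * |t| ^ (-(d : ℝ) / 2)) *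
            eLpNorm (⇑f) 1 volume := by
  obtain ⟨C, hC, hbound⟩ := dispersive_estimate_general hβ d one_half_pos (by norm_num)
    (contDiff_rho hχ) fun _ => rho_eq_zero hχ
  refine ⟨C, hC, fun n t ht σ hσ f => ?_⟩
  rw [← show |σ * t| = |t| by rcases hσ with rfl | rfl <;> simp]
  exact hbound _ (by positivity) _ (by rcases hσ with rfl | rfl <;> simpa) f
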